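/- Let λ be a fixed real constant and let m:ℕ→ℕ satisfy m(n) = n + λ·n^{1/2} + o(n^{1/2}) as n→∞, with 𝒫(n,m(n)) nonempty for all large n. Then, as n→∞: if λ ≤ 1, add(n,m(n)) = (2−λ+o(1))·n^{3/2}, and if λ ≥ 1, add(n,m(n)) = (1/λ + o(1))·n^{3/2}. -/

import Mathlib

/-!
The proof has three parts: a dual description of planarity, a lower bound for the number of
addable edges that holds for every planar graph, and a construction matching it. Write `s = √n` and
`mu = max lam 1`; in both cases the limit is `1 / mu + mu - lam`.

*Planarity and duals.* Instead of drawings, the proof uses abstract duals in the sense of Whitney: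
a multigraph on a set of faces, with the same edges as `G`, whose cut space over `ZMod 2` is the
cycle space of `G` (`IsDual`, `HasDual`). Duals pass to minors (`HasDual.of_minor`), and `K₅` and
`K₃,₃` have none by Euler's formula, so a graph with a dual is planar (`HasDual.isPlanar`). The
converse is Wagner's theorem (`hasDual_of_isPlanar`): across small cuts, duals are glued
(`HasDual.sum1`, `HasDual.sum2`); in a 3-connected graph an edge `xy` is contracted, the
neighbours of `x` and `y` then lie on a face cycle of the rest, and either `x` and `y` can be drawn
inside that face or the way their neighbours interlace produces a forbidden minor
(`cyclic_cases`, `wagner_step`).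

*Lower bound.* In a 2-connected planar graph two vertices on a common face can be joined, so
pairwise non-addable vertices lie on disjoint sets of at least two faces. With Euler's formula, and
an induction over cut vertices, a connected planar graph with `h` vertices and `m` edges has at most
`(m - h + 3) / 2` pairwise non-addable vertices (`nonAdd_bound`). By Turán's theorem, about
`h ^ 2 / (m - h)` pairs are then edges or addable. Let `h` be the order of a largest component and
`r = n - h`. All pairs between different components are addable, which gives at least `n * r / 2`
pairs in total (so `r = O(s)` may be assumed) and `r * h` pairs that leave the largest component
(`lower_count`). Minimising over `r` gives the bound; in `addable_lower` this minimisation is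
replaced by a tangent line estimate.

*Construction.* A wheel with `K ≈ mu * s` spokes, every second spoke being subdivided evenly, with
`q ≈ (mu - lam) * s` isolated vertices added. A subdividing vertex can be joined only to isolated
vertices, the hub, vertices of its own spoke and the rim vertices of the two neighbouring spokes
(`wheel_not_addable`, by a `K₃,₃` minor). The pairs inside a spoke, about `n * s / mu` in total, and
the pairs with an isolated vertex, about `(mu - lam) * n * s`, are the only ones of order `n * s`
(`wheel_addable_card`, `addMin_upper`).
-/

open SimpleGraph Filter Asymptotics

/-- `H` is a minor of `G`: to each vertex of `H` we can assign a connected nonempty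
branch set in `G`, pairwise disjoint, with an edge of `G` between the branch sets of
any two adjacent vertices of `H`. -/
def IsMinor {α β : Type*} (H : SimpleGraph α) (G : SimpleGraph β) : Prop :=
  ∃ f : α → Set β,
    (∀ a, (G.induce (f a)).Connected) ∧
    (∀ a b, a ≠ b → Disjoint (f a) (f b)) ∧
    (∀ a b, H.Adj a b → ∃ u ∈ f a, ∃ v ∈ f b, G.Adj u v)

/-- A graph is planar iff it has neither a `K₅`-minor nor a `K₃,₃`-minor
(Wagner's theorem). -/
def IsPlanar {V : Type*} (G : SimpleGraph V) : Prop :=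
  ¬ IsMinor (completeGraph (Fin 5)) G ∧
    ¬ IsMinor (completeBipartiteGraph (Fin 3) (Fin 3)) G

/-- The number of edges of a graph. -/
noncomputable def edgeCount {V : Type*} (G : SimpleGraph V) : ℕ :=
  G.edgeSet.ncard

/-- The degree of a vertex. -/
noncomputable def vertexDegree {V : Type*} (G : SimpleGraph V) (v : V) : ℕ :=
  (G.neighborSet v).ncard

/-- `𝒫(n,m)`: the set of labelled planar graphs on `{1,…,n}` with exactly `m` edges. -/
def planarSet (n m : ℕ) : Set (SimpleGraph (Fin n)) :=
  {G | IsPlanar G ∧ edgeCount G = m}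

/-- The probability that the uniform random planar graph `P_{n,m}` satisfies `P`. -/
noncomputable def planarProb (n m : ℕ) (P : SimpleGraph (Fin n) → Prop) : ℝ :=
  ({G ∈ planarSet n m | P G}.ncard : ℝ) / ((planarSet n m).ncard : ℝ)

/-- The number of pendant edges (edges incident to a vertex of degree 1). -/
noncomputable def pendantCount {V : Type*} (G : SimpleGraph V) : ℕ :=
  {e ∈ G.edgeSet | ∃ v ∈ e, vertexDegree G v = 1}.ncard

/-- The set of addable non-edges of `G`: non-edges whose addition keeps the graph planar. -/
def addableSet {V : Type*} (G : SimpleGraph V) : Set (Sym2 V) :=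
  {e | ¬ e.IsDiag ∧ e ∉ G.edgeSet ∧ IsPlanar (G ⊔ SimpleGraph.fromEdgeSet {e})}

/-- `add(n,m)`: the minimum number of addable non-edges over all graphs in `𝒫(n,m)`. -/
noncomputable def addMin (n m : ℕ) : ℕ :=
  sInf ((fun G => (addableSet G).ncard) '' planarSet n m)

/-- `W` carries an induced order-preserving copy of `H` in `G`: the increasing bijection
from `{1,…,h}` to `W` is an isomorphism between `H` and the induced subgraph `G[W]`. -/
def IsOrderCopy {h n : ℕ} (H : SimpleGraph (Fin h)) (G : SimpleGraph (Fin n))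
    (W : Finset (Fin n)) : Prop :=
  ∃ hW : W.card = h,
    ∀ i j : Fin h,
      H.Adj i j ↔ G.Adj ((W.orderIsoOfFin hW i : Fin n)) ((W.orderIsoOfFin hW j : Fin n))

/-- `W` is the vertex set of a connected component of `G`. -/
def IsComponent {V : Type*} (G : SimpleGraph V) (W : Finset V) : Prop :=
  (G.induce (W : Set V)).Connected ∧ ∀ v ∈ W, ∀ u, G.Adj v u → u ∈ W

/-- The number of components of `G` admitting an order-preserving isomorphism to `H`. -/
noncomputable def numOrderComponents {h n : ℕ} (H : SimpleGraph (Fin h))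
    (G : SimpleGraph (Fin n)) : ℕ :=
  {W : Finset (Fin n) | IsComponent G W ∧ IsOrderCopy H G W}.ncard

/-- The number of distinct cycles (as subgraphs, identified with their edge sets) of
length at most `k` in `S`. -/
noncomputable def cycleCountLe {V : Type*} (S : SimpleGraph V) (k : ℕ) : ℕ :=
  {E : Set (Sym2 V) | ∃ (v : V) (c : S.Walk v v),
    c.IsCycle ∧ c.length ≤ k ∧ {e | e ∈ c.edges} = E}.ncard

set_option linter.all false

namespace PlanarAdd

open scoped Classical
open Finset

/-! ### Cycle vectors and abstract duals -/

section Basic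

variable {V : Type} [Fintype V]

/-- The boundary map of the mod 2 chain complex of the complete graph on `V`. -/
noncomputable def bd : (Sym2 V → ZMod 2) →ₗ[ZMod 2] (V → ZMod 2) where
  toFun z u := ∑ v, z s(u, v)
  map_add' x y := by ext u; simp [Finset.sum_add_distrib]
  map_smul' t x := by ext u; simp [Finset.mul_sum]

lemma bd_apply (z : Sym2 V → ZMod 2) (u : V) : bd z u = ∑ v, z s(u, v) := rfl

lemma bd_eq_sum_edges (z : Sym2 V → ZMod 2) (u : V) :
    bd z u = ∑ e, if u ∈ e then z e else 0 := by
  rw [bd_apply, ← Finset.sum_filter]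
  symm
  refine Finset.sum_bij' (fun e _ => if h : u ∈ e then Sym2.Mem.other h else u)
    (fun v _ => s(u, v)) ?_ ?_ ?_ ?_ ?_
  · simp
  · simp
  · intro e he
    simp only [Finset.mem_filter, Finset.mem_univ, true_and] at he
    simp only [he, dite_true]
    exact Sym2.other_spec he
  · intro v _
    have h : u ∈ s(u, v) := by simp
    simp only [h, dite_true]
    have := Sym2.other_spec h
    rwa [Sym2.congr_right] at this
  · intro e he
    simp only [Finset.mem_filter, Finset.mem_univ, true_and] at he
    simp only [he, dite_true]
    rw [Sym2.other_spec he]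

lemma bd_single {a b : V} (h : a ≠ b) (t : ZMod 2) :
    bd (Pi.single s(a, b) t) = Pi.single a t + Pi.single b t := by
  ext u
  rw [bd_eq_sum_edges, Finset.sum_eq_single s(a, b)]
  · by_cases h1 : u = a
    · subst h1; simp [Pi.single_apply, h]
    · by_cases h2 : u = b
      · subst h2; simp [Pi.single_apply, h1]
      · simp [Pi.single_apply, h1, h2]
  · intro e _ he
    simp [Pi.single_apply, he]
  · simp

/-- A mod 2 chain with no loops has even total boundary on any vertex set that none of its
edges leaves. -/
lemma sum_bd_eq_zero (z : Sym2 V → ZMod 2) (S : Set V)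
    (hd : ∀ u, z s(u, u) = 0)
    (hS : ∀ u ∈ S, ∀ v, v ∉ S → z s(u, v) = 0) :
    ∑ u with u ∈ S, bd z u = 0 := by
  have h1 : ∑ u with u ∈ S, bd z u = ∑ u with u ∈ S, ∑ v with v ∈ S, z s(u, v) := by
    refine Finset.sum_congr rfl fun u hu => ?_
    rw [bd_apply, Finset.sum_filter]
    refine Finset.sum_congr rfl fun v _ => ?_
    split_ifs with h
    · rfl
    · exact hS u (by simpa using hu) v h
  rw [h1, ← Finset.sum_product']
  refine Finset.sum_involution (fun p _ => (p.2, p.1)) ?_ ?_ ?_ ?_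
  · rintro ⟨a, b⟩ _
    simp only
    rw [Sym2.eq_swap]
    exact CharTwo.add_self_eq_zero _
  · rintro ⟨a, b⟩ _ hne heq
    simp only [Prod.mk.injEq] at heq
    obtain ⟨rfl, _⟩ := heq
    exact hne (hd _)
  · rintro ⟨a, b⟩ h
    simp only [Finset.mem_product] at h ⊢
    exact ⟨h.2, h.1⟩
  · simp

/-- The mod 2 cycle space of `G`: edge sets of `G` with even degree at every vertex. -/
noncomputable def cyc (G : SimpleGraph V) : Submodule (ZMod 2) (Sym2 V → ZMod 2) where
  carrier := {z | (∀ e, e ∉ G.edgeSet → z e = 0) ∧ bd z = 0}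
  zero_mem' := by simp
  add_mem' := by
    rintro a b ⟨ha, ha'⟩ ⟨hb, hb'⟩
    refine ⟨fun e he => by simp [ha e he, hb e he], by rw [map_add, ha', hb', add_zero]⟩
  smul_mem' := by
    rintro t a ⟨ha, ha'⟩
    refine ⟨fun e he => by simp [ha e he], by rw [map_smul, ha', smul_zero]⟩

lemma mem_cyc {G : SimpleGraph V} {z : Sym2 V → ZMod 2} :
    z ∈ cyc G ↔ (∀ e, e ∉ G.edgeSet → z e = 0) ∧ bd z = 0 := Iff.rfl

lemma cyc_mono {G H : SimpleGraph V} (h : G ≤ H) : cyc G ≤ cyc H := by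
  rintro z ⟨h1, h2⟩
  exact ⟨fun e he => h1 e fun h' => he (SimpleGraph.edgeSet_mono h h'), h2⟩

lemma cyc_diag {G : SimpleGraph V} {z : Sym2 V → ZMod 2}
    (hz : ∀ e, e ∉ G.edgeSet → z e = 0) (u : V) : z s(u, u) = 0 :=
  hz _ (by simp)

/-- The edge vector of the cut determined by `c : ι → ZMod 2` in the multigraph on `ι` in which
the edge `e` of `G` joins `L e` and `R e`. -/
noncomputable def delta {ι : Type} (G : SimpleGraph V) (L R : Sym2 V → ι) (c : ι → ZMod 2) :
    Sym2 V → ZMod 2 :=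
  fun e => if e ∈ G.edgeSet then c (L e) + c (R e) else 0

lemma delta_of_mem {ι : Type} {G : SimpleGraph V} {L R : Sym2 V → ι} {c : ι → ZMod 2}
    {e : Sym2 V} (h : e ∈ G.edgeSet) : delta G L R c e = c (L e) + c (R e) := by
  simp [delta, h]

/-- `L` and `R` make `ι` into an abstract dual of `G`: the edge `e` of `G` corresponds to an edge
from `L e` to `R e` (the faces on the two sides of `e`), and the cycle space of `G` is the cut
space of this multigraph. -/
structure IsDual {ι : Type} (G : SimpleGraph V) (L R : Sym2 V → ι) : Prop where
  mem : ∀ c : ι → ZMod 2, delta G L R c ∈ cyc G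
  surj : ∀ z ∈ cyc G, ∃ c : ι → ZMod 2, ∀ e ∈ G.edgeSet, z e = c (L e) + c (R e)

/-- `G` has an abstract dual in the sense of Whitney. -/
def HasDual (G : SimpleGraph V) : Prop :=
  ∃ (ι : Type) (L R : Sym2 V → ι), IsDual G L R

lemma fun_add_self {α : Type} (f : α → ZMod 2) : f + f = 0 := by
  ext x
  exact CharTwo.add_self_eq_zero _

/-- A chain with boundary `{u, v}` along a walk. -/
lemma exists_chain_of_reachable {G : SimpleGraph V} {u v : V} (h : G.Reachable u v) :
    ∃ z : Sym2 V → ZMod 2, (∀ e, e ∉ G.edgeSet → z e = 0) ∧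
      bd z = Pi.single u 1 + Pi.single v 1 := by
  obtain ⟨p⟩ := h
  induction p with
  | nil =>
    refine ⟨0, by simp, ?_⟩
    rw [map_zero, fun_add_self]
  | @cons a b c hab p ih =>
    obtain ⟨z, h1, h2⟩ := ih
    refine ⟨z + Pi.single s(a, b) 1, ?_, ?_⟩
    · intro e he
      have : e ≠ s(a, b) := by rintro rfl; exact he hab
      simp [h1 e he, Pi.single_apply, this]
    · rw [map_add, h2, bd_single hab.ne]
      have := fun_add_self (Pi.single b 1 : V → ZMod 2)
      calc _ = (Pi.single b 1 + Pi.single b 1 : V → ZMod 2) + (Pi.single a 1 + Pi.single c 1) := by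
            abel
        _ = _ := by rw [this, zero_add]

/-- Conversely, the two ends of a chain with boundary `{u, v}` are joined by a walk. -/
lemma reachable_of_chain {G : SimpleGraph V} {u v : V} {z : Sym2 V → ZMod 2}
    (hz : ∀ e, e ∉ G.edgeSet → z e = 0)
    (hb : bd z = Pi.single u 1 + Pi.single v 1) : G.Reachable u v := by
  by_contra hne
  have h := sum_bd_eq_zero z {w | G.Reachable u w} (cyc_diag hz) (by
    intro a ha b hb'
    apply hz
    intro hab
    exact hb' (Reachable.trans ha (Adj.reachable hab)))
  rw [hb, Finset.sum_filter, Finset.sum_eq_single u] at h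
  · have huv : u ≠ v := by rintro rfl; exact hne (Reachable.refl _)
    simp [huv] at h
  · intro w _ hw
    split_ifs with h'
    · have : w ≠ v := by rintro rfl; exact hne h'
      simp [hw, this]
    · rfl
  · simp

/-- A `T`-join inside a connected set of vertices. -/
lemma exists_tjoin {G : SimpleGraph V} {S : Set V} (hS : (G.induce S).Connected)
    (t : V → ZMod 2) (ht : ∀ u, u ∉ S → t u = 0) (hsum : ∑ u with u ∈ S, t u = 0) :
    ∃ z : Sym2 V → ZMod 2,
      (∀ e, z e ≠ 0 → ∃ u v, e = s(u, v) ∧ u ∈ S ∧ v ∈ S ∧ G.Adj u v) ∧ bd z = t := by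
  obtain ⟨⟨x, hx⟩⟩ := hS.nonempty
  let G' : SimpleGraph V := (G.induce S).map (Function.Embedding.subtype _)
  have hr : ∀ u, ∃ z : Sym2 V → ZMod 2, u ∈ S → ((∀ e, e ∉ G'.edgeSet → z e = 0) ∧
      bd z = Pi.single u 1 + Pi.single x 1) := by
    intro u
    by_cases hu : u ∈ S
    · have h1 : (G.induce S).Reachable ⟨u, hu⟩ ⟨x, hx⟩ := hS.preconnected _ _
      have h2 : G'.Reachable u x :=
        h1.map (SimpleGraph.Embedding.map (Function.Embedding.subtype _) (G.induce S)).toHom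
      obtain ⟨z, hz⟩ := exists_chain_of_reachable h2
      exact ⟨z, fun _ => hz⟩
    · exact ⟨0, fun h => absurd h hu⟩
  choose z hz using hr
  refine ⟨∑ u with u ∈ S, t u • z u, ?_, ?_⟩
  · intro e he
    by_contra hcon
    apply he
    rw [Finset.sum_apply]
    refine Finset.sum_eq_zero fun u hu => ?_
    have hu' : u ∈ S := by simpa using hu
    have := (hz u hu').1 e (by
      intro hmem
      apply hcon
      induction e with
      | h a b =>
        rw [SimpleGraph.mem_edgeSet] at hmem
        obtain ⟨_, a', b', hab, rfl, rfl⟩ := hmem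
        exact ⟨a', b', rfl, a'.2, b'.2, hab⟩)
    simp [this]
  · rw [map_sum]
    have : ∀ u ∈ Finset.univ.filter (· ∈ S), bd (t u • z u)
        = t u • Pi.single u 1 + t u • Pi.single x 1 := by
      intro u hu
      rw [map_smul, (hz u (by simpa using hu)).2, smul_add]
    rw [Finset.sum_congr rfl this, Finset.sum_add_distrib, ← Finset.sum_smul, hsum, zero_smul,
      add_zero]
    ext w
    rw [Finset.sum_apply]
    by_cases hw : w ∈ S
    · rw [Finset.sum_eq_single w]
      · simp
      · intro b _ hb
        simp [Pi.single_apply, hb.symm]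
      · simp [hw]
    · rw [ht w hw]
      refine Finset.sum_eq_zero fun u hu => ?_
      have : w ≠ u := by rintro rfl; exact hw (by simpa using hu)
      simp [Pi.single_apply, this]

end Basic

end PlanarAdd

namespace PlanarAdd

open scoped Classical
open Finset

section MinorDual

variable {V : Type} [Fintype V]

lemma zmod2_eq_of_add {a b : ZMod 2} (h : a + b = 0) : a = b := by
  revert a b; decide

lemma sum_single_mem (S : Set V) (x : V) :
    ∑ u with u ∈ S, (Pi.single x 1 : V → ZMod 2) u = if x ∈ S then 1 else 0 := by
  rw [Finset.sum_filter, Finset.sum_eq_single x]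
  · simp
  · intro b _ hb; simp [hb]
  · simp

/-- Abstract duals are inherited by minors: contracted edges are deleted in the dual and deleted
edges are contracted there. -/
theorem HasDual.of_minor {α : Type} [Fintype α] {H : SimpleGraph α} {G : SimpleGraph V}
    (h : IsMinor H G) (hG : HasDual G) : HasDual H := by
  obtain ⟨f, hconn, hdisj, hedge⟩ := h
  obtain ⟨ι, L, R, hd⟩ := hG
  have huniq : ∀ a b u, u ∈ f a → u ∈ f b → a = b := by
    intro a b u ha hb
    by_contra hne
    exact Set.disjoint_left.1 (hdisj a b hne) ha hb
  have hrep : ∀ e : Sym2 α, ∃ r : Sym2 V, e ∈ H.edgeSet → r ∈ G.edgeSet ∧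
      ∃ a b u v, a ≠ b ∧ e = s(a, b) ∧ u ∈ f a ∧ v ∈ f b ∧ r = s(u, v) := by
    intro e
    induction e with
    | h a b =>
      by_cases hab : H.Adj a b
      · obtain ⟨u, hu, v, hv, huv⟩ := hedge a b hab
        exact ⟨s(u, v), fun _ => ⟨huv, a, b, u, v, hab.ne, rfl, hu, hv, rfl⟩⟩
      · by_cases hV : Nonempty (Sym2 V)
        · exact ⟨hV.some, fun h => absurd h hab⟩
        · obtain ⟨x⟩ := (hconn a).nonempty
          exact absurd ⟨s(x.1, x.1)⟩ hV
  choose rep hrep using hrep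
  have hinj : ∀ e ∈ H.edgeSet, ∀ e' ∈ H.edgeSet, rep e = rep e' → e = e' := by
    intro e he e' he' heq
    obtain ⟨_, a, b, u, v, _, rfl, hu, hv, hr⟩ := hrep e he
    obtain ⟨_, a', b', u', v', _, rfl, hu', hv', hr'⟩ := hrep e' he'
    rw [hr, hr', Sym2.eq_iff] at heq
    rcases heq with ⟨rfl, rfl⟩ | ⟨rfl, rfl⟩
    · rw [huniq a a' _ hu hu', huniq b b' _ hv hv']
    · rw [huniq a b' _ hu hv', huniq b a' _ hv hu', Sym2.eq_swap]
  -- edges inside a branch set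
  let Int : Sym2 V → Prop := fun r => ∃ a u v, r = s(u, v) ∧ u ∈ f a ∧ v ∈ f a
  have hrepInt : ∀ e ∈ H.edgeSet, ¬ Int (rep e) := by
    rintro e he ⟨c, x, y, hxy, hx, hy⟩
    obtain ⟨_, a, b, u, v, hab, rfl, hu, hv, hr⟩ := hrep e he
    rw [hr, Sym2.eq_iff] at hxy
    rcases hxy with ⟨rfl, rfl⟩ | ⟨rfl, rfl⟩
    · exact hab ((huniq a c _ hu hx).trans (huniq b c _ hv hy).symm)
    · exact hab ((huniq a c _ hu hy).trans (huniq b c _ hv hx).symm)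
  let D : Sym2 V → Prop := fun r => r ∈ G.edgeSet ∧ ¬ Int r ∧ ∀ e ∈ H.edgeSet, rep e ≠ r
  let lift : (Sym2 α → ZMod 2) → Sym2 V → ZMod 2 :=
    fun y => ∑ e, y e • (Pi.single (rep e) 1 : Sym2 V → ZMod 2)
  have lift_rep : ∀ y : Sym2 α → ZMod 2, (∀ e, e ∉ H.edgeSet → y e = 0) → ∀ e ∈ H.edgeSet,
      lift y (rep e) = y e := by
    intro y hy e he
    simp only [lift]
    rw [Finset.sum_apply, Finset.sum_eq_single e]
    · simp
    · intro b _ hb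
      by_cases hbH : b ∈ H.edgeSet
      · have : rep e ≠ rep b := fun h => hb (hinj e he b hbH h).symm
        simp [Pi.single_apply, this]
      · simp [hy b hbH]
    · simp
  have lift_zero : ∀ y : Sym2 α → ZMod 2, (∀ e, e ∉ H.edgeSet → y e = 0) → ∀ r,
      (∀ e ∈ H.edgeSet, rep e ≠ r) → lift y r = 0 := by
    intro y hy r hr
    simp only [lift]
    rw [Finset.sum_apply]
    refine Finset.sum_eq_zero fun b _ => ?_
    by_cases hbH : b ∈ H.edgeSet
    · simp [Pi.single_apply, (hr b hbH).symm]
    · simp [hy b hbH]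
  have lift_bd : ∀ y : Sym2 α → ZMod 2, (∀ e, e ∉ H.edgeSet → y e = 0) → ∀ a,
      ∑ u with u ∈ f a, bd (lift y) u = bd y a := by
    intro y hy a
    have h1 : y = ∑ e, y e • (Pi.single e 1 : Sym2 α → ZMod 2) := by
      ext e
      rw [Finset.sum_apply, Finset.sum_eq_single e]
      · simp
      · intro b _ hb; simp [Pi.single_apply, hb.symm]
      · simp
    conv_rhs => rw [h1, map_sum, Finset.sum_apply]
    simp only [lift, map_sum, Finset.sum_apply]
    rw [Finset.sum_comm]
    refine Finset.sum_congr rfl fun e _ => ?_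
    by_cases he : e ∈ H.edgeSet
    · simp only [map_smul, Pi.smul_apply, ← Finset.smul_sum]
      congr 1
      obtain ⟨hr0, c, b, u, v, hab, hec, hu, hv, hr⟩ := hrep e he
      rw [hr]
      have huv : u ≠ v := by rw [hr] at hr0; exact SimpleGraph.Adj.ne hr0
      rw [hec, bd_single huv, bd_single hab]
      simp only [Pi.add_apply, Finset.sum_add_distrib, sum_single_mem]
      have e1 : (u ∈ f a) = (a = c) := by
        apply propext
        exact ⟨fun h => huniq _ _ _ h hu, fun h => h ▸ hu⟩
      have e2 : (v ∈ f a) = (a = b) := by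
        apply propext
        exact ⟨fun h => huniq _ _ _ h hv, fun h => h ▸ hv⟩
      simp only [e1, e2, Pi.single_apply]
    · simp [hy e he]
  have lift_sub : ∀ y : Sym2 α → ZMod 2, (∀ e, e ∉ H.edgeSet → y e = 0) → ∀ r, r ∉ G.edgeSet →
      lift y r = 0 := by
    intro y hy r hr
    exact lift_zero y hy r fun e he h => hr (h ▸ (hrep e he).1)
  let rel : ι → ι → Prop := fun i j => ∃ r, D r ∧ i = L r ∧ j = R r
  refine ⟨Quot rel, fun e => Quot.mk _ (L (rep e)), fun e => Quot.mk _ (R (rep e)), ?_, ?_⟩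
  · intro c
    set w := delta H (fun e => Quot.mk rel (L (rep e))) (fun e => Quot.mk rel (R (rep e))) c with hw
    have hw0 : ∀ e, e ∉ H.edgeSet → w e = 0 := fun e he => by simp [hw, delta, he]
    refine ⟨hw0, ?_⟩
    have hz := hd.mem (fun i => c (Quot.mk _ i))
    set z := delta G L R (fun i => c (Quot.mk _ i)) with hzdef
    have hzD : ∀ r, D r → z r = 0 := by
      intro r hr
      have : Quot.mk rel (L r) = Quot.mk rel (R r) := Quot.sound ⟨r, hr, rfl, rfl⟩
      rw [hzdef, delta_of_mem hr.1, this]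
      exact CharTwo.add_self_eq_zero _
    have hzr : ∀ e ∈ H.edgeSet, z (rep e) = w e := by
      intro e he
      rw [hzdef, delta_of_mem (hrep e he).1, hw, delta_of_mem he]
    ext a
    have key := sum_bd_eq_zero (z + lift w) (f a) (by
      intro u
      rw [Pi.add_apply, cyc_diag hz.1, lift_sub w hw0 _ (by simp), add_zero]) (by
      intro u hu v hv
      rw [Pi.add_apply]
      by_cases hG' : s(u, v) ∈ G.edgeSet
      · by_cases hr : ∃ e ∈ H.edgeSet, rep e = s(u, v)
        · obtain ⟨e, he, her⟩ := hr
          rw [← her, hzr e he, lift_rep w hw0 e he]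
          exact CharTwo.add_self_eq_zero _
        · push Not at hr
          rw [lift_zero w hw0 _ hr, hzD _ ⟨hG', ?_, hr⟩, add_zero]
          rintro ⟨b, x, y, hxy, hx, hy⟩
          rw [Sym2.eq_iff] at hxy
          rcases hxy with ⟨rfl, rfl⟩ | ⟨rfl, rfl⟩
          · exact hv (huniq a b _ hu hx ▸ hy)
          · exact hv (huniq a b _ hu hy ▸ hx)
      · rw [hz.1 _ hG', lift_sub w hw0 _ hG', add_zero])
    rw [map_add, hz.2, zero_add, lift_bd w hw0] at key
    simpa using key
  · intro y hy
    set t := bd (lift y) with ht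
    have hT : ∀ a, ∃ z : Sym2 V → ZMod 2,
        (∀ e, z e ≠ 0 → ∃ u v, e = s(u, v) ∧ u ∈ f a ∧ v ∈ f a ∧ G.Adj u v) ∧
        bd z = fun u => if u ∈ f a then t u else 0 := by
      intro a
      refine exists_tjoin (hconn a) _ (fun u hu => by simp [hu]) ?_
      have : ∑ u with u ∈ f a, (if u ∈ f a then t u else 0) = ∑ u with u ∈ f a, t u := by
        refine Finset.sum_congr rfl fun u hu => ?_
        rw [if_pos (by simpa using hu)]
      rw [this, ht, lift_bd y hy.1, hy.2]
      rfl
    choose tj htj htj' using hT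
    have htj0 : ∀ a r, ¬ Int r → tj a r = 0 := by
      intro a r hr
      by_contra hne
      obtain ⟨u, v, he, hu, hv, _⟩ := htj a r hne
      exact hr ⟨a, u, v, he, hu, hv⟩
    have htsupp : ∀ u, (∀ a, u ∉ f a) → t u = 0 := by
      intro u hu
      rw [ht, bd_apply]
      refine Finset.sum_eq_zero fun v _ => ?_
      apply lift_zero y hy.1
      rintro e he hr
      obtain ⟨_, a, b, x, y, hab, _, hx, hy, hr'⟩ := hrep e he
      rw [hr', Sym2.eq_iff] at hr
      rcases hr with ⟨rfl, rfl⟩ | ⟨rfl, rfl⟩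
      · exact hu a hx
      · exact hu b hy
    have hz : lift y + ∑ a, tj a ∈ cyc G := by
      refine ⟨?_, ?_⟩
      · intro e he
        rw [Pi.add_apply, lift_sub y hy.1 e he, zero_add, Finset.sum_apply]
        refine Finset.sum_eq_zero fun a _ => ?_
        by_contra hne
        obtain ⟨u, v, rfl, _, _, huv⟩ := htj a e hne
        exact he huv
      · rw [map_add, map_sum bd tj]
        have : ∑ a, bd (tj a) = t := by
          ext u
          rw [Finset.sum_apply]
          simp only [htj']
          by_cases hu : ∃ a, u ∈ f a
          · obtain ⟨a, ha⟩ := hu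
            rw [Finset.sum_eq_single a]
            · simp [ha]
            · intro b _ hb
              rw [if_neg]
              exact fun h => hb (huniq b a u h ha)
            · simp
          · push Not at hu
            rw [htsupp u hu]
            simp [hu]
        rw [this, ← ht, fun_add_self]
    obtain ⟨c, hc⟩ := hd.surj _ hz
    have hresp : ∀ i j, rel i j → c i = c j := by
      rintro i j ⟨r, hr, rfl, rfl⟩
      have := hc r hr.1
      rw [Pi.add_apply, lift_zero y hy.1 r hr.2.2, Finset.sum_apply,
        Finset.sum_eq_zero (fun a _ => htj0 a r hr.2.1), add_zero] at this
      exact zmod2_eq_of_add this.symm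
    refine ⟨Quot.lift c hresp, fun e he => ?_⟩
    have := hc (rep e) (hrep e he).1
    rw [Pi.add_apply, lift_rep y hy.1 e he, Finset.sum_apply,
        Finset.sum_eq_zero (fun a _ => htj0 a _ (hrepInt e he)), add_zero] at this
    exact this

lemma isMinor_of_hom {α β : Type} {H : SimpleGraph α} {G : SimpleGraph β} (f : α ↪ β)
    (h : ∀ a b, H.Adj a b → G.Adj (f a) (f b)) : IsMinor H G := by
  refine ⟨fun a => {f a}, fun a => ?_, fun a b hab => ?_, fun a b hab => ?_⟩
  · haveI : Subsingleton ({f a} : Set β) := ⟨fun x y => Subtype.ext (x.2.trans y.2.symm)⟩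
    haveI : Nonempty ({f a} : Set β) := ⟨⟨f a, rfl⟩⟩
    exact ⟨fun x y => by rw [Subsingleton.elim x y]⟩
  · rw [Set.disjoint_singleton]
    exact fun h => hab (f.injective h)
  · exact ⟨f a, rfl, f b, rfl, h a b hab⟩

lemma HasDual.mono {H G : SimpleGraph V} (h : H ≤ G) (hG : HasDual G) : HasDual H :=
  HasDual.of_minor (isMinor_of_hom (Function.Embedding.refl V) fun _ _ hab => h hab) hG

end MinorDual

end PlanarAdd

namespace PlanarAdd

open scoped Classical
open Finset

/-! ### Dimension of the cycle space and face counts -/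

section Rank

variable {V : Type} [Fintype V]

/-- Extension by zero of a vector on the edges of `G`. -/
noncomputable def extE (G : SimpleGraph V) : (G.edgeSet → ZMod 2) →ₗ[ZMod 2] (Sym2 V → ZMod 2) where
  toFun z e := if h : e ∈ G.edgeSet then z ⟨e, h⟩ else 0
  map_add' x y := by ext e; simp only [Pi.add_apply]; split_ifs <;> simp
  map_smul' t x := by ext e; simp only [Pi.smul_apply]; split_ifs <;> simp

lemma extE_inj (G : SimpleGraph V) : Function.Injective (extE G) := by
  intro x y h
  ext ⟨e, he⟩
  have := congrFun h e
  simpa [extE, he] using this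

lemma cyc_eq_map (G : SimpleGraph V) :
    cyc G = (LinearMap.ker (bd ∘ₗ extE G)).map (extE G) := by
  ext z
  rw [Submodule.mem_map, mem_cyc]
  constructor
  · rintro ⟨h1, h2⟩
    have : extE G (fun e => z e) = z := by
      ext e
      simp only [extE, LinearMap.coe_mk, AddHom.coe_mk]
      split_ifs with h
      · rfl
      · exact (h1 e h).symm
    exact ⟨fun e => z e, by rw [LinearMap.mem_ker, LinearMap.comp_apply, this, h2], this⟩
  · rintro ⟨y, hy, rfl⟩
    exact ⟨fun e he => by simp [extE, he], hy⟩

lemma finrank_cyc_add (G : SimpleGraph V) :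
    Module.finrank (ZMod 2) (LinearMap.range (bd ∘ₗ extE G)) + Module.finrank (ZMod 2) (cyc G)
      = G.edgeSet.ncard := by
  rw [cyc_eq_map, ← LinearEquiv.finrank_eq (Submodule.equivMapOfInjective (extE G) (extE_inj G) _),
    LinearMap.finrank_range_add_finrank_ker, Module.finrank_pi, ← Nat.card_coe_set_eq,
    Nat.card_eq_fintype_card]

lemma le_finrank_cyc [Nonempty V] (G : SimpleGraph V) :
    G.edgeSet.ncard + 1 ≤ Module.finrank (ZMod 2) (cyc G) + Fintype.card V := by
  have h := finrank_cyc_add G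
  let σ : (V → ZMod 2) →ₗ[ZMod 2] ZMod 2 := ∑ u, LinearMap.proj u
  have hσ : LinearMap.range σ = ⊤ := by
    rw [LinearMap.range_eq_top]
    intro t
    refine ⟨Pi.single (Classical.arbitrary V) t, ?_⟩
    simp [σ, LinearMap.sum_apply]
  have h2 := LinearMap.finrank_range_add_finrank_ker σ
  rw [hσ, finrank_top, Module.finrank_self, Module.finrank_pi] at h2
  have h3 : LinearMap.range (bd ∘ₗ extE G) ≤ LinearMap.ker σ := by
    rintro _ ⟨z, rfl⟩
    rw [LinearMap.mem_ker]
    have := sum_bd_eq_zero (extE G z) Set.univ (fun u => by simp [extE]) (by simp)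
    simpa [σ, LinearMap.sum_apply] using this
  have h4 := Submodule.finrank_mono h3
  omega

lemma finrank_cyc_le (G : SimpleGraph V) (W : Finset V) (x : V) (hx : x ∈ W)
    (hW : ∀ w ∈ W, G.Reachable w x) :
    Module.finrank (ZMod 2) (cyc G) + W.card ≤ G.edgeSet.ncard + 1 := by
  have h := finrank_cyc_add G
  let W' := W.erase x
  have hcard : W'.card + 1 = W.card := Finset.card_erase_add_one hx
  let π : (V → ZMod 2) →ₗ[ZMod 2] (W' → ZMod 2) := LinearMap.funLeft _ _ Subtype.val
  have htop : (LinearMap.range (bd ∘ₗ extE G)).map π = ⊤ := by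
    rw [eq_top_iff]
    intro t _
    have hch : ∀ w : W', ∃ z : Sym2 V → ZMod 2, (∀ e, e ∉ G.edgeSet → z e = 0) ∧
      bd z = Pi.single w.1 1 + Pi.single x 1 := fun w =>
        exists_chain_of_reachable (hW w (Finset.mem_of_mem_erase w.2))
    choose z hz hz' using hch
    have : t = ∑ w, t w • π (bd (z w)) := by
      ext v
      rw [Finset.sum_apply, Finset.sum_eq_single v]
      · rw [hz']
        have : v.1 ≠ x := Finset.ne_of_mem_erase v.2
        simp [π, LinearMap.funLeft_apply, this]
      · intro b _ hb
        rw [hz']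
        have h1 : v.1 ≠ x := Finset.ne_of_mem_erase v.2
        have h2 : v.1 ≠ b.1 := fun h => hb (Subtype.ext h.symm)
        simp [π, LinearMap.funLeft_apply, h1, h2]
      · simp
    rw [this]
    refine Submodule.sum_mem _ fun w _ => Submodule.smul_mem _ _ (Submodule.mem_map_of_mem ?_)
    refine ⟨fun e => z w e, ?_⟩
    rw [LinearMap.comp_apply]
    congr 1
    ext e
    simp only [extE, LinearMap.coe_mk, AddHom.coe_mk]
    split_ifs with h
    · rfl
    · exact (hz w e h).symm
  have h1 := Submodule.finrank_map_le π (LinearMap.range (bd ∘ₗ extE G))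
  rw [htop, finrank_top, Module.finrank_pi, Fintype.card_coe] at h1
  omega

/-- The faces that occur on some edge of `G`. -/
noncomputable def faces {ι : Type} (G : SimpleGraph V) (L R : Sym2 V → ι) : Finset ι :=
  (Set.toFinset G.edgeSet).image L ∪ (Set.toFinset G.edgeSet).image R

lemma mem_faces {ι : Type} {G : SimpleGraph V} {L R : Sym2 V → ι} {i : ι} :
    i ∈ faces G L R ↔ ∃ e ∈ G.edgeSet, i = L e ∨ i = R e := by
  simp only [faces, Finset.mem_union, Finset.mem_image, Set.mem_toFinset]
  constructor
  · rintro (⟨e, he, rfl⟩ | ⟨e, he, rfl⟩)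
    · exact ⟨e, he, Or.inl rfl⟩
    · exact ⟨e, he, Or.inr rfl⟩
  · rintro ⟨e, he, rfl | rfl⟩
    · exact Or.inl ⟨e, he, rfl⟩
    · exact Or.inr ⟨e, he, rfl⟩

/-- The boundary of a face. -/
noncomputable def star {ι : Type} (G : SimpleGraph V) (L R : Sym2 V → ι) (i : ι) :
    Sym2 V → ZMod 2 := delta G L R (Pi.single i 1)

lemma star_ne {ι : Type} {G : SimpleGraph V} {L R : Sym2 V → ι} {i : ι} {e : Sym2 V}
    (h : star G L R i e ≠ 0) : e ∈ G.edgeSet ∧ (L e = i ∨ R e = i) := by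
  unfold star delta at h
  split_ifs at h with he
  · refine ⟨he, ?_⟩
    by_contra hcon
    push Not at hcon
    simp [hcon.1, hcon.2] at h
  · simp at h

lemma delta_eq_sum_star {ι : Type} (G : SimpleGraph V) (L R : Sym2 V → ι) (c : ι → ZMod 2) :
    delta G L R c = ∑ i ∈ faces G L R, c i • star G L R i := by
  ext e
  rw [Finset.sum_apply]
  by_cases he : e ∈ G.edgeSet
  · simp only [Pi.smul_apply, star, delta_of_mem he, smul_add, Finset.sum_add_distrib]
    congr 1
    · rw [Finset.sum_eq_single (L e)]
      · simp
      · intro b _ hb; simp [hb.symm]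
      · intro h; exact absurd (mem_faces.2 ⟨e, he, Or.inl rfl⟩) h
    · rw [Finset.sum_eq_single (R e)]
      · simp
      · intro b _ hb; simp [hb.symm]
      · intro h; exact absurd (mem_faces.2 ⟨e, he, Or.inr rfl⟩) h
  · simp [star, delta, he]

lemma IsDual.eq_delta {ι : Type} {G : SimpleGraph V} {L R : Sym2 V → ι} (hd : IsDual G L R)
    {z : Sym2 V → ZMod 2} (hz : z ∈ cyc G) : ∃ c, z = delta G L R c := by
  obtain ⟨c, hc⟩ := hd.surj z hz
  refine ⟨c, ?_⟩
  ext e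
  by_cases he : e ∈ G.edgeSet
  · rw [delta_of_mem he, hc e he]
  · rw [hz.1 e he]; simp [delta, he]

/-- Euler's formula combined with a lower bound `g` on the length of every face boundary. -/
lemma girth_bound {ι : Type} {G : SimpleGraph V} {L R : Sym2 V → ι} (hd : IsDual G L R) (g : ℕ)
    (hg : ∀ z ∈ cyc G, z ≠ 0 → g ≤ #{e | z e ≠ 0})
    (hk : 1 ≤ Module.finrank (ZMod 2) (cyc G)) :
    g * (Module.finrank (ZMod 2) (cyc G) + 1) ≤ 2 * G.edgeSet.ncard := by
  set F := (faces G L R).filter fun i => star G L R i ≠ 0 with hF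
  have hspan : ∀ c, delta G L R c = ∑ i ∈ F, c i • star G L R i := by
    intro c
    rw [delta_eq_sum_star, hF, Finset.sum_filter]
    refine Finset.sum_congr rfl fun i _ => ?_
    split_ifs with h
    · rfl
    · push Not at h; rw [h, smul_zero]
  have hsum0 : ∑ i ∈ F, star G L R i = 0 := by
    have := hspan (fun _ => 1)
    simp only [one_smul] at this
    rw [← this]
    ext e
    simp only [delta]
    split_ifs
    · exact CharTwo.add_self_eq_zero _
    · rfl
  have hFne : F.Nonempty := by
    by_contra hne
    rw [Finset.not_nonempty_iff_eq_empty] at hne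
    have : cyc G = ⊥ := by
      rw [eq_bot_iff]
      intro z hz
      obtain ⟨c, rfl⟩ := hd.eq_delta hz
      rw [hspan, hne]; simp
    rw [this, finrank_bot] at hk
    omega
  obtain ⟨o, ho⟩ := hFne
  have hcard : Module.finrank (ZMod 2) (cyc G) + 1 ≤ F.card := by
    have h1 : cyc G ≤ Submodule.span (ZMod 2) ((F.erase o).image (star G L R) : Finset _) := by
      intro z hz
      obtain ⟨c, rfl⟩ := hd.eq_delta hz
      rw [hspan]
      have hmem : ∀ i ∈ F.erase o, star G L R i ∈
          Submodule.span (ZMod 2) (((F.erase o).image (star G L R) : Finset _) : Set _) :=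
        fun i hi => Submodule.subset_span (by
          rw [Finset.mem_coe]; exact Finset.mem_image_of_mem _ hi)
      refine Submodule.sum_mem _ fun i hi => Submodule.smul_mem _ _ ?_
      by_cases hio : i = o
      · subst hio
        have : star G L R i = - ∑ j ∈ F.erase i, star G L R j := by
          rw [eq_neg_iff_add_eq_zero, Finset.add_sum_erase F _ hi, hsum0]
        rw [this]
        exact Submodule.neg_mem _ (Submodule.sum_mem _ hmem)
      · exact hmem i (Finset.mem_erase.2 ⟨hio, hi⟩)
    have h2 := Submodule.finrank_mono h1
    have h3 := finrank_span_finset_le_card (R := ZMod 2) ((F.erase o).image (star G L R))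
    have h4 := Finset.card_image_le (s := F.erase o) (f := star G L R)
    have h5 := Finset.card_erase_add_one ho
    unfold Set.finrank at h3
    omega
  have hcount : ∑ i ∈ F, #{e | star G L R i e ≠ 0} ≤ 2 * G.edgeSet.ncard := by
    have h1 : ∀ i ∈ F, #{e | star G L R i e ≠ 0} ≤
        #{e ∈ Set.toFinset G.edgeSet | L e = i} + #{e ∈ Set.toFinset G.edgeSet | R e = i} := by
      intro i _
      refine le_trans (Finset.card_le_card ?_) (Finset.card_union_le _ _)
      intro e he
      have := star_ne (by simpa using he)
      simp only [Finset.mem_union, Finset.mem_filter, Set.mem_toFinset]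
      tauto
    have h2 : ∀ M : Sym2 V → ι, ∑ i ∈ F, #{e ∈ Set.toFinset G.edgeSet | M e = i}
        ≤ G.edgeSet.ncard := by
      intro M
      rw [Set.ncard_eq_toFinset_card']
      rw [← Finset.card_biUnion]
      · exact Finset.card_le_card (by
          intro e he
          simp only [Finset.mem_biUnion, Finset.mem_filter] at he
          obtain ⟨_, _, h, _⟩ := he
          exact h)
      · intro i _ j _ hij
        rw [Function.onFun, Finset.disjoint_left]
        intro e h1 h2
        simp only [Finset.mem_filter] at h1 h2
        exact hij (h1.2.symm.trans h2.2)
    calc _ ≤ _ := Finset.sum_le_sum h1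
      _ ≤ _ := by rw [Finset.sum_add_distrib]; have := h2 L; have := h2 R; omega
  have hlow : F.card * g ≤ ∑ i ∈ F, #{e | star G L R i e ≠ 0} := by
    rw [← smul_eq_mul, ← Finset.sum_const]
    refine Finset.sum_le_sum fun i hi => hg _ (hd.mem _) (Finset.mem_filter.1 hi).2
  nlinarith

/-- Upper bound for the number of faces when the dual multigraph is connected. -/
lemma card_faces_le {ι : Type} {G : SimpleGraph V} {L R : Sym2 V → ι} (hd : IsDual G L R)
    (hconst : ∀ c : ι → ZMod 2, (∀ e ∈ G.edgeSet, c (L e) = c (R e)) →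
      ∀ i ∈ faces G L R, ∀ j ∈ faces G L R, c i = c j) :
    (faces G L R).card ≤ Module.finrank (ZMod 2) (cyc G) + 1 := by
  set F := faces G L R with hF
  let X : (F → ZMod 2) → ι → ZMod 2 := fun c i => if h : i ∈ F then c ⟨i, h⟩ else 0
  let Φ : (F → ZMod 2) →ₗ[ZMod 2] (Sym2 V → ZMod 2) :=
    { toFun := fun c => delta G L R (X c)
      map_add' := by
        intro a b; ext e; simp only [delta, X, Pi.add_apply]
        split_ifs <;> first | ring | simp
      map_smul' := by
        intro a b; ext e; simp only [delta, X, Pi.smul_apply, smul_eq_mul, RingHom.id_apply]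
        split_ifs <;> first | ring | simp }
  have h1 := LinearMap.finrank_range_add_finrank_ker Φ
  rw [Module.finrank_pi, Fintype.card_coe] at h1
  have h2 : Module.finrank (ZMod 2) (LinearMap.range Φ) ≤ Module.finrank (ZMod 2) (cyc G) := by
    apply Submodule.finrank_mono
    rintro _ ⟨c, rfl⟩
    exact hd.mem _
  have h3 : Module.finrank (ZMod 2) (LinearMap.ker Φ) ≤ 1 := by
    have : LinearMap.ker Φ ≤ Submodule.span (ZMod 2) {fun _ => 1} := by
      intro c hc
      rw [Submodule.mem_span_singleton]
      by_cases hne : Nonempty F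
      · obtain ⟨i0⟩ := hne
        refine ⟨c i0, ?_⟩
        ext i
        have := hconst (X c) (fun e he => by
          have := congrFun (LinearMap.mem_ker.1 hc) e
          simp only [Φ, LinearMap.coe_mk, AddHom.coe_mk, delta_of_mem he, Pi.zero_apply] at this
          exact zmod2_eq_of_add this) i0 i0.2 i i.2
        simpa [X] using this
      · exact ⟨0, by ext i; exact absurd ⟨i⟩ hne⟩
    refine (Submodule.finrank_mono this).trans ?_
    exact (finrank_span_le_card _).trans (by simp)
  omega

lemma exists_next {G : SimpleGraph V} {z : Sym2 V → ZMod 2} (hz : z ∈ cyc G) {a b : V}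
    (hab : z s(a, b) ≠ 0) : ∃ c, c ≠ a ∧ z s(b, c) ≠ 0 := by
  by_contra hcon
  push Not at hcon
  have := congrFun hz.2 b
  rw [bd_apply, Finset.sum_eq_single a] at this
  · rw [Sym2.eq_swap] at this; exact hab this
  · intro v _ hv; exact hcon v hv
  · simp

lemma adj_of_ne {G : SimpleGraph V} {z : Sym2 V → ZMod 2} (hz : z ∈ cyc G) {a b : V}
    (hab : z s(a, b) ≠ 0) : G.Adj a b := by
  by_contra h
  exact hab (hz.1 _ h)

end Rank

lemma not_hasDual_K5 : ¬ HasDual (completeGraph (Fin 5)) := by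
  rintro ⟨ι, L, R, hd⟩
  have he : (completeGraph (Fin 5)).edgeSet.ncard = 10 := by
    rw [Set.ncard_eq_toFinset_card', ← SimpleGraph.edgeFinset]
    have := SimpleGraph.card_edgeFinset_top_eq_card_choose_two (V := Fin 5)
    convert this
    rw [Fintype.card_fin]
    rfl
  have hk := le_finrank_cyc (completeGraph (Fin 5))
  rw [he, Fintype.card_fin] at hk
  have := girth_bound hd 3 (by
    intro z hz hne
    obtain ⟨e, he⟩ := Function.ne_iff.1 hne
    induction e with
    | h a b =>
      rw [Pi.zero_apply] at he
      obtain ⟨c, hca, hbc⟩ := exists_next hz he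
      obtain ⟨d, hdb, hcd⟩ := exists_next hz hbc
      have h1 := (adj_of_ne hz he).ne
      have h2 := (adj_of_ne hz hbc).ne
      have h3 := (adj_of_ne hz hcd).ne
      have hsub : ({s(a, b), s(b, c), s(c, d)} : Finset (Sym2 (Fin 5))) ⊆
          ({e | z e ≠ 0} : Finset _) := by
        intro e; simp only [Finset.mem_insert, Finset.mem_singleton, Finset.mem_filter]
        rintro (rfl | rfl | rfl) <;> simp [*]
      refine le_trans ?_ (Finset.card_le_card hsub)
      rw [Finset.card_insert_of_notMem, Finset.card_insert_of_notMem, Finset.card_singleton]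
      · simp only [Finset.mem_singleton, Sym2.eq_iff]; grind
      · simp only [Finset.mem_insert, Finset.mem_singleton, Sym2.eq_iff]; grind) (by omega)
  rw [he] at this
  omega

lemma not_hasDual_K33 : ¬ HasDual (completeBipartiteGraph (Fin 3) (Fin 3)) := by
  rintro ⟨ι, L, R, hd⟩
  have he : (completeBipartiteGraph (Fin 3) (Fin 3)).edgeSet.ncard = 9 := by
    rw [Set.ncard, encard_edgeSet_completeBipartiteGraph]
    simp
  have hk := le_finrank_cyc (completeBipartiteGraph (Fin 3) (Fin 3))
  rw [he] at hk
  simp only [Fintype.card_sum, Fintype.card_fin] at hk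
  have := girth_bound hd 4 (by
    intro z hz hne
    obtain ⟨e, he⟩ := Function.ne_iff.1 hne
    induction e with
    | h a b =>
      rw [Pi.zero_apply] at he
      obtain ⟨c, hca, hbc⟩ := exists_next hz he
      obtain ⟨d, hdb, hcd⟩ := exists_next hz hbc
      obtain ⟨f, hfc, hdf⟩ := exists_next hz hcd
      have h1 := (adj_of_ne hz he)
      have h2 := (adj_of_ne hz hbc)
      have h3 := (adj_of_ne hz hcd)
      have h4 := (adj_of_ne hz hdf)
      have hda : d ≠ a := by
        rintro rfl
        rw [completeBipartiteGraph_adj] at h1 h2 h3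
        revert h1 h2 h3
        rcases b <;> rcases c <;> rcases d <;> simp
      have h1 := h1.ne
      have h2 := h2.ne
      have h3 := h3.ne
      have h4 := h4.ne
      have hsub : ({s(a, b), s(b, c), s(c, d), s(d, f)} : Finset (Sym2 (Fin 3 ⊕ Fin 3))) ⊆
          ({e | z e ≠ 0} : Finset _) := by
        intro e; simp only [Finset.mem_insert, Finset.mem_singleton, Finset.mem_filter]
        rintro (rfl | rfl | rfl | rfl) <;> simp [*]
      refine le_trans ?_ (Finset.card_le_card hsub)
      rw [Finset.card_insert_of_notMem, Finset.card_insert_of_notMem,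
        Finset.card_insert_of_notMem, Finset.card_singleton]
      · simp only [Finset.mem_singleton, Sym2.eq_iff]; grind
      · simp only [Finset.mem_insert, Finset.mem_singleton, Sym2.eq_iff]; grind
      · simp only [Finset.mem_insert, Finset.mem_singleton, Sym2.eq_iff]; grind) (by omega)
  rw [he] at this
  omega

/-- The easy half of the planarity criterion: a graph with an abstract dual has neither of the
two forbidden minors. -/
theorem HasDual.isPlanar {V : Type} [Fintype V] {G : SimpleGraph V} (h : HasDual G) :
    IsPlanar G :=
  ⟨fun hm => not_hasDual_K5 (h.of_minor hm), fun hm => not_hasDual_K33 (h.of_minor hm)⟩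

end PlanarAdd

namespace PlanarAdd

open scoped Classical
open Finset

/-! ### Gluing duals and adding edges inside a face -/

section Glue

variable {V : Type} [Fintype V]

lemma mem_sup_edge {G : SimpleGraph V} {u v : V} (h : u ≠ v) {e : Sym2 V} :
    e ∈ (G ⊔ SimpleGraph.edge u v).edgeSet ↔ e ∈ G.edgeSet ∨ e = s(u, v) := by
  rw [SimpleGraph.edgeSet_sup, SimpleGraph.edgeSet_edge_of_ne h]
  rfl

lemma edge_comm (u v : V) : SimpleGraph.edge u v = SimpleGraph.edge v u :=
  SimpleGraph.edge_comm u v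

/-- The part of a chain lying on the edges of `A` outside `X`. -/
noncomputable def part (A : SimpleGraph V) (X : Set (Sym2 V)) (z : Sym2 V → ZMod 2) :
    Sym2 V → ZMod 2 := fun e => if e ∈ A.edgeSet ∧ e ∉ X then z e else 0

lemma bd_eq_zero_of_not_supp {A : SimpleGraph V} {z : Sym2 V → ZMod 2}
    (hz : ∀ e, e ∉ A.edgeSet → z e = 0) {u : V} (hu : u ∉ A.support) : bd z u = 0 := by
  rw [bd_apply]
  refine Finset.sum_eq_zero fun v _ => hz _ fun h => hu ⟨v, h⟩

lemma sum_bd_univ {A : SimpleGraph V} {z : Sym2 V → ZMod 2}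
    (hz : ∀ e, e ∉ A.edgeSet → z e = 0) : ∑ u, bd z u = 0 := by
  have := sum_bd_eq_zero z Set.univ (cyc_diag hz) (by simp)
  simpa using this

/-- A chain in the union of two graphs meeting in a single vertex splits into cycles. -/
lemma split_cyc {A B : SimpleGraph V} {x : V}
    (hAB : ∀ u, u ∈ A.support → u ∈ B.support → u = x)
    {zA zB : Sym2 V → ZMod 2} (hA : ∀ e, e ∉ A.edgeSet → zA e = 0)
    (hB : ∀ e, e ∉ B.edgeSet → zB e = 0) (h : bd (zA + zB) = 0) : zA ∈ cyc A := by
  refine ⟨hA, ?_⟩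
  have h0 : ∀ u, u ≠ x → bd zA u = 0 := by
    intro u hu
    by_cases h1 : u ∈ A.support
    · have h2 : u ∉ B.support := fun h2 => hu (hAB u h1 h2)
      have h3 := congrFun h u
      rw [map_add, Pi.add_apply, bd_eq_zero_of_not_supp hB h2, add_zero] at h3
      exact h3
    · exact bd_eq_zero_of_not_supp hA h1
  ext u
  by_cases hu : u = x
  · subst hu
    have := sum_bd_univ hA
    rw [Finset.sum_eq_single u (fun b _ hb => h0 b hb) (by simp)] at this
    exact this
  · exact h0 u hu

/-- Two graphs with duals that share at most one vertex: the dual of the union is the disjoint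
union of the duals. -/
lemma HasDual.sum1 {A B : SimpleGraph V} {x : V}
    (hAB : ∀ u, u ∈ A.support → u ∈ B.support → u = x)
    (hA : HasDual A) (hB : HasDual B) : HasDual (A ⊔ B) := by
  obtain ⟨ι₁, L₁, R₁, h₁⟩ := hA
  obtain ⟨ι₂, L₂, R₂, h₂⟩ := hB
  have hdisj : ∀ e, e ∈ A.edgeSet → e ∉ B.edgeSet := by
    intro e
    induction e with
    | h a b =>
      intro ha hb
      have h1 := hAB a ⟨b, ha⟩ ⟨b, hb⟩
      have h2 := hAB b ⟨a, SimpleGraph.Adj.symm ha⟩ ⟨a, SimpleGraph.Adj.symm hb⟩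
      exact SimpleGraph.Adj.ne ha (h1.trans h2.symm)
  refine ⟨ι₁ ⊕ ι₂, fun e => if e ∈ A.edgeSet then .inl (L₁ e) else .inr (L₂ e),
    fun e => if e ∈ A.edgeSet then .inl (R₁ e) else .inr (R₂ e), ?_, ?_⟩
  · intro c
    have : delta (A ⊔ B) (fun e => if e ∈ A.edgeSet then .inl (L₁ e) else .inr (L₂ e))
      (fun e => if e ∈ A.edgeSet then .inl (R₁ e) else .inr (R₂ e)) c
        = delta A L₁ R₁ (c ∘ .inl) + delta B L₂ R₂ (c ∘ .inr) := by
      ext e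
      simp only [delta, SimpleGraph.edgeSet_sup, Set.mem_union, Pi.add_apply, Function.comp]
      by_cases h1 : e ∈ A.edgeSet
      · simp [h1, hdisj e h1]
      · simp [h1]
    rw [this]
    exact Submodule.add_mem _ (cyc_mono le_sup_left (h₁.mem _)) (cyc_mono le_sup_right (h₂.mem _))
  · intro z hz
    have hzz : z = part A ∅ z + part B ∅ z := by
      ext e
      simp only [part, Pi.add_apply, Set.mem_empty_iff_false, not_false_eq_true, and_true]
      by_cases h1 : e ∈ A.edgeSet
      · simp [h1, hdisj e h1]
      · by_cases h2 : e ∈ B.edgeSet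
        · simp [h1, h2]
        · simp only [h1, h2, if_false, add_zero]
          exact hz.1 e (by simp [h1, h2])
    have hpA : ∀ e, e ∉ A.edgeSet → part A ∅ z e = 0 := fun e he => by simp [part, he]
    have hpB : ∀ e, e ∉ B.edgeSet → part B ∅ z e = 0 := fun e he => by simp [part, he]
    have hcA := split_cyc hAB hpA hpB (by rw [← hzz]; exact hz.2)
    have hcB := split_cyc (fun u h h' => hAB u h' h) hpB hpA
      (by rw [add_comm, ← hzz]; exact hz.2)
    obtain ⟨c₁, hc₁⟩ := h₁.surj _ hcA
    obtain ⟨c₂, hc₂⟩ := h₂.surj _ hcB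
    refine ⟨Sum.elim c₁ c₂, fun e he => ?_⟩
    by_cases h1 : e ∈ A.edgeSet
    · have := hc₁ e h1
      simp only [h1, if_true, Sum.elim_inl, ← this]
      simp [part, h1]
    · have h2 : e ∈ B.edgeSet := by
        rw [SimpleGraph.edgeSet_sup] at he
        exact he.resolve_left h1
      have := hc₂ e h2
      simp only [h1, if_false, Sum.elim_inr, ← this]
      simp [part, h2]

/-- A chain in the union of two graphs meeting only in `x` and `y` has both parts closing up
along `xy`. -/
lemma split_bd {A B : SimpleGraph V} {x y : V} (hxy : x ≠ y)
    (hAB : ∀ u, u ∈ A.support → u ∈ B.support → u = x ∨ u = y)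
    {zA zB : Sym2 V → ZMod 2} (hA : ∀ e, e ∉ A.edgeSet → zA e = 0)
    (hB : ∀ e, e ∉ B.edgeSet → zB e = 0)
    (h : ∀ u, u ≠ x → u ≠ y → bd zA u + bd zB u = 0) :
    bd zA = bd (Pi.single s(x, y) (bd zA x)) := by
  have h0 : ∀ u, u ≠ x → u ≠ y → bd zA u = 0 := by
    intro u hu hu'
    by_cases h1 : u ∈ A.support
    · have h2 : u ∉ B.support := fun h2 => (hAB u h1 h2).elim hu hu'
      have h3 := h u hu hu'
      rwa [bd_eq_zero_of_not_supp hB h2, add_zero] at h3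
    · exact bd_eq_zero_of_not_supp hA h1
  rw [bd_single hxy]
  have hs := sum_bd_univ hA
  rw [← Finset.sum_subset (Finset.subset_univ {x, y}), Finset.sum_pair hxy] at hs
  · have hs := zmod2_eq_of_add hs
    ext u
    rw [Pi.add_apply]
    by_cases h1 : u = x
    · subst h1; simp [hxy]
    · by_cases h2 : u = y
      · subst h2; simp [h1, hs]
      · simp [h1, h2, h0 u h1 h2]
  · intro u _ hu
    simp only [Finset.mem_insert, Finset.mem_singleton, not_or] at hu
    exact h0 u hu.1 hu.2

/-- Two graphs with duals that share an edge `xy` and no further vertices. -/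
lemma HasDual.sum2 {A B : SimpleGraph V} {x y : V}
    (hAB : ∀ u, u ∈ A.support → u ∈ B.support → u = x ∨ u = y)
    (hxA : A.Adj x y) (hxB : B.Adj x y)
    (hA : HasDual A) (hB : HasDual B) : HasDual (A ⊔ B) := by
  obtain ⟨ι₁, L₁, R₁, h₁⟩ := hA
  obtain ⟨ι₂, L₂, R₂, h₂⟩ := hB
  have hxy : x ≠ y := hxA.ne
  have hdisj : ∀ e, e ∈ A.edgeSet → e ≠ s(x, y) → e ∉ B.edgeSet := by
    intro e
    induction e with
    | h a b =>
      intro ha hne hb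
      have h1 := hAB a ⟨b, ha⟩ ⟨b, hb⟩
      have h2 := hAB b ⟨a, SimpleGraph.Adj.symm ha⟩ ⟨a, SimpleGraph.Adj.symm hb⟩
      have h3 := SimpleGraph.Adj.ne ha
      rw [Ne, Sym2.eq_iff] at hne
      grind
  set a₁ := L₁ s(x, y) with ha₁
  set b₁ := R₁ s(x, y) with hb₁
  set a₂ := L₂ s(x, y) with ha₂
  set b₂ := R₂ s(x, y) with hb₂
  -- the glued face set: `a₂` is identified with `a₁`
  let q : ι₂ → ι₁ ⊕ ι₂ := fun i => if i = a₂ then .inl a₁ else .inr i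
  have hq : q a₂ = .inl a₁ := by simp [q]
  let L : Sym2 V → ι₁ ⊕ ι₂ := fun e => if e = s(x, y) then .inl b₁ else
    if e ∈ A.edgeSet then .inl (L₁ e) else q (L₂ e)
  let R : Sym2 V → ι₁ ⊕ ι₂ := fun e => if e = s(x, y) then q b₂ else
    if e ∈ A.edgeSet then .inl (R₁ e) else q (R₂ e)
  have hL0 : L s(x, y) = .inl b₁ := by simp [L]
  have hR0 : R s(x, y) = q b₂ := by simp [R]
  have hLA : ∀ e ∈ A.edgeSet, e ≠ s(x, y) → L e = .inl (L₁ e) ∧ R e = .inl (R₁ e) := by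
    intro e h h'
    simp [L, R, h, h']
  have hLB : ∀ e, e ∉ A.edgeSet → e ≠ s(x, y) → L e = q (L₂ e) ∧ R e = q (R₂ e) := by
    intro e h h'
    simp [L, R, h, h']
  refine ⟨ι₁ ⊕ ι₂, L, R, ?_, ?_⟩
  · intro c
    have : delta (A ⊔ B) L R c = delta A L₁ R₁ (c ∘ .inl) + delta B L₂ R₂ (c ∘ q) := by
      ext e
      simp only [delta, SimpleGraph.edgeSet_sup, Set.mem_union, Pi.add_apply, Function.comp]
      by_cases h0 : e = s(x, y)
      · subst h0
        have hA' : s(x, y) ∈ A.edgeSet := hxA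
        have hB' : s(x, y) ∈ B.edgeSet := hxB
        simp only [hA', hB', true_or, if_true, L, R, ← ha₁, ← ha₂, ← hb₁, ← hb₂, hq]
        have := CharTwo.add_self_eq_zero (c (Sum.inl a₁))
        linear_combination -this
      · by_cases h1 : e ∈ A.edgeSet
        · simp [h1, hdisj e h1 h0, h0, L, R]
        · simp [h1, h0, L, R]
    rw [this]
    exact Submodule.add_mem _ (cyc_mono le_sup_left (h₁.mem _)) (cyc_mono le_sup_right (h₂.mem _))
  · intro z hz
    set s₀ := s(x, y) with hs₀
    have hsA : s₀ ∈ A.edgeSet := hxA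
    have hsB : s₀ ∈ B.edgeSet := hxB
    have hzz : z = part A {s₀} z + part B {s₀} z + Pi.single s₀ (z s₀) := by
      ext e
      simp only [part, Pi.add_apply, Set.mem_singleton_iff]
      by_cases h0 : e = s₀
      · simp [h0]
      · by_cases h1 : e ∈ A.edgeSet
        · simp [h1, hdisj e h1 h0, h0]
        · by_cases h2 : e ∈ B.edgeSet
          · simp [h1, h2, h0]
          · simp only [h0, h1, h2, false_and, if_false, add_zero, zero_add, ne_eq,
              not_false_eq_true, Pi.single_eq_of_ne]
            exact hz.1 e (by simp [h1, h2])
    have hpA : ∀ e, e ∉ A.edgeSet → part A {s₀} z e = 0 := fun e he => by simp [part, he]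
    have hpB : ∀ e, e ∉ B.edgeSet → part B {s₀} z e = 0 := fun e he => by simp [part, he]
    have hbz : bd (part A {s₀} z) + bd (part B {s₀} z) + bd (Pi.single s₀ (z s₀)) = 0 := by
      rw [← map_add, ← map_add, ← hzz, hz.2]
    have hsum : ∀ u, u ≠ x → u ≠ y → bd (part A {s₀} z) u + bd (part B {s₀} z) u = 0 := by
      intro u hu hu'
      have := congrFun hbz u
      rw [bd_single hxy] at this
      simpa [hu, hu'] using this
    have hA1 := split_bd hxy hAB hpA hpB hsum
    have hB1 := split_bd hxy (fun u h h' => hAB u h' h) hpB hpA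
      (fun u h h' => by rw [add_comm]; exact hsum u h h')
    set t₁ := bd (part A {s₀} z) x
    set t₂ := bd (part B {s₀} z) x
    have ht : t₁ + t₂ + z s₀ = 0 := by
      have := congrFun hbz x
      rw [bd_single hxy] at this
      simpa [hxy] using this
    have hcA : part A {s₀} z + Pi.single s₀ t₁ ∈ cyc A := by
      refine ⟨fun e he => ?_, ?_⟩
      · have : e ≠ s₀ := by rintro rfl; exact he hsA
        simp [hpA e he, this]
      · rw [map_add, hA1, fun_add_self]
    have hcB : part B {s₀} z + Pi.single s₀ t₂ ∈ cyc B := by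
      refine ⟨fun e he => ?_, ?_⟩
      · have : e ≠ s₀ := by rintro rfl; exact he hsB
        simp [hpB e he, this]
      · rw [map_add, hB1, fun_add_self]
    obtain ⟨c₁, hc₁⟩ := h₁.surj _ hcA
    obtain ⟨c₂, hc₂⟩ := h₂.surj _ hcB
    let c : ι₁ ⊕ ι₂ → ZMod 2 := Sum.elim c₁ (fun i => c₂ i + c₂ a₂ + c₁ a₁)
    have hcq : ∀ i, c (q i) = c₂ i + c₂ a₂ + c₁ a₁ := by
      intro i
      by_cases hi : i = a₂
      · subst hi
        simp only [q, if_true, c, Sum.elim_inl]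
        have := CharTwo.add_self_eq_zero (c₂ a₂)
        linear_combination -this
      · simp [q, hi, c]
    refine ⟨c, fun e he => ?_⟩
    by_cases h0 : e = s₀
    · subst h0
      rw [hL0, hR0, hcq]
      have e1 := hc₁ s₀ hsA
      have e2 := hc₂ s₀ hsB
      rw [← ha₁, ← hb₁] at e1
      rw [← ha₂, ← hb₂] at e2
      simp only [part, Pi.add_apply, Set.mem_singleton_iff, not_true_eq_false, and_false, if_false,
        Pi.single_eq_same, zero_add] at e1 e2
      simp only [c, Sum.elim_inl]
      have e3 := CharTwo.add_self_eq_zero (z s₀)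
      linear_combination e3 + e1 + e2 - ht
    · by_cases h1 : e ∈ A.edgeSet
      · have := hc₁ e h1
        rw [(hLA e h1 h0).1, (hLA e h1 h0).2]
        simp only [c, Sum.elim_inl, ← this]
        simp [part, h1, h0]
      · have h2 : e ∈ B.edgeSet := by
          rw [SimpleGraph.edgeSet_sup] at he
          exact he.resolve_left h1
        have := hc₂ e h2
        rw [(hLB e h1 h0).1, (hLB e h1 h0).2, hcq, hcq]
        have e4 := CharTwo.add_self_eq_zero (c₂ a₂)
        have e5 := CharTwo.add_self_eq_zero (c₁ a₁)
        have e6 : (part B {s₀} z + Pi.single s₀ t₂ : Sym2 V → ZMod 2) e = z e := by simp [part, h2, h0]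
        rw [e6] at this
        linear_combination this - e4 - e5

/-- An edge joining two vertices on the boundary of the face `o` can be drawn inside that face,
splitting it in two along a chain `P` of boundary edges. One of the two halves is called `o'`;
the remaining clauses record which edges still have `o'` on a side. -/
lemma IsDual.addEdge {ι : Type} {G : SimpleGraph V} {L R : Sym2 V → ι} (hd : IsDual G L R)
    {o : ι} {u v : V} (huv : u ≠ v) (hnadj : ¬ G.Adj u v) {P : Sym2 V → ZMod 2}
    (hP : ∀ e, P e ≠ 0 → e ∈ G.edgeSet ∧ (L e = o ∨ R e = o))
    (hbd : bd P = Pi.single u 1 + Pi.single v 1) :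
    ∃ (L' R' : Sym2 V → Option ι), IsDual (G ⊔ SimpleGraph.edge u v) L' R' ∧
      (∀ e ∈ G.edgeSet, P e = 0 → (L e = o ∨ R e = o) → (L' e = some o ∨ R' e = some o)) ∧
      (∀ e ∈ G.edgeSet, L e = o → R e = o → (L' e = some o ∨ R' e = some o)) ∧
      L' s(u, v) = some o := by
  have hn : s(u, v) ∉ G.edgeSet := hnadj
  have hPuv : P s(u, v) = 0 := by
    by_contra h
    exact hn (hP _ h).1
  have hP0 : ∀ e, e ∉ G.edgeSet → P e = 0 := by
    intro e he; by_contra h; exact he (hP e h).1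
  have hPone : ∀ e, P e ≠ 0 → P e = 1 := by
    intro e; generalize P e = t; revert t; decide
  let L' : Sym2 V → Option ι := fun e => if e = s(u, v) then some o else
    if P e ≠ 0 ∧ L e = o then none else some (L e)
  let R' : Sym2 V → Option ι := fun e => if e = s(u, v) then none else
    if P e ≠ 0 ∧ L e ≠ o then none else some (R e)
  have hQ : P + Pi.single s(u, v) 1 ∈ cyc (G ⊔ SimpleGraph.edge u v) := by
    refine ⟨fun e he => ?_, by rw [map_add, hbd, bd_single huv, fun_add_self]⟩
    rw [mem_sup_edge huv, not_or] at he
    simp [hP0 e he.1, he.2]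
  refine ⟨L', R', ⟨?_, ?_⟩, ?_, ?_, ?_⟩
  · intro c
    have : delta (G ⊔ SimpleGraph.edge u v) L' R' c = delta G L R (c ∘ some) +
        (c none + c (some o)) • (P + Pi.single s(u, v) 1) := by
      ext e
      simp only [delta, mem_sup_edge huv, Pi.add_apply, Pi.smul_apply, smul_eq_mul, Function.comp]
      by_cases h0 : e = s(u, v)
      · subst h0
        simp only [hn, or_true, if_true, if_false, L', R', hPuv, Pi.single_eq_same]
        ring
      · by_cases h1 : e ∈ G.edgeSet
        · simp only [h1, h0, true_or, if_true, if_false, L', R', ne_eq, not_false_eq_true,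
            Pi.single_eq_of_ne, add_zero]
          by_cases h2 : P e = 0
          · simp [h2]
          · have h3 := CharTwo.add_self_eq_zero (c (some o))
            by_cases h4 : L e = o
            · simp only [h2, h4, not_false_eq_true, and_self, not_true_eq_false,
                and_false, if_true, if_false]
              rw [hPone e h2]
              linear_combination -h3
            · have h5 : R e = o := (hP e h2).2.resolve_left h4
              simp only [h2, h4, h5, not_false_eq_true, and_self,
                and_false, if_true, if_false]
              rw [hPone e h2]
              linear_combination -h3
        · simp [h1, h0, hP0 e h1]
    rw [this]
    exact Submodule.add_mem _ (cyc_mono le_sup_left (hd.mem _)) (Submodule.smul_mem _ _ hQ)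
  · intro z hz
    have hz' : z + z s(u, v) • (P + Pi.single s(u, v) 1) ∈ cyc G := by
      have h1 := Submodule.add_mem _ hz (Submodule.smul_mem _ (z s(u, v)) hQ)
      refine ⟨fun e he => ?_, h1.2⟩
      by_cases h0 : e = s(u, v)
      · subst h0
        simp only [Pi.add_apply, Pi.smul_apply, hPuv, Pi.single_eq_same, smul_eq_mul]
        rw [zero_add, mul_one]
        exact CharTwo.add_self_eq_zero _
      · exact h1.1 e (by rw [mem_sup_edge huv]; tauto)
    obtain ⟨c, hc⟩ := hd.surj _ hz'
    let c' : Option ι → ZMod 2 := fun i => i.elim (c o + z s(u, v)) c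
    have c'n : c' none = c o + z s(u, v) := rfl
    have c's : ∀ i, c' (some i) = c i := fun i => rfl
    refine ⟨c', fun e he => ?_⟩
    have h3 := CharTwo.add_self_eq_zero (c o)
    by_cases h0 : e = s(u, v)
    · subst h0
      simp only [L', R', if_true, c'n, c's]
      linear_combination -h3
    · rw [mem_sup_edge huv] at he
      have h1 := he.resolve_right h0
      have h2 := hc e h1
      simp only [Pi.add_apply, Pi.smul_apply, smul_eq_mul, Pi.single_eq_of_ne h0, add_zero] at h2
      have h6 := CharTwo.add_self_eq_zero (z s(u, v))
      by_cases h4 : P e = 0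
      · simp only [L', R', h0, h4, if_false, ne_eq, not_true_eq_false, false_and, c's]
        rw [h4] at h2
        linear_combination h2
      · rw [hPone e h4] at h2
        by_cases h5 : L e = o
        · rw [h5] at h2
          simp only [L', R', h0, h4, h5, if_false, ne_eq, not_false_eq_true, and_self,
            not_true_eq_false, and_false, if_true, c's, c'n]
          linear_combination h2 - h6
        · have h7 : R e = o := (hP e h4).2.resolve_left h5
          rw [h7] at h2
          simp only [L', R', h0, h4, h5, if_false, ne_eq, not_false_eq_true, and_self,
            and_false, if_true, c's, c'n]
          linear_combination h2 - h6
  · intro e he hPe h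
    have h0 : e ≠ s(u, v) := by rintro rfl; exact hn he
    simpa [L', R', h0, hPe] using h
  · intro e he h1 h2
    have h0 : e ≠ s(u, v) := by rintro rfl; exact hn he
    right
    simp [R', h0, h1, h2]
  · simp [L']

lemma IsDual.hasDual {ι : Type} {G : SimpleGraph V} {L R : Sym2 V → ι} (hd : IsDual G L R) :
    HasDual G := ⟨ι, L, R, hd⟩

/-- A pendant edge at a new vertex `x` drawn inside the face `o`. -/
lemma IsDual.pendant {ι : Type} {G : SimpleGraph V} {L R : Sym2 V → ι} (hd : IsDual G L R)
    (o : ι) {x p : V} (hxp : x ≠ p) (hx : x ∉ G.support) :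
    ∃ (L' R' : Sym2 V → ι), IsDual (G ⊔ SimpleGraph.edge x p) L' R' ∧
      (∀ e ∈ G.edgeSet, L' e = L e ∧ R' e = R e) ∧ L' s(x, p) = o ∧ R' s(x, p) = o := by
  have hn : s(x, p) ∉ G.edgeSet := fun h => hx ⟨p, h⟩
  have hne : ∀ e ∈ G.edgeSet, e ≠ s(x, p) := by rintro e he rfl; exact hn he
  refine ⟨fun e => if e = s(x, p) then o else L e, fun e => if e = s(x, p) then o else R e,
    ⟨?_, ?_⟩, ?_, ?_, ?_⟩
  · intro c
    have : delta (G ⊔ SimpleGraph.edge x p) (fun e => if e = s(x, p) then o else L e)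
        (fun e => if e = s(x, p) then o else R e) c = delta G L R c := by
      ext e
      simp only [delta, mem_sup_edge hxp]
      by_cases h0 : e = s(x, p)
      · subst h0
        simp only [or_true, if_true, hn, if_false]
        exact CharTwo.add_self_eq_zero _
      · simp [h0]
    rw [this]
    exact cyc_mono le_sup_left (hd.mem c)
  · intro z hz
    have hzx : z s(x, p) = 0 := by
      have := congrFun hz.2 x
      rw [bd_apply, Finset.sum_eq_single p] at this
      · exact this
      · intro v _ hv
        apply hz.1
        rw [mem_sup_edge hxp, not_or]
        refine ⟨fun h => hx ⟨v, h⟩, fun h => hv ?_⟩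
        rwa [Sym2.congr_right] at h
      · simp
    have hz' : z ∈ cyc G := by
      refine ⟨fun e he => ?_, hz.2⟩
      by_cases h0 : e = s(x, p)
      · rw [h0, hzx]
      · exact hz.1 e (by rw [mem_sup_edge hxp]; tauto)
    obtain ⟨c, hc⟩ := hd.surj z hz'
    refine ⟨c, fun e he => ?_⟩
    by_cases h0 : e = s(x, p)
    · subst h0
      simp only [if_true, hzx]
      exact (CharTwo.add_self_eq_zero _).symm
    · rw [mem_sup_edge hxp] at he
      simp only [h0, if_false]
      exact hc e (he.resolve_right h0)
  · intro e he
    simp [hne e he]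
  · simp
  · simp

lemma isDual_bot {ι : Type} (L R : Sym2 V → ι) : IsDual (⊥ : SimpleGraph V) L R := by
  refine ⟨fun c => ⟨fun e _ => by simp [delta], ?_⟩, fun z hz => ⟨0, fun e he => by simp at he⟩⟩
  have : delta (⊥ : SimpleGraph V) L R c = 0 := by ext e; simp [delta]
  rw [this, map_zero]

end Glue

end PlanarAdd

namespace PlanarAdd

open scoped Classical
open Finset

/-! ### Connectivity and the faces of 2-connected graphs -/

section TwoConn

variable {V : Type} [Fintype V]

/-- `G[W]` is connected (or `W` is empty): no proper nonempty subset of `W` is closed under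
adjacency. -/
def Conn (G : SimpleGraph V) (W : Finset V) : Prop :=
  ∀ A ⊆ W, A.Nonempty → (∀ a ∈ A, ∀ b ∈ W, G.Adj a b → b ∈ A) → A = W

/-- All edges of `G` have their ends in `W`. -/
def On (G : SimpleGraph V) (W : Finset V) : Prop := ∀ u v, G.Adj u v → u ∈ W

lemma On.right {G : SimpleGraph V} {W : Finset V} (h : On G W) {u v : V} (huv : G.Adj u v) :
    v ∈ W := h v u huv.symm

lemma Conn.connected {G : SimpleGraph V} {W : Finset V} (h : Conn G W) (hW : W.Nonempty) :
    (G.induce (W : Set V)).Connected := by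
  obtain ⟨x, hx⟩ := hW
  have key := h (W.filter fun w => ∃ hw : w ∈ (W : Set V),
    (G.induce (W : Set V)).Reachable ⟨x, hx⟩ ⟨w, hw⟩) (Finset.filter_subset _ _)
    ⟨x, by simp [hx]⟩ (by
      intro a ha b hb hab
      rw [Finset.mem_filter] at ha ⊢
      obtain ⟨_, ha', hr⟩ := ha
      refine ⟨hb, hb, hr.trans (SimpleGraph.Adj.reachable ?_)⟩
      exact hab)
  have : ∀ w : (W : Set V), (G.induce (W : Set V)).Reachable ⟨x, hx⟩ w := by
    rintro ⟨w, hw⟩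
    have hw' : w ∈ W := hw
    rw [← key, Finset.mem_filter] at hw'
    exact hw'.2.2
  haveI hne : Nonempty (W : Set V) := ⟨⟨x, hx⟩⟩
  exact ⟨fun u v => (this u).symm.trans (this v)⟩

lemma Conn.of_connected {G : SimpleGraph V} {W : Finset V}
    (h : (G.induce (W : Set V)).Preconnected) : Conn G W := by
  intro A hA ⟨x, hx⟩ hcl
  refine Finset.Subset.antisymm hA fun y hy => ?_
  obtain ⟨p⟩ := h ⟨x, hA hx⟩ ⟨y, hy⟩
  have : ∀ (u v : (W : Set V)), (G.induce (W : Set V)).Walk u v → u.1 ∈ A → v.1 ∈ A := by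
    intro u v p
    induction p with
    | nil => exact id
    | @cons a b c hab p ih => exact fun ha => ih (hcl _ ha _ b.2 hab)
  exact this _ _ p hx

/-- A path inside a connected set, as a chain. -/
lemma Conn.chain {G : SimpleGraph V} {W : Finset V} (h : Conn G W) {u v : V} (hu : u ∈ W)
    (hv : v ∈ W) : ∃ z : Sym2 V → ZMod 2,
      (∀ e, z e ≠ 0 → ∃ a b, e = s(a, b) ∧ a ∈ W ∧ b ∈ W ∧ G.Adj a b) ∧
      bd z = Pi.single u 1 + Pi.single v 1 := by
  refine exists_tjoin (h.connected ⟨u, hu⟩) _ ?_ ?_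
  · intro w hw
    have h1 : w ≠ u := by rintro rfl; exact hw hu
    have h2 : w ≠ v := by rintro rfl; exact hw hv
    simp [h1, h2]
  · simp only [Pi.add_apply, Finset.sum_add_distrib]
    rw [sum_single_mem, sum_single_mem, if_pos (by exact hu), if_pos (by exact hv)]
    decide

lemma Conn.reachable {G : SimpleGraph V} {W : Finset V} (h : Conn G W) {u v : V} (hu : u ∈ W)
    (hv : v ∈ W) : G.Reachable u v := by
  obtain ⟨z, h1, h2⟩ := h.chain hu hv
  refine reachable_of_chain (fun e he => ?_) h2
  by_contra hne
  obtain ⟨a, b, rfl, _, _, hab⟩ := h1 e hne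
  exact he hab

/-- `G[W]` is connected and has no cut vertex. -/
def TwoConn (G : SimpleGraph V) (W : Finset V) : Prop :=
  Conn G W ∧ ∀ x ∈ W, Conn G (W.erase x)

lemma Conn.exists_adj {G : SimpleGraph V} {W : Finset V} (h : Conn G W) (hW : 2 ≤ W.card)
    {u : V} (hu : u ∈ W) : ∃ v ∈ W, G.Adj u v := by
  by_contra hcon
  push Not at hcon
  have := h {u} (by simpa using hu) ⟨u, by simp⟩ (by
    intro a ha b hb hab
    rw [Finset.mem_singleton] at ha
    subst ha
    exact absurd hab (hcon b hb))
  rw [← this] at hW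
  simp at hW

/-- Restriction of a chain to a set of edges. -/
noncomputable def restr (X : Set (Sym2 V)) (z : Sym2 V → ZMod 2) : Sym2 V → ZMod 2 :=
  fun e => if e ∈ X then z e else 0

/-- The cycle matroid of a 2-connected graph is connected. -/
lemma TwoConn.matroid_conn {G : SimpleGraph V} {W : Finset V} (h : TwoConn G W) (hon : On G W)
    (X : Set (Sym2 V)) (hX : ∀ z ∈ cyc G, restr X z ∈ cyc G) :
    (∀ e ∈ G.edgeSet, e ∈ X) ∨ (∀ e ∈ G.edgeSet, e ∉ X) := by
  by_contra hcon
  push Not at hcon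
  obtain ⟨⟨e₁, he₁, hX₁⟩, ⟨e₂, he₂, hX₂⟩⟩ := hcon
  have hx : ∃ x a b, G.Adj x a ∧ s(x, a) ∈ X ∧ G.Adj x b ∧ s(x, b) ∉ X := by
    by_contra hno
    push Not at hno
    induction e₁ with
    | h p q =>
    induction e₂ with
    | h r s =>
      have key := h.1 (W.filter fun w => ∃ a, G.Adj w a ∧ s(w, a) ∈ X) (Finset.filter_subset _ _)
        ⟨r, by rw [Finset.mem_filter]; exact ⟨hon _ _ he₂, s, he₂, hX₂⟩⟩ (by
          intro a ha b hb hab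
          rw [Finset.mem_filter] at ha ⊢
          obtain ⟨_, c, hc, hcX⟩ := ha
          refine ⟨hb, a, hab.symm, ?_⟩
          rw [Sym2.eq_swap]
          exact hno a c b hc hcX hab)
      have hp : p ∈ W := hon _ _ he₁
      rw [← key, Finset.mem_filter] at hp
      obtain ⟨_, a, ha, haX⟩ := hp
      exact hX₁ (hno p a q ha haX he₁)
  obtain ⟨x, a, b, hxa, haX, hxb, hbX⟩ := hx
  have hab : a ≠ b := by rintro rfl; exact hbX haX
  obtain ⟨z, hz, hzb⟩ := (h.2 x (hon _ _ hxa)).chain (u := a) (v := b)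
    (Finset.mem_erase.2 ⟨hxa.ne', hon.right hxa⟩) (Finset.mem_erase.2 ⟨hxb.ne', hon.right hxb⟩)
  have hzx : ∀ v, z s(x, v) = 0 := by
    intro v
    by_contra hne
    obtain ⟨c, d, he, hc, hd, _⟩ := hz _ hne
    rw [Sym2.eq_iff] at he
    rcases he with ⟨rfl, _⟩ | ⟨rfl, _⟩
    · exact Finset.notMem_erase _ _ hc
    · exact Finset.notMem_erase _ _ hd
  have hcyc : z + (Pi.single s(x, a) 1 + Pi.single s(x, b) 1) ∈ cyc G := by
    refine ⟨fun e he => ?_, ?_⟩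
    · have h1 : e ≠ s(x, a) := by rintro rfl; exact he hxa
      have h2 : e ≠ s(x, b) := by rintro rfl; exact he hxb
      have h3 : z e = 0 := by
        by_contra hne
        obtain ⟨c, d, rfl, _, _, hcd⟩ := hz _ hne
        exact he hcd
      simp [h1, h2, h3]
    · rw [map_add, map_add, bd_single hxa.ne, bd_single hxb.ne, hzb]
      ext w
      simp only [Pi.add_apply, Pi.zero_apply]
      generalize (Pi.single a 1 : V → ZMod 2) w = p
      generalize (Pi.single b 1 : V → ZMod 2) w = q
      generalize (Pi.single x 1 : V → ZMod 2) w = r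
      revert p q r; decide
  have := congrFun (hX _ hcyc).2 x
  rw [bd_apply, Finset.sum_eq_single a] at this
  · have hne : s(x, a) ≠ s(x, b) := by rwa [Ne, Sym2.congr_right]
    simp [restr, haX, hzx, hne] at this
  · intro v _ hv
    simp only [restr]
    split_ifs with hvX
    · have h1 : s(x, v) ≠ s(x, a) := by rwa [Ne, Sym2.congr_right]
      have h2 : s(x, v) ≠ s(x, b) := by rintro h; rw [h] at hvX; exact hbX hvX
      simp [hzx, h1, h2]
    · rfl
  · simp

variable {ι : Type} {G : SimpleGraph V} {W : Finset V} {L R : Sym2 V → ι}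

lemma TwoConn.ne (h : TwoConn G W) (hon : On G W) (hW : 3 ≤ W.card) (hd : IsDual G L R)
    {e : Sym2 V} (he : e ∈ G.edgeSet) : L e ≠ R e := by
  intro heq
  have := h.matroid_conn hon {e} (by
    intro z hz
    obtain ⟨c, rfl⟩ := hd.eq_delta hz
    have : restr {e} (delta G L R c) = 0 := by
      ext e'
      simp only [restr, Set.mem_singleton_iff, Pi.zero_apply]
      split_ifs with h
      · subst h
        rw [delta_of_mem he, heq]
        exact CharTwo.add_self_eq_zero _
      · rfl
    rw [this]
    exact Submodule.zero_mem _)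
  rcases this with h1 | h1
  · induction e with
    | h a b =>
      have key := h.1 {a, b} (by
        intro w hw
        simp only [Finset.mem_insert, Finset.mem_singleton] at hw
        rcases hw with rfl | rfl
        · exact hon _ _ he
        · exact hon.right he) ⟨a, by simp⟩ (by
        intro c _ d _ hcd
        have := h1 s(d, c) hcd.symm
        rw [Set.mem_singleton_iff, Sym2.eq_iff] at this
        simp only [Finset.mem_insert, Finset.mem_singleton]
        tauto)
      rw [← key] at hW
      have := Finset.card_le_two (a := a) (b := b)
      omega
  · exact h1 e he rfl

lemma zmod2_cases (t : ZMod 2) : t = 0 ∨ t = 1 := by revert t; decide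

/-- The dual of a 2-connected graph is connected. -/
lemma TwoConn.const (h : TwoConn G W) (hon : On G W) (hd : IsDual G L R) (c : ι → ZMod 2)
    (hc : ∀ e ∈ G.edgeSet, c (L e) = c (R e)) :
    ∀ i ∈ faces G L R, ∀ j ∈ faces G L R, c i = c j := by
  have := h.matroid_conn hon {e | c (L e) = 1} (by
    intro z hz
    obtain ⟨s, rfl⟩ := hd.eq_delta hz
    have : restr {e | c (L e) = 1} (delta G L R s)
        = delta G L R (fun i => s i * c i) := by
      ext e
      simp only [restr, Set.mem_setOf_eq]
      by_cases he : e ∈ G.edgeSet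
      · rw [delta_of_mem he, delta_of_mem he, ← hc e he]
        rcases zmod2_cases (c (L e)) with h | h <;> simp [h]
      · simp [delta, he]
    rw [this]
    exact hd.mem _)
  have h2 : ∃ t, ∀ i ∈ faces G L R, c i = t := by
    rcases this with h1 | h1
    · refine ⟨1, fun i hi => ?_⟩
      obtain ⟨e, he, rfl | rfl⟩ := mem_faces.1 hi
      · exact h1 e he
      · rw [← hc e he]; exact h1 e he
    · refine ⟨0, fun i hi => ?_⟩
      have h3 : ∀ e ∈ G.edgeSet, c (L e) = 0 :=
        fun e he => (zmod2_cases _).resolve_right (h1 e he)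
      obtain ⟨e, he, rfl | rfl⟩ := mem_faces.1 hi
      · exact h3 e he
      · rw [← hc e he]; exact h3 e he
  obtain ⟨t, ht⟩ := h2
  intro i hi j hj
  rw [ht i hi, ht j hj]

/-- Face boundaries of a 2-connected graph are circuits. -/
lemma TwoConn.circuit (h : TwoConn G W) (hon : On G W) (hd : IsDual G L R) (o : ι)
    {y : Sym2 V → ZMod 2} (hy : y ∈ cyc G) (hne : y ≠ 0)
    (hle : ∀ e, y e ≠ 0 → star G L R o e ≠ 0) : y = star G L R o := by
  have hnorm : ∀ z ∈ cyc G, ∃ c : ι → ZMod 2, z = delta G L R c ∧ c o = 0 := by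
    intro z hz
    obtain ⟨c, rfl⟩ := hd.eq_delta hz
    refine ⟨fun i => c i + c o, ?_, CharTwo.add_self_eq_zero _⟩
    ext e
    simp only [delta]
    split_ifs
    · have := CharTwo.add_self_eq_zero (c o)
      linear_combination -this
    · rfl
  obtain ⟨s, rfl, hs⟩ := hnorm y hy
  have hone : ∀ t : ZMod 2, t ≠ 0 → t = 1 := by decide
  have hedge : ∀ e ∈ G.edgeSet, s (L e) ≠ s (R e) → (L e = o ∨ R e = o) := by
    intro e he hsne
    refine (star_ne (hle e ?_)).2
    rw [delta_of_mem he]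
    intro h0
    exact hsne (zmod2_eq_of_add h0)
  have := h.matroid_conn hon {e | s (L e) = 1 ∨ s (R e) = 1} (by
    intro z hz
    obtain ⟨c, rfl, hc⟩ := hnorm z hz
    have : restr {e | s (L e) = 1 ∨ s (R e) = 1} (delta G L R c)
        = delta G L R (fun i => c i * s i) := by
      ext e
      simp only [restr, Set.mem_setOf_eq]
      by_cases he : e ∈ G.edgeSet
      · rw [delta_of_mem he, delta_of_mem he]
        have h1 := hedge e he
        rcases zmod2_cases (s (L e)) with h | h <;> rcases zmod2_cases (s (R e)) with h' | h'
        · simp [h, h']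
        · have h2 : L e = o := by
            rcases h1 (by rw [h, h']; decide) with h2 | h2
            · exact h2
            · rw [h2, hs] at h'; exact absurd h' (by decide)
          simp [h, h', h2, hc]
        · have h2 : R e = o := by
            rcases h1 (by rw [h, h']; decide) with h2 | h2
            · rw [h2, hs] at h; exact absurd h (by decide)
            · exact h2
          simp [h, h', h2, hc]
        · simp [h, h']
      · simp [delta, he]
    rw [this]
    exact hd.mem _)
  rcases this with h1 | h1
  · ext e
    by_cases he : e ∈ G.edgeSet
    · by_cases hst : star G L R o e = 0
      · by_contra hcon
        exact hle e (fun h => hcon (by rw [h, hst])) hst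
      · rw [hone _ hst, delta_of_mem he]
        have h2 := h1 e he
        simp only [Set.mem_setOf_eq] at h2
        have h3 := hst
        rw [star, delta_of_mem he] at h3
        by_cases hL : L e = o
        · have hR : R e ≠ o := by
            intro hR
            rw [hL, hR] at h3
            exact h3 (CharTwo.add_self_eq_zero _)
          rw [hL, hs] at h2 ⊢
          rw [h2.resolve_left (by decide), zero_add]
        · have hR : R e = o := (star_ne hst).2.resolve_left hL
          rw [hR, hs] at h2 ⊢
          rw [h2.resolve_right (by decide), add_zero]
    · simp [star, delta, he]
  · exfalso
    apply hne
    ext e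
    by_cases he : e ∈ G.edgeSet
    · have h2 := h1 e he
      simp only [Set.mem_setOf_eq, not_or] at h2
      rw [delta_of_mem he, (zmod2_cases _).resolve_right h2.1,
        (zmod2_cases _).resolve_right h2.2]
      rfl
    · simp [delta, he]

/-- The graph formed by the boundary edges of the face `o`. -/
def faceGraph (G : SimpleGraph V) (L R : Sym2 V → ι) (o : ι) : SimpleGraph V where
  Adj u v := star G L R o s(u, v) ≠ 0
  symm.symm u v h := by rw [Sym2.eq_swap]; exact h
  loopless.irrefl u h := by simp [star, delta] at h

lemma faceGraph_adj {o : ι} {u v : V} :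
    (faceGraph G L R o).Adj u v ↔ star G L R o s(u, v) ≠ 0 := Iff.rfl

lemma TwoConn.face_reachable (h : TwoConn G W) (hon : On G W) (hd : IsDual G L R) (o : ι)
    {u v u' v' : V} (hu : (faceGraph G L R o).Adj u u') (hv : (faceGraph G L R o).Adj v v') :
    (faceGraph G L R o).Reachable u v := by
  by_contra hcon
  set F := faceGraph G L R o with hF
  let y : Sym2 V → ZMod 2 := fun e => if ∃ a ∈ e, F.Reachable u a then star G L R o e else 0
  have hyF : ∀ a b, F.Reachable u a → y s(a, b) = star G L R o s(a, b) := by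
    intro a b ha
    simp only [y]
    rw [if_pos ⟨a, by simp, ha⟩]
  have hyN : ∀ a b, ¬ F.Reachable u a → y s(a, b) = 0 := by
    intro a b ha
    simp only [y]
    split_ifs with hx
    · obtain ⟨c, hc, hr⟩ := hx
      by_contra hne
      have hab : F.Adj a b := hne
      rw [Sym2.mem_iff] at hc
      rcases hc with rfl | rfl
      · exact ha hr
      · exact ha (hr.trans hab.symm.reachable)
    · rfl
  have hy : y ∈ cyc G := by
    refine ⟨fun e he => ?_, ?_⟩
    · simp only [y]
      split_ifs
      · simp [star, delta, he]
      · rfl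
    · ext a
      rw [bd_apply]
      by_cases ha : F.Reachable u a
      · rw [Finset.sum_congr rfl fun b _ => hyF a b ha, ← bd_apply,
          (show star G L R o ∈ cyc G from hd.mem _).2]
      · exact Finset.sum_eq_zero fun b _ => hyN a b ha
  have h1 := h.circuit hon hd o hy (by
    intro h0
    have := congrFun h0 s(u, u')
    rw [hyF u u' (Reachable.refl _)] at this
    exact hu this) (by
    intro e he
    simp only [y] at he
    split_ifs at he with hx
    · exact he
    · exact absurd rfl he)
  have h2 := congrFun h1 s(v, v')
  rw [hyN v v' hcon] at h2
  exact hv h2.symm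

lemma star_ne_zero {o : ι} {e : Sym2 V} (he : e ∈ G.edgeSet) (hne : L e ≠ R e)
    (ho : L e = o ∨ R e = o) : star G L R o e ≠ 0 := by
  rw [star, delta_of_mem he]
  rcases ho with rfl | rfl
  · simp [hne.symm]
  · simp [hne]

/-- Two vertices on a common face of a 2-connected graph can be joined by an edge. -/
lemma TwoConn.addable (h : TwoConn G W) (hon : On G W) (hd : IsDual G L R) (o : ι)
    {u v u' v' : V} (hu : (faceGraph G L R o).Adj u u') (hv : (faceGraph G L R o).Adj v v')
    (huv : u ≠ v) : HasDual (G ⊔ SimpleGraph.edge u v) := by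
  by_cases hadj : G.Adj u v
  · have : G ⊔ SimpleGraph.edge u v = G := by
      rw [sup_eq_left, SimpleGraph.edge_le_iff]
      exact Or.inr hadj
    rw [this]
    exact hd.hasDual
  · obtain ⟨P, hP, hPb⟩ := exists_chain_of_reachable (h.face_reachable hon hd o hu hv)
    obtain ⟨L', R', hd', _⟩ := hd.addEdge (o := o) huv hadj (P := P) (by
      intro e he
      apply star_ne (i := o)
      by_contra h0
      apply he
      apply hP
      induction e with
      | h a b => exact fun hab => hab h0) hPb
    exact hd'.hasDual

/-- The vertices of `I` are pairwise non-addable. -/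
def NonAdd (G : SimpleGraph V) (I : Finset V) : Prop :=
  ∀ u ∈ I, ∀ v ∈ I, u ≠ v → ¬ HasDual (G ⊔ SimpleGraph.edge u v)

/-- In a 2-connected graph pairwise non-addable vertices lie on disjoint sets of faces, each of
size at least two, so Euler's formula bounds their number. -/
lemma TwoConn.nonAdd_bound (h : TwoConn G W) (hon : On G W) (hW : 3 ≤ W.card)
    (hG : HasDual G) {I : Finset V} (hI : I ⊆ W) (hna : NonAdd G I) :
    2 * I.card + W.card ≤ G.edgeSet.ncard + 2 := by
  obtain ⟨ι, L, R, hd⟩ := hG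
  have hedge : ∀ w : V, ∃ e : Sym2 V, w ∈ W → w ∈ e ∧ e ∈ G.edgeSet := by
    intro w
    by_cases hw : w ∈ W
    · obtain ⟨v, _, hwv⟩ := h.1.exists_adj (by omega) hw
      exact ⟨s(w, v), fun _ => ⟨by simp, hwv⟩⟩
    · exact ⟨s(w, w), fun h => absurd h hw⟩
  choose ed hed using hedge
  have htouch : ∀ w ∈ W, ∀ i, (L (ed w) = i ∨ R (ed w) = i) →
      ∃ w', (faceGraph G L R i).Adj w w' := by
    intro w hw i hi
    obtain ⟨h1, h2⟩ := hed w hw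
    obtain ⟨w', hw'⟩ := h1
    refine ⟨w', ?_⟩
    rw [faceGraph_adj, ← hw']
    exact star_ne_zero h2 (h.ne hon hW hd h2) hi
  have h1 : ∑ w ∈ I, #({L (ed w), R (ed w)} : Finset ι) ≤ (faces G L R).card := by
    rw [← Finset.card_biUnion]
    · apply Finset.card_le_card
      intro i hi
      simp only [Finset.mem_biUnion, Finset.mem_insert, Finset.mem_singleton] at hi
      obtain ⟨w, hw, hi⟩ := hi
      exact mem_faces.2 ⟨_, (hed w (hI hw)).2, hi⟩
    · intro u hu v hv huv
      rw [Function.onFun, Finset.disjoint_left]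
      intro i h1 h2
      simp only [Finset.mem_insert, Finset.mem_singleton] at h1 h2
      obtain ⟨u', hu'⟩ := htouch u (hI hu) i (by tauto)
      obtain ⟨v', hv'⟩ := htouch v (hI hv) i (by tauto)
      exact hna u hu v hv huv (h.addable hon hd i hu' hv' huv)
  have h2 : ∑ w ∈ I, #({L (ed w), R (ed w)} : Finset ι) = I.card * 2 := by
    rw [Finset.sum_const_nat]
    intro w hw
    exact Finset.card_pair (h.ne hon hW hd (hed w (hI hw)).2)
  have h3 := card_faces_le hd (h.const hon hd)
  obtain ⟨x, hx⟩ : W.Nonempty := Finset.card_pos.1 (by omega)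
  have h4 := finrank_cyc_le G W x hx (fun w hw => h.1.reachable hw hx)
  omega

end TwoConn

end PlanarAdd

namespace PlanarAdd

open scoped Classical
open Finset

/-! ### Pairwise non-addable vertices in a connected graph -/

section Alpha

variable {V : Type} [Fintype V]

/-- The subgraph of `G` formed by the edges inside `S`. -/
def inn (G : SimpleGraph V) (S : Finset V) : SimpleGraph V where
  Adj u v := G.Adj u v ∧ u ∈ S ∧ v ∈ S
  symm.symm _ _ h := ⟨h.1.symm, h.2.2, h.2.1⟩
  loopless.irrefl _ h := h.1.ne rfl

lemma inn_adj {G : SimpleGraph V} {S : Finset V} {u v : V} :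
    (inn G S).Adj u v ↔ G.Adj u v ∧ u ∈ S ∧ v ∈ S := Iff.rfl

lemma inn_le (G : SimpleGraph V) (S : Finset V) : inn G S ≤ G := fun _ _ h => h.1

lemma on_inn (G : SimpleGraph V) (S : Finset V) : On (inn G S) S := fun _ _ h => h.2.1

lemma edge_adj' {a b u v : V} :
    (SimpleGraph.edge a b).Adj u v ↔ ((u = a ∧ v = b) ∨ (u = b ∧ v = a)) ∧ u ≠ v := by
  rw [SimpleGraph.edge_adj]

lemma sup_edge_of_adj {G : SimpleGraph V} {u v : V} (h : G.Adj u v) :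
    G ⊔ SimpleGraph.edge u v = G := by
  rw [sup_eq_left, SimpleGraph.edge_le_iff]
  exact Or.inr h

lemma hasDual_triangle {x u v : V} (hxu : x ≠ u) (hxv : x ≠ v) (huv : u ≠ v) :
    HasDual (SimpleGraph.edge x u ⊔ SimpleGraph.edge u v ⊔ SimpleGraph.edge x v) := by
  have h0 : IsDual (⊥ : SimpleGraph V) (fun _ => ()) (fun _ => ()) := isDual_bot _ _
  obtain ⟨L₁, R₁, h₁, _⟩ := h0.pendant () hxu (by simp [SimpleGraph.mem_support])
  rw [bot_sup_eq] at h₁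
  obtain ⟨L₂, R₂, h₂, _⟩ := h₁.pendant () (x := v) (p := u) huv.symm (by
    intro hv
    obtain ⟨w, hw⟩ := (SimpleGraph.mem_support _).1 hv
    rw [edge_adj'] at hw
    grind)
  rw [SimpleGraph.edge_comm v u] at h₂
  obtain ⟨L₃, R₃, h₃, _⟩ := h₂.addEdge (o := ()) (P := Pi.single s(x, u) 1 + Pi.single s(u, v) 1)
    hxv (by
      rw [SimpleGraph.sup_adj, edge_adj', edge_adj']
      grind) (by
      intro e he
      refine ⟨?_, Or.inl rfl⟩
      rw [mem_sup_edge huv, SimpleGraph.edgeSet_edge_of_ne hxu]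
      by_contra hcon
      push Not at hcon
      simp only [Set.mem_singleton_iff] at hcon
      simp [hcon.1, hcon.2] at he) (by
      rw [map_add, bd_single hxu, bd_single huv]
      have := fun_add_self (Pi.single u 1 : V → ZMod 2)
      linear_combination this)
  exact h₃.hasDual

lemma On.supp {G : SimpleGraph V} {W : Finset V} (h : On G W) {u : V} (hu : u ∈ G.support) :
    u ∈ W := by
  obtain ⟨v, hv⟩ := hu
  exact h u v hv

lemma On.sup {G H : SimpleGraph V} {W W' U : Finset V} (h : On G W) (h' : On H W') (hW : W ⊆ U)
    (hW' : W' ⊆ U) : On (G ⊔ H) U := by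
  rintro u v (huv | huv)
  · exact hW (h u v huv)
  · exact hW' (h' u v huv)

lemma on_edge {a b : V} : On (SimpleGraph.edge a b) {a, b} := by
  intro u v h
  rw [edge_adj'] at h
  simp only [Finset.mem_insert, Finset.mem_singleton]
  tauto

/-- If `ux` can be added on one side of a cut vertex `x` and `xv` on the other side, then `uv`
can be added. -/
lemma cross_add {G A' B' : SimpleGraph V} {A B : Finset V} {x u v : V}
    (hA : On A' (insert x A)) (hB : On B' (insert x B)) (hAB : Disjoint A B) (hxA : x ∉ A)
    (hxB : x ∉ B) (hG : G ≤ A' ⊔ B') (hu : u ∈ A) (hv : v ∈ B)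
    (h1 : HasDual (A' ⊔ SimpleGraph.edge x u)) (h2 : HasDual (B' ⊔ SimpleGraph.edge x v)) :
    HasDual (G ⊔ SimpleGraph.edge u v) := by
  rw [Finset.disjoint_left] at hAB
  have hxu : x ≠ u := by rintro rfl; exact hxA hu
  have hxv : x ≠ v := by rintro rfl; exact hxB hv
  have huv : u ≠ v := by rintro rfl; exact hAB hu hv
  have hT := hasDual_triangle hxu hxv huv
  have exu : (SimpleGraph.edge x u).Adj x u := by rw [edge_adj']; exact ⟨Or.inl ⟨rfl, rfl⟩, hxu⟩
  have exv : (SimpleGraph.edge x v).Adj x v := by rw [edge_adj']; exact ⟨Or.inl ⟨rfl, rfl⟩, hxv⟩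
  have onT : On (SimpleGraph.edge x u ⊔ SimpleGraph.edge u v ⊔ SimpleGraph.edge x v) {x, u, v} :=
    On.sup (U := {x, u, v}) (On.sup (U := {x, u, v}) on_edge on_edge
      (by intro w; simp; tauto) (by intro w; simp; tauto)) on_edge (subset_refl _)
      (by intro w; simp; tauto)
  have onA : On (A' ⊔ SimpleGraph.edge x u) (insert x A) :=
    On.sup hA on_edge (subset_refl _) (by intro w; simp; rintro (rfl | rfl) <;> simp [hu])
  have onB : On (B' ⊔ SimpleGraph.edge x v) (insert x B) :=
    On.sup hB on_edge (subset_refl _) (by intro w; simp; rintro (rfl | rfl) <;> simp [hv])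
  have h3 := HasDual.sum2 (x := x) (y := u) (by
    intro w hw1 hw2
    have h4 := onA.supp hw1
    have h5 := onT.supp hw2
    simp only [Finset.mem_insert, Finset.mem_singleton] at h4 h5
    rcases h5 with h5 | h5 | h5
    · exact Or.inl h5
    · exact Or.inr h5
    · subst h5
      rcases h4 with h4 | h4
      · exact Or.inl h4
      · exact absurd hv (hAB h4)) (Or.inr exu) (Or.inl (Or.inl exu)) h1 hT
  have onAT := On.sup (U := insert v (insert x A)) onA onT (by intro w; simp; tauto)
    (by intro w; simp; rintro (rfl | rfl | rfl) <;> simp [hu])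
  have h4 := HasDual.sum2 (x := x) (y := v) (by
    intro w hw1 hw2
    have h4 := onAT.supp hw1
    have h5 := onB.supp hw2
    simp only [Finset.mem_insert, Finset.mem_singleton] at h4 h5
    rcases h5 with h5 | h5
    · exact Or.inl h5
    · rcases h4 with h4 | h4 | h4
      · exact Or.inr h4
      · exact Or.inl h4
      · exact absurd h5 (hAB h4)) (Or.inr (Or.inr exv)) (Or.inr exv) h3 h2
  refine h4.mono ?_
  refine sup_le (hG.trans ?_) ?_
  · refine sup_le ?_ ?_
    · exact le_sup_left.trans (le_sup_left.trans le_sup_left)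
    · exact le_sup_left.trans le_sup_right
  · exact le_sup_right.trans (le_sup_left.trans (le_sup_right.trans le_sup_left))

/-- Pairwise non-addable vertices in a connected graph, by induction over cut vertices. -/
theorem nonAdd_bound (n : ℕ) : ∀ (W : Finset V) (G : SimpleGraph V) (I : Finset V), W.card = n →
    W.Nonempty → Conn G W → On G W → HasDual G → I ⊆ W → NonAdd G I →
    2 * I.card + W.card ≤ G.edgeSet.ncard + 3 := by
  induction n using Nat.strong_induction_on with
  | _ n ih =>
  intro W G I hWn hWne hconn hon hG hI hna
  rcases Nat.lt_or_ge W.card 3 with hW | hW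
  · have hpos : 1 ≤ W.card := Finset.card_pos.2 hWne
    have hIW := Finset.card_le_card hI
    rcases Nat.lt_or_ge W.card 2 with hW2 | hW2
    · omega
    · have h2 : W.card = 2 := by omega
      obtain ⟨a, b, hab, rfl⟩ := Finset.card_eq_two.1 h2
      have hadj : G.Adj a b := by
        obtain ⟨c, hc, hac⟩ := hconn.exists_adj hW2 (u := a) (by simp)
        simp only [Finset.mem_insert, Finset.mem_singleton] at hc
        rcases hc with rfl | rfl
        · exact absurd rfl hac.ne
        · exact hac
      have h1 : I.card ≤ 1 := by
        rw [Finset.card_le_one]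
        intro u hu v hv
        by_contra huv
        apply hna u hu v hv huv
        have : G.Adj u v := by
          have h1 := hI hu
          have h2 := hI hv
          simp only [Finset.mem_insert, Finset.mem_singleton] at h1 h2
          rcases h1 with rfl | rfl <;> rcases h2 with rfl | rfl
          · exact absurd rfl huv
          · exact hadj
          · exact hadj.symm
          · exact absurd rfl huv
        rw [sup_edge_of_adj this]
        exact hG
      have h3 : 1 ≤ G.edgeSet.ncard := by
        rw [Nat.succ_le_iff, Set.ncard_pos]
        exact ⟨s(a, b), hadj⟩
      omega
  · by_cases htwo : TwoConn G W
    · have := htwo.nonAdd_bound hon hW hG hI hna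
      omega
    · have : ∃ x ∈ W, ¬ Conn G (W.erase x) := by
        by_contra hcon
        push Not at hcon
        exact htwo ⟨hconn, hcon⟩
      obtain ⟨x, hx, hnc⟩ := this
      unfold Conn at hnc
      push Not at hnc
      obtain ⟨A, hAW, hAne, hAcl, hAx⟩ := hnc
      set B := (W.erase x) \ A with hB
      have hxA : x ∉ A := fun h => Finset.notMem_erase x W (hAW h)
      have hxB : x ∉ B := by simp [hB]
      have hAB : Disjoint A B := Finset.disjoint_sdiff
      have hABu : A ∪ B = W.erase x := Finset.union_sdiff_of_subset hAW
      have hBne : B.Nonempty := by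
        rw [hB, Finset.sdiff_nonempty]
        exact fun h => hAx (Finset.Subset.antisymm hAW h)
      have hmem : ∀ w, w ∈ W ↔ w = x ∨ w ∈ A ∨ w ∈ B := by
        intro w
        have : w ∈ W.erase x ↔ w ∈ A ∨ w ∈ B := by rw [← hABu, Finset.mem_union]
        rw [Finset.mem_erase] at this
        by_cases hw : w = x
        · subst hw; simp [hx]
        · tauto
      have hno : ∀ a ∈ A, ∀ b ∈ B, ¬ G.Adj a b := by
        intro a ha b hb hab
        have := hAcl a ha b (by rw [← hABu]; exact Finset.mem_union_right _ hb) hab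
        exact Finset.disjoint_left.1 hAB this hb
      -- the two sides play symmetric roles
      have side : ∀ A B : Finset V, x ∉ A → x ∉ B → A.Nonempty →
          (∀ w, w ∈ W ↔ w = x ∨ w ∈ A ∨ w ∈ B) → (∀ a ∈ A, ∀ b ∈ B, ¬ G.Adj a b) →
          Disjoint A B →
          Conn (inn G (insert x A)) (insert x A) := by
        intro A B hxA hxB hAne hmem hno hAB T hT hTne hTcl
        by_cases hxT : x ∈ T
        · have := hconn (T ∪ B) (by
            intro w hw
            rw [Finset.mem_union] at hw
            rw [hmem]
            rcases hw with hw | hw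
            · have := hT hw
              rw [Finset.mem_insert] at this
              tauto
            · exact Or.inr (Or.inr hw)) ⟨x, Finset.mem_union_left _ hxT⟩ (by
            intro a ha b hb hab
            rw [Finset.mem_union] at ha ⊢
            rw [hmem] at hb
            rcases hb with rfl | hb | hb
            · exact Or.inl hxT
            · rcases ha with ha | ha
              · exact Or.inl (hTcl a ha b (Finset.mem_insert_of_mem hb)
                  ⟨hab, hT ha, Finset.mem_insert_of_mem hb⟩)
              · exact absurd hab.symm (hno b hb a ha)
            · exact Or.inr hb)
          refine Finset.Subset.antisymm hT fun w hw => ?_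
          rw [Finset.mem_insert] at hw
          rcases hw with rfl | hw
          · exact hxT
          · have h1 : w ∈ W := (hmem w).2 (Or.inr (Or.inl hw))
            rw [← this, Finset.mem_union] at h1
            exact h1.resolve_right (Finset.disjoint_left.1 hAB hw)
        · exfalso
          have := hconn T (by
            intro w hw
            have := hT hw
            rw [Finset.mem_insert] at this
            rw [hmem]; tauto) hTne (by
            intro a ha b hb hab
            have haA : a ∈ A := by
              have := hT ha
              rw [Finset.mem_insert] at this
              rcases this with rfl | h
              · exact absurd ha hxT
              · exact h
            have hbA : b ∈ insert x A := by
              rw [Finset.mem_insert]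
              rw [hmem] at hb
              rcases hb with h | h | h
              · exact Or.inl h
              · exact Or.inr h
              · exact absurd hab (hno a haA b h)
            exact hTcl a ha b hbA ⟨hab, hT ha, hbA⟩)
          rw [this] at hxT
          exact hxT hx
      have hcA := side A B hxA hxB hAne hmem hno hAB
      have hcB := side B A hxB hxA hBne (fun w => by rw [hmem w]; tauto)
        (fun b hb a ha h => hno a ha b hb h.symm) hAB.symm
      set GA := inn G (insert x A) with hGA
      set GB := inn G (insert x B) with hGB
      have honA : On GA (insert x A) := on_inn _ _
      have honB : On GB (insert x B) := on_inn _ _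
      have hsup : G = GA ⊔ GB := by
        apply le_antisymm
        · intro u v huv
          have h1 := hon _ _ huv
          have h2 := hon.right huv
          rw [SimpleGraph.sup_adj, inn_adj, inn_adj]
          simp only [Finset.mem_insert]
          rw [hmem] at h1 h2
          have h3 := hno u
          have h4 := hno v
          have h5 := huv.symm
          grind
        · exact sup_le (inn_le _ _) (inn_le _ _)
      have hmeet : ∀ w, w ∈ insert x A → w ∈ insert x B → w = x := by
        intro w h1 h2
        rw [Finset.mem_insert] at h1 h2
        rcases h1 with h | h
        · exact h
        · rcases h2 with h' | h'
          · exact h'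
          · exact absurd h' (Finset.disjoint_left.1 hAB h)
      have hcardW : (insert x A).card + (insert x B).card = W.card + 1 := by
        rw [Finset.card_insert_of_notMem hxA, Finset.card_insert_of_notMem hxB]
        have h1 := Finset.card_union_of_disjoint hAB
        rw [hABu] at h1
        have h2 := Finset.card_erase_add_one hx
        omega
      have hApos := Finset.card_pos.2 hAne
      have hBpos := Finset.card_pos.2 hBne
      have hcA1 := Finset.card_insert_of_notMem hxA
      have hcB1 := Finset.card_insert_of_notMem hxB
      have hedges : G.edgeSet.ncard = GA.edgeSet.ncard + GB.edgeSet.ncard := by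
        have hdis : Disjoint GA.edgeSet GB.edgeSet := by
          rw [Set.disjoint_left]
          intro e
          induction e with
          | h a b =>
            intro h1 h2
            have h3 := hmeet a (honA _ _ h1) (honB _ _ h2)
            have h4 := hmeet b (honA.right h1) (honB.right h2)
            have h5 : GA.Adj a b := h1
            exact h5.ne (h3.trans h4.symm)
        rw [← Set.ncard_union_eq hdis, ← SimpleGraph.edgeSet_sup, ← hsup]
      have hdA : HasDual GA := hG.mono (inn_le _ _)
      have hdB : HasDual GB := hG.mono (inn_le _ _)
      have naA : ∀ J ⊆ I, J ⊆ insert x A → NonAdd GA J := by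
        intro J hJI hJ u hu v hv huv hd
        apply hna u (hJI hu) v (hJI hv) huv
        have h1 := HasDual.sum1 (x := x) (by
          intro w hw hw'
          refine hmeet w ?_ (honB.supp hw')
          refine (On.sup honA on_edge (subset_refl _) ?_).supp hw
          intro t; simp only [Finset.mem_insert, Finset.mem_singleton]
          rintro (rfl | rfl)
          · simpa using hJ hu
          · simpa using hJ hv) hd hdB
        rw [sup_right_comm, ← hsup] at h1
        exact h1
      have naB : ∀ J ⊆ I, J ⊆ insert x B → NonAdd GB J := by
        intro J hJI hJ u hu v hv huv hd
        apply hna u (hJI hu) v (hJI hv) huv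
        have h1 := HasDual.sum1 (x := x) (by
          intro w hw hw'
          refine hmeet w (honA.supp hw') ?_
          refine (On.sup honB on_edge (subset_refl _) ?_).supp hw
          intro t; simp only [Finset.mem_insert, Finset.mem_singleton]
          rintro (rfl | rfl)
          · simpa using hJ hu
          · simpa using hJ hv) hd hdA
        rw [sup_right_comm, sup_comm GB GA, ← hsup] at h1
        exact h1
      have insA : ∀ (H : SimpleGraph V) (J : Finset V), NonAdd H J →
          (∀ u ∈ J, ¬ HasDual (H ⊔ SimpleGraph.edge x u)) → NonAdd H (insert x J) := by
        intro H J h1 h2 u hu v hv huv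
        rw [Finset.mem_insert] at hu hv
        rcases hu with rfl | hu <;> rcases hv with rfl | hv
        · exact absurd rfl huv
        · exact h2 v hv
        · rw [SimpleGraph.edge_comm]; exact h2 u hu
        · exact h1 u hu v hv huv
      have hxIA : x ∉ I ∩ A := fun h => hxA (Finset.mem_inter.1 h).2
      have hxIB : x ∉ I ∩ B := fun h => hxB (Finset.mem_inter.1 h).2
      have hIcard1 : I.card ≤ (I ∩ A).card + (I ∩ insert x B).card := by
        refine le_trans (Finset.card_le_card ?_) (Finset.card_union_le _ _)
        intro w hw
        have := (hmem w).1 (hI hw)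
        simp only [Finset.mem_union, Finset.mem_inter, Finset.mem_insert]
        tauto
      have hIcard2 : I.card ≤ (I ∩ insert x A).card + (I ∩ B).card := by
        refine le_trans (Finset.card_le_card ?_) (Finset.card_union_le _ _)
        intro w hw
        have := (hmem w).1 (hI hw)
        simp only [Finset.mem_union, Finset.mem_inter, Finset.mem_insert]
        tauto
      by_cases hcase : ∀ u ∈ I ∩ A, ¬ HasDual (GA ⊔ SimpleGraph.edge x u)
      · have h1 := ih _ (by omega) (insert x A) GA (insert x (I ∩ A)) rfl ⟨x, by simp⟩ hcA honA hdA
          (Finset.insert_subset_insert _ Finset.inter_subset_right)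
          (insA _ _ (naA _ Finset.inter_subset_left
            (Finset.inter_subset_right.trans (Finset.subset_insert _ _))) hcase)
        have h2 := ih _ (by omega) (insert x B) GB (I ∩ insert x B) rfl ⟨x, by simp⟩ hcB honB hdB
          Finset.inter_subset_right (naB _ Finset.inter_subset_left Finset.inter_subset_right)
        rw [Finset.card_insert_of_notMem hxIA] at h1
        omega
      · by_cases hcase2 : ∀ v ∈ I ∩ B, ¬ HasDual (GB ⊔ SimpleGraph.edge x v)
        · have h1 := ih _ (by omega) (insert x B) GB (insert x (I ∩ B)) rfl ⟨x, by simp⟩ hcB honB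
            hdB (Finset.insert_subset_insert _ Finset.inter_subset_right)
            (insA _ _ (naB _ Finset.inter_subset_left
              (Finset.inter_subset_right.trans (Finset.subset_insert _ _))) hcase2)
          have h2 := ih _ (by omega) (insert x A) GA (I ∩ insert x A) rfl ⟨x, by simp⟩ hcA honA hdA
            Finset.inter_subset_right (naA _ Finset.inter_subset_left Finset.inter_subset_right)
          rw [Finset.card_insert_of_notMem hxIB] at h1
          omega
        · push Not at hcase hcase2
          obtain ⟨u, hu, hdu⟩ := hcase
          obtain ⟨v, hv, hdv⟩ := hcase2
          rw [Finset.mem_inter] at hu hv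
          exfalso
          refine hna u hu.1 v hv.1 ?_
            (cross_add honA honB hAB hxA hxB (le_of_eq hsup) hu.2 hv.2 hdu hdv)
          rintro rfl
          exact Finset.disjoint_left.1 hAB hu.2 hv.2

end Alpha

end PlanarAdd

namespace PlanarAdd

open scoped Classical
open Finset

/-! ### Connected vertex sets and models of minors -/

section Models

variable {V : Type}

/-- Connectedness of the subgraph induced on `S`, in terms of subsets closed under adjacency. -/
def CS (G : SimpleGraph V) (S : Set V) : Prop :=
  S.Nonempty ∧ ∀ A ⊆ S, A.Nonempty → (∀ a ∈ A, ∀ b ∈ S, G.Adj a b → b ∈ A) → A = S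

lemma CS.connected {G : SimpleGraph V} {S : Set V} (h : CS G S) : (G.induce S).Connected := by
  obtain ⟨⟨x, hx⟩, h⟩ := h
  have key := h {w | ∃ hw : w ∈ S, (G.induce S).Reachable ⟨x, hx⟩ ⟨w, hw⟩} (fun w hw => hw.1)
    ⟨x, hx, Reachable.refl _⟩ (by
      rintro a ⟨ha, hra⟩ b hb hab
      exact ⟨hb, hra.trans (Adj.reachable (by simpa using hab))⟩)
  have hr : ∀ w (hw : w ∈ S), (G.induce S).Reachable ⟨x, hx⟩ ⟨w, hw⟩ := by
    intro w hw
    rw [← key] at hw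
    exact hw.2
  haveI : Nonempty S := ⟨⟨x, hx⟩⟩
  exact ⟨fun u v => (hr u.1 u.2).symm.trans (hr v.1 v.2)⟩

lemma CS.of_connected {G : SimpleGraph V} {S : Set V} (h : (G.induce S).Connected) : CS G S := by
  obtain ⟨⟨x, hx⟩⟩ := h.nonempty
  refine ⟨⟨x, hx⟩, ?_⟩
  rintro A hA ⟨x, hx⟩ hcl
  refine Set.Subset.antisymm hA fun y hy => ?_
  obtain ⟨p⟩ := h.preconnected ⟨x, hA hx⟩ ⟨y, hy⟩
  have : ∀ (a b : S), (G.induce S).Walk a b → a.1 ∈ A → b.1 ∈ A := by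
    intro a b q
    induction q with
    | nil => exact id
    | cons hab _ ih => exact fun ha => ih (hcl _ ha _ (Subtype.property _) (by simpa using hab))
  exact this _ _ p hx

lemma cs_singleton (G : SimpleGraph V) (x : V) : CS G {x} := by
  refine ⟨⟨x, rfl⟩, ?_⟩
  intro A hA hne _
  exact (Set.Nonempty.subset_singleton_iff hne).1 hA

/-- Two connected sets that intersect or are joined by an edge have connected union. -/
lemma CS.union {G : SimpleGraph V} {S T : Set V} (hS : CS G S) (hT : CS G T)
    (h : ∃ u ∈ S, ∃ v ∈ T, u = v ∨ G.Adj u v) : CS G (S ∪ T) := by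
  obtain ⟨u, hu, v, hv, huv⟩ := h
  refine ⟨⟨u, Or.inl hu⟩, ?_⟩
  intro A hA hne hcl
  have h1 : ∀ U : Set V, U ⊆ S ∪ T → CS G U → (A ∩ U).Nonempty → U ⊆ A := by
    intro U hU hUc hn
    have := hUc.2 (A ∩ U) Set.inter_subset_right hn (by
      rintro a ⟨ha, -⟩ b hb hab
      exact ⟨hcl a ha b (hU hb) hab, hb⟩)
    rw [← this]
    exact Set.inter_subset_left
  have h2 := h1 S Set.subset_union_left hS
  have h3 := h1 T Set.subset_union_right hT
  refine Set.Subset.antisymm hA ?_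
  obtain ⟨a, ha⟩ := hne
  rcases hA ha with h4 | h4
  · have h5 := h2 ⟨a, ha, h4⟩
    have h6 : v ∈ A := by
      rcases huv with rfl | huv
      · exact h5 hu
      · exact hcl u (h5 hu) v (Or.inr hv) huv
    exact Set.union_subset h5 (h3 ⟨v, h6, hv⟩)
  · have h5 := h3 ⟨a, ha, h4⟩
    have h6 : u ∈ A := by
      rcases huv with rfl | huv
      · exact h5 hv
      · exact hcl v (h5 hv) u (Or.inl hu) huv.symm
    exact Set.union_subset (h2 ⟨u, h6, hu⟩) h5

lemma CS.mono {G H : SimpleGraph V} (hGH : G ≤ H) {S : Set V} (h : CS G S) : CS H S :=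
  ⟨h.1, fun A hA hne hcl => h.2 A hA hne fun a ha b hb hab => hcl a ha b hb (hGH hab)⟩

/-- The vertices `p a, …, p (b - 1)` of a walk form a connected set. -/
lemma cs_arc {G : SimpleGraph V} {p : ℕ → V} {a b : ℕ} (hab : a < b)
    (hp : ∀ i, a ≤ i → i + 1 < b → G.Adj (p i) (p (i + 1))) : CS G (p '' Set.Ico a b) := by
  induction b, hab using Nat.le_induction with
  | base =>
    have : p '' Set.Ico a (a + 1) = {p a} := by
      ext w; simp only [Set.mem_image, Set.mem_Ico, Set.mem_singleton_iff]
      constructor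
      · rintro ⟨i, hi, rfl⟩; congr 1; omega
      · rintro rfl; exact ⟨a, by omega, rfl⟩
    rw [this]
    exact cs_singleton _ _
  | succ b hb ih =>
    have : p '' Set.Ico a (b + 1) = p '' Set.Ico a b ∪ {p b} := by
      ext w; simp only [Set.mem_image, Set.mem_Ico, Set.mem_union, Set.mem_singleton_iff]
      constructor
      · rintro ⟨i, hi, rfl⟩
        by_cases h : i = b
        · exact Or.inr (by rw [h])
        · exact Or.inl ⟨i, by omega, rfl⟩
      · rintro (⟨i, hi, rfl⟩ | rfl)
        · exact ⟨i, by omega, rfl⟩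
        · exact ⟨b, by omega, rfl⟩
    rw [this]
    have hb' : a + 1 ≤ b := hb
    refine (ih fun i h1 h2 => hp i h1 (by omega)).union (cs_singleton _ _)
      ⟨p (b - 1), ⟨b - 1, by simp; omega, rfl⟩, p b, rfl, Or.inr ?_⟩
    have := hp (b - 1) (by omega) (by omega)
    rwa [Nat.sub_add_cancel (by omega)] at this

lemma isMinor_K5 {G : SimpleGraph V} (f : Fin 5 → Set V) (hc : ∀ i, CS G (f i))
    (hd : ∀ i j, i < j → ∀ w, w ∈ f i → w ∉ f j)
    (ha : ∀ i j, i < j → ∃ u ∈ f i, ∃ v ∈ f j, G.Adj u v) :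
    IsMinor (completeGraph (Fin 5)) G := by
  refine ⟨f, fun i => (hc i).connected, ?_, ?_⟩
  · intro i j hij
    rw [Set.disjoint_left]
    rcases lt_or_gt_of_ne hij with h | h
    · exact hd i j h
    · intro w h1 h2; exact hd j i h w h2 h1
  · intro i j hij
    rcases lt_or_gt_of_ne hij.ne with h | h
    · exact ha i j h
    · obtain ⟨u, hu, v, hv, huv⟩ := ha j i h
      exact ⟨v, hv, u, hu, huv.symm⟩

lemma isMinor_K33 {G : SimpleGraph V} (f g : Fin 3 → Set V) (hf : ∀ i, CS G (f i))
    (hg : ∀ i, CS G (g i))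
    (hdf : ∀ i j, i < j → ∀ w, w ∈ f i → w ∉ f j) (hdg : ∀ i j, i < j → ∀ w, w ∈ g i → w ∉ g j)
    (hfg : ∀ i j, ∀ w, w ∈ f i → w ∉ g j)
    (ha : ∀ i j, ∃ u ∈ f i, ∃ v ∈ g j, G.Adj u v) :
    IsMinor (completeBipartiteGraph (Fin 3) (Fin 3)) G := by
  refine ⟨Sum.elim f g, ?_, ?_, ?_⟩
  · rintro (i | i)
    · exact (hf i).connected
    · exact (hg i).connected
  · rintro (i | i) (j | j) hij <;> rw [Set.disjoint_left] <;> intro w h1 h2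
    · have hij : i ≠ j := fun h => hij (by rw [h])
      rcases lt_or_gt_of_ne hij with h | h
      · exact hdf i j h w h1 h2
      · exact hdf j i h w h2 h1
    · exact hfg i j w h1 h2
    · exact hfg j i w h2 h1
    · have hij : i ≠ j := fun h => hij (by rw [h])
      rcases lt_or_gt_of_ne hij with h | h
      · exact hdg i j h w h1 h2
      · exact hdg j i h w h2 h1
  · rintro (i | i) (j | j) hij
    · simp at hij
    · exact ha i j
    · obtain ⟨u, hu, v, hv, huv⟩ := ha j i
      exact ⟨v, hv, u, hu, huv.symm⟩
    · simp at hij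

/-- A minor without isolated vertices survives when every non-isolated vertex `v` of the host is
replaced by a connected set `φ v`. -/
lemma IsMinor.of_model {α : Type} {H : SimpleGraph α} {G' G : SimpleGraph V} (h : IsMinor H G')
    (hH : ∀ a, ∃ b, H.Adj a b) (φ : V → Set V) (hφ : ∀ v ∈ G'.support, CS G (φ v))
    (hdis : ∀ u ∈ G'.support, ∀ v ∈ G'.support, ∀ w, w ∈ φ u → w ∈ φ v → u = v)
    (hadj : ∀ u v, G'.Adj u v → ∃ a ∈ φ u, ∃ b ∈ φ v, G.Adj a b) : IsMinor H G := by
  obtain ⟨f, hf, hfd, hfa⟩ := h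
  have hsupp : ∀ a, ∀ v ∈ f a, v ∈ G'.support := by
    intro a v hv
    have hc := CS.of_connected (hf a)
    by_contra hcon
    have hno : ∀ w, ¬ G'.Adj v w := fun w hw => hcon ⟨w, hw⟩
    have := hc.2 {v} (by simpa using hv) ⟨v, rfl⟩ (by
      rintro b rfl w _ hw
      exact absurd hw (hno w))
    obtain ⟨b, hb⟩ := hH a
    obtain ⟨u, hu, w, hw, huw⟩ := hfa a b hb
    rw [← this, Set.mem_singleton_iff] at hu
    exact hno w (hu ▸ huw)
  refine ⟨fun a => ⋃ v ∈ f a, φ v, ?_, ?_, ?_⟩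
  · intro a
    refine CS.connected ⟨?_, ?_⟩
    · obtain ⟨v, hv⟩ := (CS.of_connected (hf a)).1
      obtain ⟨w, hw⟩ := (hφ v (hsupp a v hv)).1
      exact ⟨w, Set.mem_biUnion hv hw⟩
    · intro A hA hne hcl
      have h1 : ∀ v ∈ f a, (A ∩ φ v).Nonempty → φ v ⊆ A := by
        intro v hv hn
        have := (hφ v (hsupp a v hv)).2 (A ∩ φ v) Set.inter_subset_right hn (by
          rintro c ⟨hc, -⟩ b hb hcb
          exact ⟨hcl c hc b (Set.mem_biUnion hv hb) hcb, hb⟩)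
        rw [← this]
        exact Set.inter_subset_left
      have h2 := (CS.of_connected (hf a)).2 {v | v ∈ f a ∧ φ v ⊆ A} (fun v hv => hv.1) (by
        obtain ⟨w, hw⟩ := hne
        obtain ⟨v, hv, hwv⟩ := Set.mem_iUnion₂.1 (hA hw)
        exact ⟨v, hv, h1 v hv ⟨w, hw, hwv⟩⟩) (by
        rintro u ⟨hu, huA⟩ v hv huv
        obtain ⟨c, hc, d, hd, hcd⟩ := hadj u v huv
        exact ⟨hv, h1 v hv ⟨d, hcl c (huA hc) d (Set.mem_biUnion hv hd) hcd, hd⟩⟩)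
      refine Set.Subset.antisymm hA ?_
      intro w hw
      obtain ⟨v, hv, hwv⟩ := Set.mem_iUnion₂.1 hw
      rw [← h2] at hv
      exact hv.2 hwv
  · intro a b hab
    rw [Set.disjoint_left]
    intro w h1 h2
    obtain ⟨u, hu, hwu⟩ := Set.mem_iUnion₂.1 h1
    obtain ⟨v, hv, hwv⟩ := Set.mem_iUnion₂.1 h2
    have := hdis u (hsupp a u hu) v (hsupp b v hv) w hwu hwv
    subst this
    exact Set.disjoint_left.1 (hfd a b hab) hu hv
  · intro a b hab
    obtain ⟨u, hu, v, hv, huv⟩ := hfa a b hab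
    obtain ⟨c, hc, d, hd, hcd⟩ := hadj u v huv
    exact ⟨c, Set.mem_biUnion hu hc, d, Set.mem_biUnion hv hd, hcd⟩

lemma IsPlanar.of_model {G' G : SimpleGraph V} (h : IsPlanar G) (φ : V → Set V)
    (hφ : ∀ v ∈ G'.support, CS G (φ v))
    (hdis : ∀ u ∈ G'.support, ∀ v ∈ G'.support, ∀ w, w ∈ φ u → w ∈ φ v → u = v)
    (hadj : ∀ u v, G'.Adj u v → ∃ a ∈ φ u, ∃ b ∈ φ v, G.Adj a b) : IsPlanar G' := by
  refine ⟨fun hm => h.1 (IsMinor.of_model hm ?_ φ hφ hdis hadj),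
    fun hm => h.2 (IsMinor.of_model hm ?_ φ hφ hdis hadj)⟩
  · intro a
    exact ⟨a + 1, by simp⟩
  · rintro (a | a)
    · exact ⟨Sum.inr 0, by simp⟩
    · exact ⟨Sum.inl 0, by simp⟩

lemma IsPlanar.mono' {G' G : SimpleGraph V} (h : IsPlanar G) (hle : G' ≤ G) : IsPlanar G' :=
  IsPlanar.of_model h (fun v => {v}) (fun v _ => cs_singleton _ _)
    (by rintro u _ v _ w rfl h; exact h)
    (fun u v huv => ⟨u, rfl, v, rfl, hle huv⟩)

end Models

end PlanarAdd

namespace PlanarAdd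

open scoped Classical
open Finset

/-! ### Contractible edges of 3-connected graphs -/

section Contractible

variable {V : Type} [Fintype V]

/-- A 3-connected graph has an edge `xy` whose ends leave a 2-connected graph. Otherwise every
edge `xy` lies in a separating triple `x, y, z`; taking one that cuts off a smallest set `C`, a
neighbour `v` of `z` in `C` gives a separating triple containing `z, v` that cuts off less. -/
lemma exists_contractible {G : SimpleGraph V} {W : Finset V} (hW : 2 ≤ W.card) (h1 : Conn G W)
    (h3 : ∀ a ∈ W, ∀ b ∈ W, Conn G (W \ {a, b})) :
    ∃ x ∈ W, ∃ y ∈ W, G.Adj x y ∧ TwoConn G (W \ {x, y}) := by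
  by_contra hcon
  push Not at hcon
  have hsep : ∀ x ∈ W, ∀ y ∈ W, G.Adj x y → ∃ z ∈ W, z ≠ x ∧ z ≠ y ∧ ∃ C ⊆ W \ {x, y, z},
      C.Nonempty ∧ (∀ a ∈ C, ∀ b ∈ W \ {x, y, z}, G.Adj a b → b ∈ C) ∧ C ≠ W \ {x, y, z} := by
    intro x hx y hy hxy
    have h := hcon x hx y hy hxy
    rw [TwoConn, not_and] at h
    have h := h (h3 x hx y hy)
    push Not at h
    obtain ⟨z, hz, hz'⟩ := h
    simp only [Finset.mem_sdiff, Finset.mem_insert, Finset.mem_singleton, not_or] at hz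
    refine ⟨z, hz.1, hz.2.1, hz.2.2, ?_⟩
    have he : (W \ {x, y}).erase z = W \ {x, y, z} := by ext w; simp; tauto
    rw [he, Conn] at hz'
    push Not at hz'
    obtain ⟨C, hC, hne, hcl, hneq⟩ := hz'
    exact ⟨C, hC, hne, hcl, hneq⟩
  have key : ∀ n, ∀ x ∈ W, ∀ y ∈ W, G.Adj x y → ∀ z ∈ W, z ≠ x → z ≠ y → ∀ C ⊆ W \ {x, y, z},
      C.card = n → C.Nonempty → (∀ a ∈ C, ∀ b ∈ W \ {x, y, z}, G.Adj a b → b ∈ C) →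
      C ≠ W \ {x, y, z} → False := by
    intro n
    induction n using Nat.strong_induction_on with
    | _ n ih =>
    intro x hx y hy hxy z hz hzx hzy C hC hCn hne hcl hneq
    -- `z` has a neighbour `v` in `C`
    have hv : ∃ v ∈ C, G.Adj z v := by
      by_contra hno
      push Not at hno
      have := h3 x hx y hy C (by intro w hw; have := hC hw; simp at this ⊢; tauto) hne (by
        intro a ha b hb hab
        by_cases hbz : b = z
        · subst hbz; exact absurd hab.symm (hno a ha)
        · refine hcl a ha b ?_ hab
          simp at hb ⊢; tauto)
      have hzC : z ∈ C := by rw [this]; simp [hz, hzx, hzy]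
      have := hC hzC
      simp at this
    obtain ⟨v, hvC, hzv⟩ := hv
    have hvW := hC hvC
    simp only [Finset.mem_sdiff, Finset.mem_insert, Finset.mem_singleton, not_or] at hvW
    obtain ⟨w, hw, hwz, hwv, D1, hD1, hD1ne, hD1cl, hD1neq⟩ := hsep z hz v hvW.1 hzv
    -- one of the sides of the second separation avoids `x` and `y`
    have hD : ∃ D ⊆ W \ {z, v, w}, D.Nonempty ∧
        (∀ a ∈ D, ∀ b ∈ W \ {z, v, w}, G.Adj a b → b ∈ D) ∧ D ≠ W \ {z, v, w} ∧
        x ∉ D ∧ y ∉ D := by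
      by_cases hxD : x ∈ D1 ∨ y ∈ D1
      · refine ⟨(W \ {z, v, w}) \ D1, Finset.sdiff_subset, ?_, ?_, ?_, ?_, ?_⟩
        · rw [Finset.sdiff_nonempty]
          intro h; exact hD1neq (Finset.Subset.antisymm hD1 h)
        · intro a ha b hb hab
          rw [Finset.mem_sdiff] at ha ⊢
          exact ⟨hb, fun hbD => ha.2 (hD1cl b hbD a ha.1 hab.symm)⟩
        · intro h
          obtain ⟨d, hd⟩ := hD1ne
          have := hD1 hd
          rw [← h, Finset.mem_sdiff] at this
          exact this.2 hd
        · rw [Finset.mem_sdiff]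
          rintro ⟨h5, h6⟩
          rcases hxD with h7 | h7
          · exact h6 h7
          · exact h6 (hD1cl y h7 x h5 hxy.symm)
        · rw [Finset.mem_sdiff]
          rintro ⟨h5, h6⟩
          rcases hxD with h7 | h7
          · exact h6 (hD1cl x h7 y h5 hxy)
          · exact h6 h7
      · push Not at hxD
        exact ⟨D1, hD1, hD1ne, hD1cl, hD1neq, hxD.1, hxD.2⟩
    obtain ⟨D, hDs, hDne, hDcl, hDneq, hxD, hyD⟩ := hD
    have hd : ∃ d ∈ D, G.Adj v d := by
      by_contra hno
      push Not at hno
      have := h3 z hz w hw D (by intro t ht; have := hDs ht; simp at this ⊢; tauto) hDne (by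
        intro a ha b hb hab
        by_cases hbz : b = v
        · subst hbz; exact absurd hab.symm (hno a ha)
        · refine hDcl a ha b ?_ hab
          simp at hb ⊢; tauto)
      have hvD : v ∈ D := by rw [this]; simp [hvW, Ne.symm hwv]
      have := hDs hvD
      simp at this
    obtain ⟨d, hdD, hvd⟩ := hd
    have hdW := hDs hdD
    simp only [Finset.mem_sdiff, Finset.mem_insert, Finset.mem_singleton, not_or] at hdW
    have hmem : ∀ b ∈ D, b ∈ W \ {x, y, z} := by
      intro b hb
      have := hDs hb
      simp only [Finset.mem_sdiff, Finset.mem_insert, Finset.mem_singleton, not_or] at this ⊢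
      exact ⟨this.1, fun h => hxD (h ▸ hb), fun h => hyD (h ▸ hb), this.2.1⟩
    have hdC : d ∈ C := hcl v hvC d (hmem d hdD) hvd
    have hvD : v ∉ D := fun h => by have := hDs h; simp at this
    refine ih (D ∩ C).card ?_ z hz v hvW.1 hzv w hw hwz hwv (D ∩ C)
      (fun t ht => hDs (Finset.mem_inter.1 ht).1) rfl ⟨d, Finset.mem_inter.2 ⟨hdD, hdC⟩⟩ ?_ ?_
    · rw [← hCn]
      apply Finset.card_lt_card
      refine ⟨Finset.inter_subset_right, fun h => hvD (Finset.mem_inter.1 (h hvC)).1⟩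
    · intro a ha b hb hab
      rw [Finset.mem_inter] at ha ⊢
      have hbD := hDcl a ha.1 b hb hab
      exact ⟨hbD, hcl a ha.2 b (hmem b hbD) hab⟩
    · intro h
      apply hDneq
      refine Finset.Subset.antisymm hDs ?_
      rw [← h]; exact Finset.inter_subset_left
  have hne : W.Nonempty := Finset.card_pos.1 (by omega)
  obtain ⟨x, hx⟩ := hne
  obtain ⟨y, hy, hxy⟩ := h1.exists_adj hW hx
  obtain ⟨z, hz, hzx, hzy, C, hC, hne, hcl, hneq⟩ := hsep x hx y hy hxy
  exact key _ x hx y hy hxy z hz hzx hzy C hC rfl hne hcl hneq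

end Contractible

/-! ### Face cycles and fans -/

section Fan

variable {V : Type} [Fintype V] {ι : Type}

/-- Removing a vertex `v` from a graph with a dual merges the faces around `v` into one face `o`,
which contains all neighbours of `v` on its boundary. -/
lemma exists_face {K H : SimpleGraph V} {W : Finset V} {v : V}
    (hHK : ∀ a b, H.Adj a b ↔ K.Adj a b ∧ a ≠ v ∧ b ≠ v)
    (hH : Conn H W) (hN : ∀ w, K.Adj v w → w ∈ W) (hv : v ∉ W)
    (h2 : ∀ w, ∃ w', w' ≠ w ∧ K.Adj v w') (hK : HasDual K) :
    ∃ (ι : Type) (L R : Sym2 V → ι) (o : ι), IsDual H L R ∧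
      ∀ w, K.Adj v w → ∃ u, H.Adj w u ∧ (L s(w, u) = o ∨ R s(w, u) = o) := by
  obtain ⟨ι, L, R, hd⟩ := hK
  have hle : H ≤ K := fun a b h => ((hHK a b).1 h).1
  have hchain : ∀ w, K.Adj v w → ∀ w', K.Adj v w' → ∃ z : Sym2 V → ZMod 2,
      (∀ e, z e ≠ 0 → e ∈ H.edgeSet) ∧ bd z = Pi.single w 1 + Pi.single w' 1 := by
    intro w hw w' hw'
    obtain ⟨z, hz, hzb⟩ := hH.chain (hN w hw) (hN w' hw')
    refine ⟨z, fun e he => ?_, hzb⟩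
    obtain ⟨a, b, rfl, -, -, hab⟩ := hz e he
    exact hab
  have hcycle : ∀ w, K.Adj v w → ∀ w', K.Adj v w' → w ≠ w' → ∃ z ∈ cyc K,
      z s(v, w) = 1 ∧ z s(v, w') = 1 ∧ ∀ u, u ≠ w → u ≠ w' → z s(v, u) = 0 := by
    intro w hw w' hw' hne
    obtain ⟨z, hz, hzb⟩ := hchain w hw w' hw'
    have hz0 : ∀ u, z s(v, u) = 0 := by
      intro u
      by_contra h
      have : H.Adj v u := hz _ h
      exact ((hHK _ _).1 this).2.1 rfl
    have hvw := hw.ne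
    have hvw' := hw'.ne
    refine ⟨z + Pi.single s(v, w) 1 + Pi.single s(v, w') 1, ?_, ?_, ?_, ?_⟩
    · rw [mem_cyc]
      constructor
      · intro e he
        by_cases h1 : e = s(v, w)
        · subst h1; exact absurd hw he
        by_cases h2 : e = s(v, w')
        · subst h2; exact absurd hw' he
        have : z e = 0 := by
          by_contra h
          exact he (SimpleGraph.edgeSet_mono hle (hz e h))
        simp [h1, h2, this]
      · rw [map_add, map_add, bd_single hvw, bd_single hvw', hzb]
        have e1 := fun_add_self (Pi.single w 1 : V → ZMod 2)
        have e2 := fun_add_self (Pi.single w' 1 : V → ZMod 2)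
        have e3 := fun_add_self (Pi.single v 1 : V → ZMod 2)
        linear_combination e1 + e2 + e3
    · have : s(v, w) ≠ s(v, w') := by simp [hne, hvw']
      simp [hz0, this]
    · have : s(v, w') ≠ s(v, w) := by simp [Ne.symm hne, hvw]
      simp [hz0, this]
    · intro u hu hu'
      have h1 : s(v, u) ≠ s(v, w) := by simp [hu, hvw]
      have h2 : s(v, u) ≠ s(v, w') := by simp [hu', hvw']
      simp [hz0, h1, h2]
  -- a potential that is constant along the edges at `v` is constant around `v`
  have hconst : ∀ c : ι → ZMod 2, (∀ w, K.Adj v w → c (L s(v, w)) = c (R s(v, w))) →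
      ∀ w, K.Adj v w → ∀ w', K.Adj v w' → c (L s(v, w)) = c (L s(v, w')) := by
    intro c hc w hw w' hw'
    by_contra hne
    have hww : w ≠ w' := by rintro rfl; exact hne rfl
    obtain ⟨z, hz, hzw, hzw', hz0⟩ := hcycle w hw w' hw' hww
    obtain ⟨c', hc'⟩ := hd.surj z hz
    have h1 := congrFun ((mem_cyc).1 (hd.mem fun i => c i * c' i)).2 v
    rw [bd_apply] at h1
    have h2 : ∀ u, delta K L R (fun i => c i * c' i) s(v, u) = c (L s(v, u)) * z s(v, u) := by
      intro u
      by_cases hu : K.Adj v u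
      · rw [delta_of_mem (show s(v, u) ∈ K.edgeSet from hu), hc' _ (show s(v, u) ∈ K.edgeSet from hu),
          ← hc u hu]
        ring
      · rw [((mem_cyc).1 hz).1 _ (show s(v, u) ∉ K.edgeSet from hu)]
        simp [delta, hu]
    simp only [h2] at h1
    rw [← Finset.add_sum_erase _ _ (Finset.mem_univ w),
      ← Finset.add_sum_erase _ _ (Finset.mem_erase.2 ⟨Ne.symm hww, Finset.mem_univ w'⟩),
      Finset.sum_eq_zero, hzw, hzw'] at h1
    · apply hne
      simp only [mul_one, add_zero, Pi.zero_apply] at h1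
      exact zmod2_eq_of_add h1
    · intro u hu
      simp only [Finset.mem_erase, Finset.mem_univ, and_true] at hu
      rw [hz0 u hu.2 hu.1, mul_zero]
  -- collapse all faces around `v`
  let S : Set ι := {i | ∃ w, K.Adj v w ∧ (L s(v, w) = i ∨ R s(v, w) = i)}
  obtain ⟨w₀, -, hw₀⟩ := h2 v
  let o := L s(v, w₀)
  let q : ι → ι := fun i => if i ∈ S then o else i
  have hoS : o ∈ S := ⟨w₀, hw₀, Or.inl rfl⟩
  have hqo : ∀ i ∈ S, q i = o := fun i hi => by simp [q, hi]
  have hnH : ∀ e, e ∈ K.edgeSet → e ∉ H.edgeSet → ∃ w, K.Adj v w ∧ e = s(v, w) := by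
    intro e
    induction e with
    | h a b =>
      intro h1 h2
      have h1 : K.Adj a b := h1
      have h2 : ¬ H.Adj a b := h2
      rw [hHK] at h2
      by_cases ha : a = v
      · subst ha; exact ⟨b, h1, rfl⟩
      · by_cases hb : b = v
        · subst hb; exact ⟨a, h1.symm, Sym2.eq_swap⟩
        · exact absurd ⟨h1, ha, hb⟩ h2
  refine ⟨ι, fun e => q (L e), fun e => q (R e), o, ⟨?_, ?_⟩, ?_⟩
  · intro c
    have h1 := hd.mem (fun i => c (q i))
    have h2 : delta H (fun e => q (L e)) (fun e => q (R e)) c = delta K L R (fun i => c (q i)) := by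
      ext e
      by_cases he : e ∈ H.edgeSet
      · rw [delta_of_mem he, delta_of_mem (SimpleGraph.edgeSet_mono hle he)]
      · by_cases he' : e ∈ K.edgeSet
        · obtain ⟨w, hw, rfl⟩ := hnH e he' he
          rw [delta_of_mem he', hqo _ ⟨w, hw, Or.inl rfl⟩, hqo _ ⟨w, hw, Or.inr rfl⟩,
            CharTwo.add_self_eq_zero]
          simp [delta, he]
        · simp [delta, he, he']
    rw [← h2, mem_cyc] at h1
    rw [mem_cyc]
    refine ⟨fun e he => by simp [delta, he], h1.2⟩
  · intro z hz
    rw [mem_cyc] at hz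
    have hzK : z ∈ cyc K := by
      rw [mem_cyc]
      exact ⟨fun e he => hz.1 e fun h => he (SimpleGraph.edgeSet_mono hle h), hz.2⟩
    obtain ⟨c, hc⟩ := hd.surj z hzK
    have h1 : ∀ w, K.Adj v w → c (L s(v, w)) = c (R s(v, w)) := by
      intro w hw
      have h2 := hc _ (show s(v, w) ∈ K.edgeSet from hw)
      rw [hz.1 _ (show s(v, w) ∉ H.edgeSet from fun h => ((hHK _ _).1 h).2.1 rfl)] at h2
      exact zmod2_eq_of_add h2.symm
    have h2 : ∀ i, c (q i) = c i := by
      intro i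
      by_cases hi : i ∈ S
      · rw [hqo i hi]
        obtain ⟨w, hw, h3 | h3⟩ := hi
        · rw [← h3]; exact hconst c h1 _ hw₀ _ hw
        · rw [← h3, ← h1 w hw]; exact hconst c h1 _ hw₀ _ hw
      · simp [q, hi]
    refine ⟨c, fun e he => ?_⟩
    rw [hc e (SimpleGraph.edgeSet_mono hle he), h2, h2]
  · intro w hw
    obtain ⟨w', hne, hw'⟩ := h2 w
    obtain ⟨z, hz, hzw, -⟩ := hcycle w hw w' hw' (Ne.symm hne)
    obtain ⟨c, hc⟩ := hd.surj z hz
    have hK : s(v, w) ∈ K.edgeSet := hw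
    have hLR : L s(v, w) ≠ R s(v, w) := by
      intro h
      have := hc _ hK
      rw [h, hzw, CharTwo.add_self_eq_zero] at this
      exact one_ne_zero this
    obtain ⟨u, hu, hst⟩ := exists_next (hd.mem (Pi.single (L s(v, w)) 1))
      (a := v) (b := w) (by
        rw [delta_of_mem hK]
        simp [hLR.symm])
    have hwu : K.Adj w u := by
      by_contra h
      exact hst (by simp [delta, h])
    refine ⟨u, (hHK _ _).2 ⟨hwu, hw.ne.symm, hu⟩, ?_⟩
    rw [delta_of_mem (show s(w, u) ∈ K.edgeSet from hwu)] at hst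
    by_cases h5 : L s(w, u) = L s(v, w)
    · left; exact hqo _ (h5 ▸ ⟨w, hw, Or.inl rfl⟩)
    · by_cases h6 : R s(w, u) = L s(v, w)
      · right; exact hqo _ (h6 ▸ ⟨w, hw, Or.inl rfl⟩)
      · simp [h5, h6] at hst

end Fan

end PlanarAdd

namespace PlanarAdd

open scoped Classical
open Finset

section Fan

variable {V : Type} [Fintype V] {ι : Type}

lemma path_chain (p : ℕ → V) (a b : ℕ) (hab : a ≤ b) (hp : ∀ i, a ≤ i → i < b → p i ≠ p (i + 1)) :
    ∃ P : Sym2 V → ZMod 2, (∀ e, P e ≠ 0 → ∃ i, a ≤ i ∧ i < b ∧ e = s(p i, p (i + 1))) ∧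
      bd P = Pi.single (p a) 1 + Pi.single (p b) 1 := by
  induction b, hab using Nat.le_induction with
  | base => exact ⟨0, by simp, by rw [map_zero, fun_add_self]⟩
  | succ b hb ih =>
    obtain ⟨P, h1, h2⟩ := ih fun i h3 h4 => hp i h3 (by omega)
    refine ⟨P + Pi.single s(p b, p (b + 1)) 1, ?_, ?_⟩
    · intro e he
      by_cases h3 : e = s(p b, p (b + 1))
      · exact ⟨b, hb, by omega, h3⟩
      · obtain ⟨i, h4, h5, h6⟩ := h1 e (by simpa [h3] using he)
        exact ⟨i, h4, by omega, h6⟩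
    · rw [map_add, h2, bd_single (hp b hb (by omega))]
      have e1 := fun_add_self (Pi.single (p b) 1 : V → ZMod 2)
      linear_combination e1

/-- The boundary of a face of a 2-connected graph is a cycle `p 0, …, p (k - 1)`, presented as a
`k`-periodic sequence. -/
lemma TwoConn.face_cycle {G : SimpleGraph V} {W : Finset V} {L R : Sym2 V → ι} (h : TwoConn G W)
    (hon : On G W) (hW : 3 ≤ W.card) (hd : IsDual G L R) {o : ι} {a b : V} (hab : G.Adj a b)
    (habo : L s(a, b) = o ∨ R s(a, b) = o) :
    ∃ (k : ℕ) (p : ℕ → V), 3 ≤ k ∧ (∀ i, p (i + k) = p i) ∧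
      (∀ i < k, ∀ j < k, p i = p j → i = j) ∧
      (∀ i, G.Adj (p i) (p (i + 1)) ∧
        (L s(p i, p (i + 1)) = o ∨ R s(p i, p (i + 1)) = o)) ∧
      ∀ w u, G.Adj w u → (L s(w, u) = o ∨ R s(w, u) = o) → ∃ i < k, p i = w := by
  have hst : ∀ u v, G.Adj u v → (L s(u, v) = o ∨ R s(u, v) = o) → star G L R o s(u, v) ≠ 0 :=
    fun u v huv ho => star_ne_zero huv (h.ne hon hW hd huv) ho
  have hts : ∀ u v, star G L R o s(u, v) ≠ 0 →
      G.Adj u v ∧ (L s(u, v) = o ∨ R s(u, v) = o) := by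
    intro u v huv
    have h1 : G.Adj u v := by
      by_contra h; exact huv (by simp [star, delta, h])
    refine ⟨h1, ?_⟩
    by_contra h2
    push Not at h2
    apply huv
    rw [star, delta_of_mem (show s(u, v) ∈ G.edgeSet from h1)]
    simp [h2.1, h2.2]
  have hsc : star G L R o ∈ cyc G := hd.mem _
  set F' := (faceGraph G L R o).deleteEdges {s(a, b)} with hF'
  have hF'adj : ∀ u v, F'.Adj u v ↔ star G L R o s(u, v) ≠ 0 ∧ s(u, v) ≠ s(a, b) := by
    intro u v
    rw [hF', SimpleGraph.deleteEdges_adj, faceGraph_adj, Set.mem_singleton_iff]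
  have hreach : F'.Reachable a b := by
    refine reachable_of_chain (z := star G L R o + Pi.single s(a, b) 1) ?_ ?_
    · intro e
      induction e with
      | h u v =>
        intro he
        have he : ¬ F'.Adj u v := he
        rw [hF'adj] at he
        push Not at he
        by_cases h1 : s(u, v) = s(a, b)
        · have h2 := hst a b hab habo
          rw [h1]
          rcases zmod2_cases (star G L R o s(a, b)) with h3 | h3
          · exact absurd h3 h2
          · simp only [Pi.add_apply, h3, Pi.single_eq_same]; decide
        · have h2 : star G L R o s(u, v) = 0 := by
            by_contra h2; exact h1 (he h2)
          simp [h2, h1]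
    · rw [map_add, (mem_cyc.1 hsc).2, zero_add, bd_single hab.ne]
  obtain ⟨q, hq⟩ := hreach.exists_isPath
  have hlen : 2 ≤ q.length := by
    by_contra hlt
    have h1 : q.length = 0 ∨ q.length = 1 := by omega
    rcases h1 with h1 | h1
    · exact hab.ne (SimpleGraph.Walk.eq_of_length_eq_zero h1)
    · have h2 := q.adj_getVert_succ (i := 0) (by omega)
      rw [q.getVert_zero, zero_add, ← h1, q.getVert_length, hF'adj] at h2
      exact h2.2 rfl
  have hqadj : ∀ i < q.length, F'.Adj (q.getVert i) (q.getVert (i + 1)) :=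
    fun i hi => q.adj_getVert_succ hi
  obtain ⟨P, hP, hPb⟩ := path_chain q.getVert 0 q.length (Nat.zero_le _)
    (fun i _ hi => (hqadj i hi).ne)
  rw [q.getVert_zero, q.getVert_length] at hPb
  have hPab : P s(a, b) = 0 := by
    by_contra hne
    obtain ⟨i, -, hi, he⟩ := hP _ hne
    exact ((hF'adj _ _).1 (hqadj i hi)).2 he.symm
  have hy : P + Pi.single s(a, b) 1 = star G L R o := by
    have hle : ∀ e, (P + Pi.single s(a, b) 1 : Sym2 V → ZMod 2) e ≠ 0 → star G L R o e ≠ 0 := by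
      intro e he
      by_cases h1 : e = s(a, b)
      · rw [h1]; exact hst a b hab habo
      · obtain ⟨i, -, hi, rfl⟩ := hP e (by simpa [h1] using he)
        exact ((hF'adj _ _).1 (hqadj i hi)).1
    refine h.circuit hon hd o ?_ ?_ hle
    · rw [mem_cyc]
      constructor
      · intro e he
        by_contra hne
        exact hle e hne (by simp [star, delta, he])
      · rw [map_add, hPb, bd_single hab.ne, fun_add_self]
    · intro h0
      have := congrFun h0 s(a, b)
      simp [hPab] at this
  refine ⟨q.length + 1, fun i => q.getVert (i % (q.length + 1)), by omega, ?_, ?_, ?_, ?_⟩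
  · intro i; simp
  · intro i hi j hj hij
    simp only [Nat.mod_eq_of_lt hi, Nat.mod_eq_of_lt hj] at hij
    exact hq.getVert_injOn (by simp; omega) (by simp; omega) hij
  · intro i
    apply hts
    have hr : i % (q.length + 1) < q.length + 1 := Nat.mod_lt _ (by omega)
    show star G L R o s(q.getVert (i % (q.length + 1)), q.getVert ((i + 1) % (q.length + 1))) ≠ 0
    by_cases hr' : i % (q.length + 1) < q.length
    · have h1 : (i + 1) % (q.length + 1) = i % (q.length + 1) + 1 := by
        rw [Nat.add_mod, Nat.mod_eq_of_lt (show 1 < q.length + 1 by omega)]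
        exact Nat.mod_eq_of_lt (by omega)
      rw [h1]
      exact ((hF'adj _ _).1 (hqadj _ hr')).1
    · have h0 : i % (q.length + 1) = q.length := by omega
      have h1 : (i + 1) % (q.length + 1) = 0 := by
        rw [Nat.add_mod, Nat.mod_eq_of_lt (show 1 < q.length + 1 by omega), h0, Nat.mod_self]
      rw [h1, h0, q.getVert_zero, q.getVert_length, Sym2.eq_swap]
      exact hst a b hab habo
  · intro w u hwu ho
    have h1 := hst w u hwu ho
    rw [← hy] at h1
    by_cases h2 : s(w, u) = s(a, b)
    · have h3 : w = a ∨ w = b := by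
        have : w ∈ s(a, b) := by rw [← h2]; simp
        simpa using this
      rcases h3 with rfl | rfl
      · exact ⟨0, by omega, by simp⟩
      · refine ⟨q.length, by omega, ?_⟩
        simp only [Nat.mod_eq_of_lt (show q.length < q.length + 1 by omega), q.getVert_length]
    · obtain ⟨i, -, hi, he⟩ := hP _ (by simpa [h2] using h1)
      have h3 : w = q.getVert i ∨ w = q.getVert (i + 1) := by
        have : w ∈ s(q.getVert i, q.getVert (i + 1)) := by rw [← he]; simp
        simpa using this
      rcases h3 with h3 | h3
      · refine ⟨i, by omega, ?_⟩
        simp only [Nat.mod_eq_of_lt (show i < q.length + 1 by omega), h3]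
      · refine ⟨i + 1, by omega, ?_⟩
        simp only [Nat.mod_eq_of_lt (show i + 1 < q.length + 1 by omega), h3]

/-- The star with centre `x` and leaves `M`. -/
def spokes (x : V) (M : Set V) : SimpleGraph V where
  Adj u v := u ≠ v ∧ ((u = x ∧ v ∈ M) ∨ (v = x ∧ u ∈ M))
  symm.symm _ _ h := ⟨h.1.symm, h.2.symm⟩
  loopless.irrefl _ h := h.1 rfl

lemma spokes_adj {x : V} {M : Set V} {u v : V} :
    (spokes x M).Adj u v ↔ u ≠ v ∧ ((u = x ∧ v ∈ M) ∨ (v = x ∧ u ∈ M)) := Iff.rfl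

lemma spokes_insert (x w : V) (M : Set V) :
    spokes x (insert w M) = spokes x M ⊔ SimpleGraph.edge x w := by
  ext u v
  rw [SimpleGraph.sup_adj, spokes_adj, spokes_adj, edge_adj', Set.mem_insert_iff,
    Set.mem_insert_iff]
  tauto

/-- A new vertex `x` can be joined to vertices of a face cycle `p 0, …, p (k - 1)` inside the
face `o`. Adding the spokes in the order of the cycle, the part of the cycle behind the last spoke
`x p n`, closed up by the spokes `x p n` and `x p 0`, always bounds a face. -/
lemma fan {G : SimpleGraph V} {L R : Sym2 V → ι} {o : ι} (hd : IsDual G L R) {k : ℕ} (hk : 3 ≤ k)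
    {p : ℕ → V} (hinj : ∀ i < k, ∀ j < k, p i = p j → i = j) (hpk : p k = p 0)
    (hedge : ∀ i < k, G.Adj (p i) (p (i + 1)) ∧
      (L s(p i, p (i + 1)) = o ∨ R s(p i, p (i + 1)) = o))
    {x : V} (hx : x ∉ G.support) (N : Set V) (h0 : p 0 ∈ N) (j : ℕ) (hj : j < k) :
    ∃ n ≤ j, p n ∈ N ∧ (∀ i, n < i → i ≤ j → p i ∉ N) ∧
      ∃ (κ : Type) (L' R' : Sym2 V → κ) (o' : κ),
        IsDual (G ⊔ spokes x {w | ∃ i ≤ j, w = p i ∧ p i ∈ N}) L' R' ∧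
        (L' s(x, p n) = o' ∨ R' s(x, p n) = o') ∧
        (L' s(x, p 0) = o' ∨ R' s(x, p 0) = o') ∧
        (n = 0 → L' s(x, p 0) = o' ∧ R' s(x, p 0) = o') ∧
        ∀ i, n ≤ i → i < k → (L' s(p i, p (i + 1)) = o' ∨ R' s(p i, p (i + 1)) = o') := by
  have hxp : ∀ i < k, x ≠ p i := by
    rintro i hi rfl
    exact hx ((SimpleGraph.mem_support _).2 ⟨_, (hedge i hi).1⟩)
  have hxp' : ∀ i < k, x ≠ p (i + 1) := by
    intro i hi h
    exact hx ((SimpleGraph.mem_support _).2 ⟨_, h ▸ (hedge i hi).1.symm⟩)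
  induction j with
  | zero =>
    obtain ⟨L', R', hd', h1, h2, h3⟩ := hd.pendant o (hxp 0 hj) hx
    refine ⟨0, le_rfl, h0, fun i _ _ => by omega, ι, L', R', o, ?_, Or.inl h2, Or.inl h2,
      fun _ => ⟨h2, h3⟩, ?_⟩
    · have : {w | ∃ i ≤ 0, w = p i ∧ p i ∈ N} = insert (p 0) (∅ : Set V) := by
        ext w
        simp only [Set.mem_ofPred_eq, Set.mem_insert_iff, Set.mem_empty_iff_false, or_false]
        constructor
        · rintro ⟨i, hi, rfl, -⟩; congr 1; omega
        · rintro rfl; exact ⟨0, le_rfl, rfl, h0⟩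
      rw [this, spokes_insert]
      have h4 : spokes x (∅ : Set V) = ⊥ := by
        ext u v; simp [spokes_adj]
      rwa [h4, bot_sup_eq]
    · intro i _ hi
      have h4 := h1 s(p i, p (i + 1)) (hedge i hi).1
      rw [h4.1, h4.2]
      exact (hedge i hi).2
  | succ j ih =>
    obtain ⟨n, hnj, hnN, hnl, κ, L', R', o', hd', h1, h2, h3, h4⟩ := ih (by omega)
    by_cases hN : p (j + 1) ∈ N
    swap
    · refine ⟨n, by omega, hnN, ?_, κ, L', R', o', ?_, h1, h2, h3, h4⟩
      · intro i hi hi'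
        rcases Nat.lt_or_ge j i with h | h
        · have : i = j + 1 := by omega
          rwa [this]
        · exact hnl i hi h
      · have : {w | ∃ i ≤ j + 1, w = p i ∧ p i ∈ N} = {w | ∃ i ≤ j, w = p i ∧ p i ∈ N} := by
          ext w
          constructor
          · rintro ⟨i, hi, rfl, hi'⟩
            refine ⟨i, ?_, rfl, hi'⟩
            by_contra h
            have : i = j + 1 := by omega
            exact hN (this ▸ hi')
          · rintro ⟨i, hi, h⟩
            exact ⟨i, by omega, h⟩
        rwa [this]
    obtain ⟨P, hP, hPb⟩ := path_chain p n (j + 1) (by omega)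
      (fun i _ hi => (hedge i (by omega)).1.ne)
    set M : Set V := {w | ∃ i ≤ j, w = p i ∧ p i ∈ N} with hM
    have hPe : ∀ e, (P + Pi.single s(x, p n) 1 : Sym2 V → ZMod 2) e ≠ 0 → e = s(x, p n) ∨
        ∃ i, n ≤ i ∧ i < j + 1 ∧ e = s(p i, p (i + 1)) := by
      intro e he
      by_cases h5 : e = s(x, p n)
      · exact Or.inl h5
      · exact Or.inr (hP e (by simpa [h5] using he))
    have hxn : (spokes x M).Adj x (p n) := by
      rw [spokes_adj]
      exact ⟨hxp n (by omega), Or.inl ⟨rfl, n, hnj, rfl, hnN⟩⟩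
    obtain ⟨L₂, R₂, hd₂, k1, k2, k3⟩ := hd'.addEdge (o := o') (P := P + Pi.single s(x, p n) 1)
      (u := x) (v := p (j + 1)) (hxp _ hj) (by
        rw [SimpleGraph.sup_adj, spokes_adj]
        rintro (h5 | ⟨-, ⟨-, i, hi, h6, -⟩ | ⟨h5, -⟩⟩)
        · exact hx ((SimpleGraph.mem_support _).2 ⟨_, h5⟩)
        · have := hinj _ hj _ (by omega) h6
          omega
        · exact hxp _ hj h5.symm) (by
        intro e he
        rcases hPe e he with rfl | ⟨i, hi, hi', rfl⟩
        · exact ⟨Or.inr hxn, h1⟩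
        · exact ⟨Or.inl (hedge i (by omega)).1, h4 i hi (by omega)⟩) (by
        rw [map_add, hPb, bd_single (hxp n (by omega))]
        have e1 := fun_add_self (Pi.single (p n) 1 : V → ZMod 2)
        linear_combination e1)
    refine ⟨j + 1, le_rfl, hN, fun i _ _ => by omega, Option κ, L₂, R₂, some o', ?_,
      Or.inl k3, ?_, fun h => by omega, ?_⟩
    · have : {w | ∃ i ≤ j + 1, w = p i ∧ p i ∈ N} = insert (p (j + 1)) M := by
        ext w
        constructor
        · rintro ⟨i, hi, rfl, hi'⟩
          rcases Nat.lt_or_ge j i with h | h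
          · have : i = j + 1 := by omega
            exact Or.inl (by rw [this])
          · exact Or.inr ⟨i, h, rfl, hi'⟩
        · rintro (rfl | ⟨i, hi, h⟩)
          · exact ⟨j + 1, le_rfl, rfl, hN⟩
          · exact ⟨i, by omega, h⟩
      rw [this, spokes_insert, ← sup_assoc]
      exact hd₂
    · have hmem : s(x, p 0) ∈ (G ⊔ spokes x M).edgeSet :=
        Or.inr (spokes_adj.2 ⟨hxp 0 (by omega), Or.inl ⟨rfl, 0, by omega, rfl, h0⟩⟩)
      by_cases hn0 : n = 0
      · exact k2 _ hmem (h3 hn0).1 (h3 hn0).2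
      · refine k1 _ hmem ?_ h2
        by_contra hne
        rcases hPe _ hne with h5 | ⟨i, hi, hi', h5⟩
        · rw [Sym2.eq_iff] at h5
          rcases h5 with ⟨-, h5⟩ | ⟨h5, -⟩
          · exact hn0 (hinj _ (by omega) _ (by omega) h5).symm
          · exact hxp n (by omega) h5
        · rw [Sym2.eq_iff] at h5
          rcases h5 with ⟨h5, -⟩ | ⟨h5, -⟩
          · exact hxp i (by omega) h5
          · exact hxp' i (by omega) h5
    · intro i hi hik
      refine k1 _ (Or.inl (hedge i hik).1) ?_ (h4 i (by omega) hik)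
      by_contra hne
      rcases hPe _ hne with h5 | ⟨i', hi1, hi2, h5⟩
      · rw [Sym2.eq_iff] at h5
        rcases h5 with ⟨h5, -⟩ | ⟨-, h5⟩
        · exact hxp i hik h5.symm
        · exact hxp' i hik h5.symm
      · rw [Sym2.eq_iff] at h5
        rcases h5 with ⟨h5, -⟩ | ⟨h5, h6⟩
        · have := hinj _ hik _ (by omega) h5
          omega
        · have h7 := hinj _ hik _ (by omega) h5
          by_cases h8 : i + 1 < k
          · have := hinj _ h8 _ (by omega) h6
            omega
          · have h9 : i + 1 = k := by omega
            rw [h9, hpk] at h6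
            have := hinj _ (by omega) _ (by omega) h6
            omega

/-- Two adjacent new vertices `x` and `y` can both be drawn inside a face if the neighbours of `y`
on the face cycle lie between two cyclically consecutive neighbours `p n` and `p 0` of `x`. -/
lemma fan_two {G : SimpleGraph V} {L R : Sym2 V → ι} {o : ι} (hd : IsDual G L R) {k : ℕ}
    (hk : 3 ≤ k) {p : ℕ → V} (hinj : ∀ i < k, ∀ j < k, p i = p j → i = j) (hpk : p k = p 0)
    (hedge : ∀ i < k, G.Adj (p i) (p (i + 1)) ∧
      (L s(p i, p (i + 1)) = o ∨ R s(p i, p (i + 1)) = o))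
    {x y : V} (hxy : x ≠ y) (hx : x ∉ G.support) (hy : y ∉ G.support) (X Y : Set V) {n : ℕ}
    (hn : 0 < n) (hnk : n < k) (h0 : p 0 ∈ X) (hnX : p n ∈ X)
    (hlast : ∀ i, n < i → i < k → p i ∉ X) :
    HasDual (G ⊔ spokes x {w | ∃ i < k, w = p i ∧ p i ∈ X} ⊔
      spokes y (insert x {w | ∃ i, n ≤ i ∧ i ≤ k ∧ w = p i ∧ p i ∈ Y})) := by
  have hsp : ∀ i < k, p i ∈ G.support :=
    fun i hi => (SimpleGraph.mem_support _).2 ⟨_, (hedge i hi).1⟩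
  have hsp' : ∀ i ≤ k, p i ∈ G.support := by
    intro i hi
    rcases Nat.lt_or_ge i k with h | h
    · exact hsp i h
    · have : i = k := by omega
      rw [this, hpk]; exact hsp 0 (by omega)
  obtain ⟨n', hn', hnN, hnl, κ, L', R', o', hd', h1, h2, -, h4⟩ :=
    fan hd hk hinj hpk hedge hx X h0 (k - 1) (by omega)
  have hnn : n' = n := by
    rcases lt_trichotomy n' n with h | h | h
    · exact absurd hnX (hnl n h (by omega))
    · exact h
    · exact absurd hnN (hlast n' h (by omega))
  subst hnn
  have hset : {w | ∃ i ≤ k - 1, w = p i ∧ p i ∈ X} = {w | ∃ i < k, w = p i ∧ p i ∈ X} := by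
    ext w
    constructor
    · rintro ⟨i, hi, h⟩; exact ⟨i, by omega, h⟩
    · rintro ⟨i, hi, h⟩; exact ⟨i, by omega, h⟩
  rw [hset] at hd'
  set G₁ := G ⊔ spokes x {w | ∃ i < k, w = p i ∧ p i ∈ X} with hG₁
  let q : ℕ → V := fun i => if i = 0 ∨ i = k - n' + 2 then x else p (n' + i - 1)
  have q0 : q 0 = x := by simp [q]
  have qk : q (k - n' + 2) = x := by simp [q]
  have qi : ∀ i, 0 < i → i < k - n' + 2 → q i = p (n' + i - 1) := by
    intro i h5 h6
    have : ¬ (i = 0 ∨ i = k - n' + 2) := by omega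
    simp [q, this]
  have hpinj : ∀ i, n' ≤ i → i ≤ k → ∀ j, n' ≤ j → j ≤ k → p i = p j → i = j := by
    intro i hi hi' j hj hj' hij
    by_cases h5 : i = k
    · by_cases h6 : j = k
      · omega
      · rw [h5, hpk] at hij
        have := hinj _ (by omega) _ (by omega) hij
        omega
    · by_cases h6 : j = k
      · rw [h6, hpk] at hij
        have := hinj _ (by omega) _ (by omega) hij
        omega
      · exact hinj _ (by omega) _ (by omega) hij
  have hxp : ∀ i ≤ k, x ≠ p i := by
    rintro i hi rfl; exact hx (hsp' i hi)
  have adjx : ∀ i < k, p i ∈ X → G₁.Adj x (p i) := fun i hi hiX =>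
    Or.inr (spokes_adj.2 ⟨hxp i (by omega), Or.inl ⟨rfl, i, hi, rfl, hiX⟩⟩)
  have hres := fan hd' (k := k - n' + 2) (p := q) (by omega) (by
      intro i hi j hj hij
      by_cases h5 : i = 0
      · by_cases h6 : j = 0
        · omega
        · rw [h5, q0, qi j (by omega) hj] at hij
          exact absurd hij (hxp _ (by omega))
      · by_cases h6 : j = 0
        · rw [h6, q0, qi i (by omega) hi] at hij
          exact absurd hij.symm (hxp _ (by omega))
        · rw [qi i (by omega) hi, qi j (by omega) hj] at hij
          have := hpinj _ (by omega) (by omega) _ (by omega) (by omega) hij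
          omega) (by rw [qk, q0]) (o := o') (by
      intro i hi
      by_cases h5 : i = 0
      · subst h5
        have h6 : n' + (0 + 1) - 1 = n' := by omega
        rw [q0, qi _ (by omega) (by omega), h6]
        exact ⟨adjx n' hnk hnX, h1⟩
      · by_cases h6 : i + 1 = k - n' + 2
        · have h7 : n' + i - 1 = k := by omega
          rw [h6, qk, qi i (by omega) hi, h7, hpk, Sym2.eq_swap]
          exact ⟨(adjx 0 (by omega) h0).symm, h2⟩
        · have h7 : n' + (i + 1) - 1 = n' + i - 1 + 1 := by omega
          rw [qi i (by omega) hi, qi (i + 1) (by omega) (by omega), h7]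
          exact ⟨Or.inl (hedge _ (by omega)).1, h4 _ (by omega) (by omega)⟩)
      (x := y) (by
        intro hmem
        obtain ⟨w, hw⟩ := (SimpleGraph.mem_support _).1 hmem
        rcases hw with hw | hw
        · exact hy ((SimpleGraph.mem_support _).2 ⟨w, hw⟩)
        · rw [spokes_adj] at hw
          rcases hw with ⟨-, ⟨h5, -⟩ | ⟨-, i, hi, h5, -⟩⟩
          · exact hxy h5.symm
          · exact hy (h5 ▸ hsp i hi)) (insert x Y)
      (by rw [q0]; exact Or.inl rfl) (k - n' + 1) (by omega)
  obtain ⟨_, _, _, _, κ₂, L₂, R₂, o₂, hd₂, -⟩ := hres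
  refine hd₂.hasDual.mono (sup_le_sup_left ?_ _)
  intro u v huv
  rw [spokes_adj] at huv ⊢
  have hsub : ∀ w ∈ insert x {w | ∃ i, n' ≤ i ∧ i ≤ k ∧ w = p i ∧ p i ∈ Y},
      w ∈ {w | ∃ i ≤ k - n' + 1, w = q i ∧ q i ∈ insert x Y} := by
    rintro w (rfl | ⟨i, hi, hi', rfl, hiY⟩)
    · exact ⟨0, by omega, q0.symm, by rw [q0]; exact Or.inl rfl⟩
    · have : q (i - n' + 1) = p i := by
        rw [qi _ (by omega) (by omega)]; congr 1; omega
      exact ⟨i - n' + 1, by omega, this.symm, by rw [this]; exact Or.inr hiY⟩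
  refine ⟨huv.1, ?_⟩
  rcases huv.2 with ⟨h5, h6⟩ | ⟨h5, h6⟩
  · exact Or.inl ⟨h5, hsub _ h6⟩
  · exact Or.inr ⟨h5, hsub _ h6⟩

end Fan

end PlanarAdd

namespace PlanarAdd

open scoped Classical
open Finset

/-! ### Graphs without `K₅` and `K₃,₃` minors have duals -/

section Wagner

/-- Two `k`-periodic sets `X` and `Y` of at least two residues each: either `Y` lies between two
cyclically consecutive elements of `X`, or `X` and `Y` cross, or they have three common elements. -/
lemma cyclic_cases (k : ℕ) (X Y : ℕ → Prop) (hX : ∀ i, X (i + k) ↔ X i)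
    (hY : ∀ i, Y (i + k) ↔ Y i) (hX2 : ∀ s, ∃ i, 0 < i ∧ i < k ∧ X (s + i))
    (hY2 : ∀ s, ∃ i, 0 < i ∧ i < k ∧ Y (s + i)) :
    (∃ s n, 0 < n ∧ n < k ∧ X s ∧ X (s + n) ∧ (∀ i, n < i → i < k → ¬ X (s + i)) ∧
      (∀ i, 0 < i → i < n → ¬ Y (s + i))) ∨
    (∃ s a b c, 0 < a ∧ a < b ∧ b < c ∧ c < k ∧ Y s ∧ X (s + a) ∧ Y (s + b) ∧ X (s + c)) ∨
    (∃ s a b, 0 < a ∧ a < b ∧ b < k ∧ X s ∧ Y s ∧ X (s + a) ∧ Y (s + a) ∧ X (s + b) ∧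
      Y (s + b)) := by
  by_cases hsub : ∃ s, Y s ∧ ¬ X s
  · obtain ⟨s, hs, hs'⟩ := hsub
    let A := (Finset.range k).filter fun i => 0 < i ∧ X (s + i)
    have hA : ∀ i, i ∈ A ↔ i < k ∧ 0 < i ∧ X (s + i) := by intro i; simp [A]
    have hne : A.Nonempty := by
      obtain ⟨i, h1, h2, h3⟩ := hX2 s
      exact ⟨i, (hA i).2 ⟨h2, h1, h3⟩⟩
    obtain ⟨a, haA, hamin⟩ := A.exists_min_image id hne
    obtain ⟨b, hbA, hbmax⟩ := A.exists_max_image id hne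
    simp only [id] at hamin hbmax
    have ha := (hA a).1 haA
    have hb := (hA b).1 hbA
    have hab : a < b := by
      obtain ⟨i, h1, h2, h3⟩ := hX2 (s + a)
      rcases lt_trichotomy (a + i) k with h | h | h
      · have := hbmax (a + i) ((hA _).2 ⟨h, by omega, by rwa [← add_assoc]⟩)
        omega
      · exfalso
        rw [add_assoc, h, hX] at h3
        exact hs' h3
      · exfalso
        have e : s + a + i = s + (a + i - k) + k := by omega
        rw [e, hX] at h3
        have := hamin (a + i - k) ((hA _).2 ⟨by omega, by omega, h3⟩)
        omega
    by_cases hYm : ∃ i, a < i ∧ i < b ∧ Y (s + i)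
    · obtain ⟨i, h1, h2, h3⟩ := hYm
      exact Or.inr (Or.inl ⟨s, a, i, b, ha.2.1, h1, h2, hb.1, hs, ha.2.2, h3, hb.2.2⟩)
    · push Not at hYm
      refine Or.inl ⟨s + a, b - a, by omega, by omega, ha.2.2, ?_, ?_, ?_⟩
      · have e : s + a + (b - a) = s + b := by omega
        rw [e]; exact hb.2.2
      · intro i h1 h2 h3
        rcases lt_trichotomy (a + i) k with h | h | h
        · have := hbmax (a + i) ((hA _).2 ⟨h, by omega, by rwa [← add_assoc]⟩)
          omega
        · rw [add_assoc, h, hX] at h3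
          exact hs' h3
        · have e : s + a + i = s + (a + i - k) + k := by omega
          rw [e, hX] at h3
          have := hamin (a + i - k) ((hA _).2 ⟨by omega, by omega, h3⟩)
          omega
      · intro i h1 h2 h3
        rw [add_assoc] at h3
        exact hYm (a + i) (by omega) (by omega) h3
  · push Not at hsub
    obtain ⟨s', -, -, hs⟩ := hY2 0
    set s := 0 + s' with hs_def
    clear_value s
    obtain ⟨d, hd0, hdk, hd⟩ := hY2 s
    by_cases h3 : ∃ e, 0 < e ∧ e < k ∧ e ≠ d ∧ Y (s + e)
    · obtain ⟨e, he0, hek, hne, he⟩ := h3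
      right; right
      rcases lt_or_gt_of_ne hne with h | h
      · exact ⟨s, e, d, he0, h, hdk, hsub _ hs, hs, hsub _ he, he, hsub _ hd, hd⟩
      · exact ⟨s, d, e, hd0, h, hek, hsub _ hs, hs, hsub _ hd, hd, hsub _ he, he⟩
    · push Not at h3
      by_cases h4 : ∃ a, 0 < a ∧ a < d ∧ X (s + a)
      · by_cases h5 : ∃ c, d < c ∧ c < k ∧ X (s + c)
        · obtain ⟨a, ha0, had, ha⟩ := h4
          obtain ⟨c, hdc, hck, hc⟩ := h5
          exact Or.inr (Or.inl ⟨s, a, d, c, ha0, had, hdc, hck, hs, ha, hd, hc⟩)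
        · push Not at h5
          exact Or.inl ⟨s, d, hd0, hdk, hsub _ hs, hsub _ hd, h5,
            fun i h6 h7 => h3 i h6 (by omega) (by omega)⟩
      · push Not at h4
        refine Or.inl ⟨s + d, k - d, by omega, by omega, hsub _ hd, ?_, ?_, ?_⟩
        · have e : s + d + (k - d) = s + k := by omega
          rw [e, hX]; exact hsub _ hs
        · intro i h6 h7 h8
          have e : s + d + i = s + (d + i - k) + k := by omega
          rw [e, hX] at h8
          exact h4 _ (by omega) (by omega) h8
        · intro i h6 h7 h8
          rw [add_assoc] at h8
          exact h3 (d + i) (by omega) (by omega) (by omega) h8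

variable {V : Type}

lemma arc_disjoint {p : ℕ → V} {k : ℕ} (hinj : ∀ i < k, ∀ j < k, p i = p j → i = j)
    {a b c d : ℕ} (hb : b ≤ c) (hd : d ≤ k) : ∀ w, w ∈ p '' Set.Ico a b → w ∉ p '' Set.Ico c d := by
  rintro w ⟨i, hi, rfl⟩ ⟨j, hj, hij⟩
  simp only [Set.mem_Ico] at hi hj
  have := hinj j (by omega) i (by omega) hij
  omega

lemma cross_minor {G : SimpleGraph V} {p : ℕ → V} {k : ℕ}
    (hinj : ∀ i < k, ∀ j < k, p i = p j → i = j) (hpk : p k = p 0)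
    (hp : ∀ i, G.Adj (p i) (p (i + 1))) {x y : V} (hxy : G.Adj x y) (hx : ∀ i, x ≠ p i)
    (hy : ∀ i, y ≠ p i) {a b c : ℕ} (ha : 0 < a) (hab : a < b) (hbc : b < c) (hck : c < k)
    (h0 : G.Adj y (p 0)) (h1 : G.Adj x (p a)) (h2 : G.Adj y (p b)) (h3 : G.Adj x (p c)) :
    IsMinor (completeBipartiteGraph (Fin 3) (Fin 3)) G := by
  have harc : ∀ i j, i < j → CS G (p '' Set.Ico i j) := fun i j h => cs_arc h fun t _ _ => hp t
  have hmem : ∀ {i j t}, i ≤ t → t < j → p t ∈ p '' Set.Ico i j :=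
    fun h1 h2 => ⟨_, ⟨h1, h2⟩, rfl⟩
  have hnx : ∀ i j, x ∉ p '' Set.Ico i j := by rintro i j ⟨t, -, h⟩; exact hx t h.symm
  have hny : ∀ i j, y ∉ p '' Set.Ico i j := by rintro i j ⟨t, -, h⟩; exact hy t h.symm
  have hstep : ∀ t, 0 < t → G.Adj (p (t - 1)) (p t) := by
    intro t ht
    have := hp (t - 1)
    rwa [Nat.sub_add_cancel ht] at this
  refine isMinor_K33 ![{x}, p '' Set.Ico 0 a, p '' Set.Ico b c]
    ![{y}, p '' Set.Ico a b, p '' Set.Ico c k] ?_ ?_ ?_ ?_ ?_ ?_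
  · intro i
    fin_cases i
    · exact cs_singleton _ _
    · exact harc _ _ ha
    · exact harc _ _ hbc
  · intro i
    fin_cases i
    · exact cs_singleton _ _
    · exact harc _ _ hab
    · exact harc _ _ hck
  · intro i j hij w
    fin_cases i <;> fin_cases j <;> simp at hij
    · rintro rfl; exact hnx _ _
    · rintro rfl; exact hnx _ _
    · exact arc_disjoint hinj (by omega) (by omega) w
  · intro i j hij w
    fin_cases i <;> fin_cases j <;> simp at hij
    · rintro rfl; exact hny _ _
    · rintro rfl; exact hny _ _
    · exact arc_disjoint hinj (by omega) (by omega) w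
  · intro i j w
    fin_cases i <;> fin_cases j
    · rintro rfl; exact hxy.ne
    · rintro rfl; exact hnx _ _
    · rintro rfl; exact hnx _ _
    · rintro h rfl; exact hny _ _ h
    · exact arc_disjoint hinj (by omega) (by omega) w
    · exact arc_disjoint hinj (by omega) (by omega) w
    · rintro h rfl; exact hny _ _ h
    · intro h h'; exact arc_disjoint hinj (by omega) (by omega) w h' h
    · exact arc_disjoint hinj (by omega) (by omega) w
  · intro i j
    fin_cases i <;> fin_cases j
    · exact ⟨x, rfl, y, rfl, hxy⟩
    · exact ⟨x, rfl, p a, hmem le_rfl hab, h1⟩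
    · exact ⟨x, rfl, p c, hmem le_rfl hck, h3⟩
    · exact ⟨p 0, hmem le_rfl ha, y, rfl, h0.symm⟩
    · exact ⟨p (a - 1), hmem (by omega) (by omega), p a, hmem le_rfl hab, hstep a ha⟩
    · refine ⟨p 0, hmem le_rfl ha, p (k - 1), hmem (by omega) (by omega), ?_⟩
      rw [← hpk]; exact (hstep k (by omega)).symm
    · exact ⟨p b, hmem le_rfl hbc, y, rfl, h2.symm⟩
    · exact ⟨p b, hmem le_rfl hbc, p (b - 1), hmem (by omega) (by omega),
        (hstep b (by omega)).symm⟩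
    · exact ⟨p (c - 1), hmem (by omega) (by omega), p c, hmem le_rfl hck, hstep c (by omega)⟩

lemma triple_minor {G : SimpleGraph V} {p : ℕ → V} {k : ℕ}
    (hinj : ∀ i < k, ∀ j < k, p i = p j → i = j) (hpk : p k = p 0)
    (hp : ∀ i, G.Adj (p i) (p (i + 1))) {x y : V} (hxy : G.Adj x y) (hx : ∀ i, x ≠ p i)
    (hy : ∀ i, y ≠ p i) {a b : ℕ} (ha : 0 < a) (hab : a < b) (hbk : b < k)
    (hx0 : G.Adj x (p 0)) (hy0 : G.Adj y (p 0)) (hxa : G.Adj x (p a)) (hya : G.Adj y (p a))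
    (hxb : G.Adj x (p b)) (hyb : G.Adj y (p b)) :
    IsMinor (completeGraph (Fin 5)) G := by
  have harc : ∀ i j, i < j → CS G (p '' Set.Ico i j) := fun i j h => cs_arc h fun t _ _ => hp t
  have hmem : ∀ {i j t}, i ≤ t → t < j → p t ∈ p '' Set.Ico i j :=
    fun h1 h2 => ⟨_, ⟨h1, h2⟩, rfl⟩
  have hnx : ∀ i j, x ∉ p '' Set.Ico i j := by rintro i j ⟨t, -, h⟩; exact hx t h.symm
  have hny : ∀ i j, y ∉ p '' Set.Ico i j := by rintro i j ⟨t, -, h⟩; exact hy t h.symm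
  have hstep : ∀ t, 0 < t → G.Adj (p (t - 1)) (p t) := by
    intro t ht
    have := hp (t - 1)
    rwa [Nat.sub_add_cancel ht] at this
  refine isMinor_K5 ![{x}, {y}, p '' Set.Ico 0 a, p '' Set.Ico a b, p '' Set.Ico b k] ?_ ?_ ?_
  · intro i
    fin_cases i
    · exact cs_singleton _ _
    · exact cs_singleton _ _
    · exact harc _ _ ha
    · exact harc _ _ hab
    · exact harc _ _ hbk
  · intro i j hij w
    fin_cases i <;> fin_cases j <;> simp at hij
    · rintro rfl; exact hxy.ne
    · rintro rfl; exact hnx _ _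
    · rintro rfl; exact hnx _ _
    · rintro rfl; exact hnx _ _
    · rintro rfl; exact hny _ _
    · rintro rfl; exact hny _ _
    · rintro rfl; exact hny _ _
    · exact arc_disjoint hinj (by omega) (by omega) w
    · exact arc_disjoint hinj (by omega) (by omega) w
    · exact arc_disjoint hinj (by omega) (by omega) w
  · intro i j hij
    fin_cases i <;> fin_cases j <;> simp at hij
    · exact ⟨x, rfl, y, rfl, hxy⟩
    · exact ⟨x, rfl, p 0, hmem le_rfl ha, hx0⟩
    · exact ⟨x, rfl, p a, hmem le_rfl hab, hxa⟩
    · exact ⟨x, rfl, p b, hmem le_rfl hbk, hxb⟩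
    · exact ⟨y, rfl, p 0, hmem le_rfl ha, hy0⟩
    · exact ⟨y, rfl, p a, hmem le_rfl hab, hya⟩
    · exact ⟨y, rfl, p b, hmem le_rfl hbk, hyb⟩
    · exact ⟨p (a - 1), hmem (by omega) (by omega), p a, hmem le_rfl hab, hstep a ha⟩
    · refine ⟨p 0, hmem le_rfl ha, p (k - 1), hmem (by omega) (by omega), ?_⟩
      rw [← hpk]; exact (hstep k (by omega)).symm
    · exact ⟨p (b - 1), hmem (by omega) (by omega), p b, hmem le_rfl hbk, hstep b (by omega)⟩

/-- The graph obtained by contracting `y` into `x`; the vertex `y` becomes isolated. -/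
def merge (G : SimpleGraph V) (x y : V) : SimpleGraph V where
  Adj u v := u ≠ v ∧ u ≠ y ∧ v ≠ y ∧ (G.Adj u v ∨ (u = x ∧ G.Adj y v) ∨ (v = x ∧ G.Adj y u))
  symm.symm u v h := ⟨h.1.symm, h.2.2.1, h.2.1, by
    rcases h.2.2.2 with h | h | h
    · exact Or.inl h.symm
    · exact Or.inr (Or.inr h)
    · exact Or.inr (Or.inl h)⟩
  loopless.irrefl _ h := h.1 rfl

lemma merge_adj {G : SimpleGraph V} {x y u v : V} : (merge G x y).Adj u v ↔
    u ≠ v ∧ u ≠ y ∧ v ≠ y ∧ (G.Adj u v ∨ (u = x ∧ G.Adj y v) ∨ (v = x ∧ G.Adj y u)) := Iff.rfl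

lemma IsPlanar.merge {G : SimpleGraph V} (h : IsPlanar G) {x y : V} (hxy : G.Adj x y) :
    IsPlanar (merge G x y) := by
  have hsy : ∀ v ∈ (PlanarAdd.merge G x y).support, v ≠ y := by
    intro v hv
    obtain ⟨w, hw⟩ := (SimpleGraph.mem_support _).1 hv
    exact hw.2.1
  refine IsPlanar.of_model h (fun v => if v = x then {x} ∪ {y} else {v}) ?_ ?_ ?_
  · intro v _
    split_ifs
    · exact (cs_singleton _ _).union (cs_singleton _ _) ⟨x, rfl, y, rfl, Or.inr hxy⟩
    · exact cs_singleton _ _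
  · intro u hu v hv w
    have h1 := hsy u hu
    have h2 := hsy v hv
    split_ifs with h3 h4 h4
    · intro _ _; rw [h3, h4]
    · simp only [Set.mem_union, Set.mem_singleton_iff]
      rintro (h5 | h5) h6
      · exact absurd (h6.symm.trans h5) h4
      · exact absurd (h6.symm.trans h5) h2
    · simp only [Set.mem_union, Set.mem_singleton_iff]
      rintro h6 (h5 | h5)
      · exact absurd (h6.symm.trans h5) h3
      · exact absurd (h6.symm.trans h5) h1
    · rintro rfl h; exact h
  · intro u v huv
    have hself : ∀ t : V, t ∈ (if t = x then {x} ∪ {y} else {t} : Set V) := by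
      intro t; split_ifs with h5
      · exact Or.inl h5
      · rfl
    have hyx : y ∈ (if x = x then {x} ∪ {y} else {x} : Set V) := by simp
    obtain ⟨-, -, -, h1 | ⟨rfl, h1⟩ | ⟨rfl, h1⟩⟩ := huv
    · exact ⟨u, hself u, v, hself v, h1⟩
    · exact ⟨y, hyx, v, hself v, h1⟩
    · exact ⟨u, hself u, y, hyx, h1.symm⟩

end Wagner

end PlanarAdd

namespace PlanarAdd

open scoped Classical
open Finset

section Wagner

variable {V : Type} [Fintype V]

lemma Conn.inn {G : SimpleGraph V} {S T : Finset V} (h : Conn G S) (hST : S ⊆ T) :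
    Conn (inn G T) S :=
  fun A hA hne hcl => h A hA hne fun a ha b hb hab =>
    hcl a ha b hb ⟨hab, hST (hA ha), hST hb⟩

lemma TwoConn.inn {G : SimpleGraph V} {S : Finset V} (h : TwoConn G S) :
    TwoConn (inn G S) S :=
  ⟨h.1.inn (subset_refl _), fun x hx => (h.2 x hx).inn (Finset.erase_subset _ _)⟩

lemma hasDual_K4 {W : Finset V} (hW : W.card = 4) {G : SimpleGraph V} (hon : On G W) :
    HasDual G := by
  obtain ⟨x, a, b, c, hxa, hxb, hxc, hab, hac, hbc, rfl⟩ := Finset.card_eq_four.1 hW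
  have h0 : IsDual (⊥ : SimpleGraph V) (fun _ => ()) (fun _ => ()) := isDual_bot _ _
  obtain ⟨L₁, R₁, h₁, _⟩ := h0.pendant () hab (by simp [SimpleGraph.mem_support])
  rw [bot_sup_eq] at h₁
  obtain ⟨L₂, R₂, h₂, _⟩ := h₁.pendant () (x := c) (p := b) hbc.symm (by
    intro hv
    obtain ⟨w, hw⟩ := (SimpleGraph.mem_support _).1 hv
    rw [edge_adj'] at hw
    grind)
  rw [SimpleGraph.edge_comm c b] at h₂
  have hmem : ∀ e, e ∈ (SimpleGraph.edge a b ⊔ SimpleGraph.edge b c).edgeSet ↔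
      e = s(a, b) ∨ e = s(b, c) := by
    intro e
    rw [mem_sup_edge hbc, SimpleGraph.edgeSet_edge_of_ne hab, Set.mem_singleton_iff]
  obtain ⟨L₃, R₃, h₃, -, k2, k3⟩ := h₂.addEdge (o := ())
    (P := Pi.single s(a, b) 1 + Pi.single s(b, c) 1) hac (by
      rw [SimpleGraph.sup_adj, edge_adj', edge_adj']
      grind) (by
      intro e he
      refine ⟨?_, Or.inl rfl⟩
      rw [hmem]
      by_contra hcon
      push Not at hcon
      simp [hcon.1, hcon.2] at he) (by
      rw [map_add, bd_single hab, bd_single hbc]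
      have := fun_add_self (Pi.single b 1 : V → ZMod 2)
      linear_combination this)
  let p : ℕ → V := fun i => if i = 1 then b else if i = 2 then c else a
  have p0 : p 0 = a := by simp [p]
  have p1 : p 1 = b := by simp [p]
  have p2 : p 2 = c := by simp [p]
  have p3 : p 3 = a := by simp [p]
  have hres := fan h₃ (k := 3) (p := p) (o := some ()) le_rfl (by
      intro i hi j hj hij
      interval_cases i <;> interval_cases j <;> simp [p0, p1, p2] at hij ⊢
      · exact hab hij
      · exact hac hij
      · exact hab hij.symm
      · exact hbc hij
      · exact hac hij.symm
      · exact hbc hij.symm) (by rw [p0, p3]) (by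
      intro i hi
      interval_cases i
      · simp only [p0, p1, zero_add]
        exact ⟨Or.inl (Or.inl (by rw [edge_adj']; exact ⟨Or.inl ⟨rfl, rfl⟩, hab⟩)),
          k2 _ ((hmem _).2 (Or.inl rfl)) rfl rfl⟩
      · simp only [p1, p2, Nat.reduceAdd]
        exact ⟨Or.inl (Or.inr (by rw [edge_adj']; exact ⟨Or.inl ⟨rfl, rfl⟩, hbc⟩)),
          k2 _ ((hmem _).2 (Or.inr rfl)) rfl rfl⟩
      · simp only [p2, p3, Nat.reduceAdd]
        refine ⟨Or.inr (by rw [edge_adj']; exact ⟨Or.inr ⟨rfl, rfl⟩, hac.symm⟩), ?_⟩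
        rw [Sym2.eq_swap]; exact Or.inl k3) (x := x) (by
      intro hv
      obtain ⟨w, hw⟩ := (SimpleGraph.mem_support _).1 hv
      rw [SimpleGraph.sup_adj, SimpleGraph.sup_adj, edge_adj', edge_adj', edge_adj'] at hw
      grind) Set.univ (Set.mem_univ _) 2 (by norm_num)
  obtain ⟨_, _, _, _, κ, L₄, R₄, o₄, h₄, -⟩ := hres
  refine h₄.hasDual.mono ?_
  have hs : ∀ w, (w = a ∨ w = b ∨ w = c) → w ∈ {w | ∃ i ≤ 2, w = p i ∧ p i ∈ Set.univ} := by
    rintro w (rfl | rfl | rfl)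
    · exact ⟨0, by omega, p0.symm, trivial⟩
    · exact ⟨1, by omega, p1.symm, trivial⟩
    · exact ⟨2, by omega, p2.symm, trivial⟩
  intro u v huv
  have hu := hon u v huv
  have hv := hon.right huv
  have hne := huv.ne
  rw [SimpleGraph.sup_adj, SimpleGraph.sup_adj, SimpleGraph.sup_adj, edge_adj', edge_adj',
    edge_adj', spokes_adj]
  simp only [Finset.mem_insert, Finset.mem_singleton] at hu hv
  by_cases hux : u = x
  · have hv' : v = a ∨ v = b ∨ v = c := by
      rcases hv with hv | hv
      · exact absurd (hux.trans hv.symm) hne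
      · exact hv
    exact Or.inr ⟨hne, Or.inl ⟨hux, hs v hv'⟩⟩
  · by_cases hvx : v = x
    · have hu' : u = a ∨ u = b ∨ u = c := by tauto
      exact Or.inr ⟨hne, Or.inr ⟨hvx, hs u hu'⟩⟩
    · left
      grind

/-- The inductive step for 3-connected graphs: an edge `xy` is contracted, the rest is drawn with
the neighbours of `x` and `y` on a common face, and the edge is expanded again. -/
lemma wagner_step {G : SimpleGraph V} {W : Finset V} (hW : 5 ≤ W.card) (hon : On G W)
    (hG : IsPlanar G) {x y : V} (hx : x ∈ W) (hy : y ∈ W) (hxy : G.Adj x y)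
    (h3 : ∀ a ∈ W, ∀ b ∈ W, Conn G (W \ {a, b})) (h2 : TwoConn G (W \ {x, y}))
    (hK : HasDual (merge G x y)) : HasDual G := by
  have hxny := hxy.ne
  have hmemW' : ∀ w, w ∈ W \ {x, y} ↔ w ∈ W ∧ w ≠ x ∧ w ≠ y := by
    intro w; simp
  have hcard : 3 ≤ (W \ {x, y}).card := by
    have h1 := Finset.le_card_sdiff ({x, y} : Finset V) W
    have h2 : ({x, y} : Finset V).card ≤ 2 := Finset.card_le_two
    omega
  -- each end of the edge has two further neighbours
  have hdeg : ∀ u ∈ W, ∀ v ∈ W, u ≠ v → ∀ w, ∃ w', w' ≠ w ∧ w' ≠ u ∧ w' ≠ v ∧ G.Adj u w' := by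
    intro u hu v hv huv w
    by_contra hcon
    push Not at hcon
    have aux : ∀ t ∈ W, (t = w ∨ w ∉ W) → t ≠ u → False := by
      intro t ht htw htu
      have h4 := h3 v hv t ht {u} (by simp [hu, huv, htu.symm]) ⟨u, by simp⟩ (by
        intro a ha b hb hab
        rw [Finset.mem_singleton] at ha
        subst ha
        simp only [Finset.mem_sdiff, Finset.mem_insert, Finset.mem_singleton, not_or] at hb
        exfalso
        refine hcon b ?_ hab.ne.symm hb.2.1 hab
        rintro rfl
        rcases htw with h | h
        · exact hb.2.2 h.symm
        · exact h hb.1)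
      have h5 := Finset.le_card_sdiff ({v, t} : Finset V) W
      have h6 : ({v, t} : Finset V).card ≤ 2 := Finset.card_le_two
      rw [← h4, Finset.card_singleton] at h5
      omega
    by_cases hw : w ∈ W
    · by_cases hwu : w = u
      · -- here `w` is irrelevant, and `v` itself can serve as the second cut vertex
        subst hwu
        have h4 := h3 v hv v hv {w} (by simp [hu, huv]) ⟨w, by simp⟩ (by
          intro a ha b hb hab
          rw [Finset.mem_singleton] at ha
          subst ha
          simp only [Finset.mem_sdiff, Finset.mem_insert, Finset.mem_singleton, not_or] at hb
          exact absurd hab (hcon b hab.ne.symm hab.ne.symm hb.2.1))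
        have h5 := Finset.le_card_sdiff ({v, v} : Finset V) W
        have h6 : ({v, v} : Finset V).card ≤ 2 := Finset.card_le_two
        rw [← h4, Finset.card_singleton] at h5
        omega
      · exact aux w hw (Or.inl rfl) hwu
    · exact aux v hv (Or.inr hw) huv.symm
  have hKadj : ∀ w, (merge G x y).Adj x w ↔ w ≠ x ∧ w ≠ y ∧ (G.Adj x w ∨ G.Adj y w) := by
    intro w
    rw [merge_adj]
    constructor
    · rintro ⟨h4, -, h5, h6 | ⟨-, h6⟩ | ⟨h6, -⟩⟩
      · exact ⟨h4.symm, h5, Or.inl h6⟩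
      · exact ⟨h4.symm, h5, Or.inr h6⟩
      · exact absurd h6.symm h4
    · rintro ⟨h4, h5, h6⟩
      exact ⟨h4.symm, hxny, h5, by tauto⟩
  have hKW : ∀ w, (merge G x y).Adj x w → w ∈ W \ {x, y} := by
    intro w hw
    rw [hKadj] at hw
    rw [hmemW']
    refine ⟨?_, hw.1, hw.2.1⟩
    rcases hw.2.2 with h | h
    · exact hon.right h
    · exact hon.right h
  obtain ⟨ι, L, R, o, hd, hface⟩ := exists_face (K := merge G x y) (H := inn G (W \ {x, y}))
    (W := W \ {x, y}) (v := x) (by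
      intro a b
      rw [inn_adj, hmemW', hmemW', merge_adj]
      constructor
      · rintro ⟨h4, ⟨-, h5, h6⟩, -, h7, h8⟩
        exact ⟨⟨h4.ne, h6, h8, Or.inl h4⟩, h5, h7⟩
      · rintro ⟨⟨h4, h5, h6, h7⟩, h8, h9⟩
        have h10 : G.Adj a b := by tauto
        exact ⟨h10, ⟨hon _ _ h10, h8, h5⟩, hon.right h10, h9, h6⟩)
    (h2.1.inn (subset_refl _)) hKW (by simp) (by
      intro w
      obtain ⟨w', h4, h5, h6, h7⟩ := hdeg x hx y hy hxny w
      exact ⟨w', h4, (hKadj w').2 ⟨h5, h6, Or.inl h7⟩⟩) hK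
  have hon' := on_inn G (W \ {x, y})
  obtain ⟨w₀, -, h4, h5, h6⟩ := hdeg x hx y hy hxny x
  obtain ⟨u₀, hu₀, hu₀o⟩ := hface w₀ ((hKadj w₀).2 ⟨h4, h5, Or.inl h6⟩)
  obtain ⟨k, p, hk, hper, hinj, hedge, hcov⟩ := h2.inn.face_cycle hon' hcard hd hu₀ hu₀o
  have hper' : Function.Periodic p k := hper
  have hcover : ∀ s w, (merge G x y).Adj x w → ∃ i < k, p (s + i) = w := by
    intro s w hw
    obtain ⟨u, hu, huo⟩ := hface w hw
    obtain ⟨i, hi, rfl⟩ := hcov w u hu huo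
    refine ⟨(i + (k - s % k)) % k, Nat.mod_lt _ (by omega), ?_⟩
    rw [← hper'.map_mod_nat (s + _), ← hper'.map_mod_nat i]
    congr 1
    have hs := Nat.mod_lt s (show 0 < k by omega)
    rw [Nat.add_mod_mod]
    have e : s + (i + (k - s % k)) = i + k * (s / k + 1) := by
      have := Nat.div_add_mod s k
      rw [mul_add, mul_one]
      omega
    rw [e, Nat.add_mul_mod_self_left]
  have hpW : ∀ i, p i ∈ W \ {x, y} := fun i => hon' _ _ (hedge i).1
  have hxp : ∀ i, x ≠ p i := fun i h => ((hmemW' _).1 (hpW i)).2.1 h.symm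
  have hyp : ∀ i, y ≠ p i := fun i h => ((hmemW' _).1 (hpW i)).2.2 h.symm
  have hpadj : ∀ i, G.Adj (p i) (p (i + 1)) := fun i => (hedge i).1.1
  have hshift : ∀ s, ∀ i < k, ∀ j < k, p (s + i) = p (s + j) → i = j := by
    intro s i hi j hj hij
    rw [← hper'.map_mod_nat (s + i), ← hper'.map_mod_nat (s + j)] at hij
    have := hinj _ (Nat.mod_lt _ (by omega)) _ (Nat.mod_lt _ (by omega)) hij
    have h7 : i % k = j % k := Nat.ModEq.add_left_cancel' s this
    rwa [Nat.mod_eq_of_lt hi, Nat.mod_eq_of_lt hj] at h7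
  have htwo : ∀ u v, u ∈ W → v ∈ W → u ≠ v →
      (∀ w, w ≠ u → w ≠ v → G.Adj u w → (merge G x y).Adj x w) →
      ∀ s, ∃ i, 0 < i ∧ i < k ∧ G.Adj u (p (s + i)) := by
    intro u v hu hv huv hm s
    obtain ⟨w, h7, h8, h9, h10⟩ := hdeg u hu v hv huv (p s)
    obtain ⟨i, hi, rfl⟩ := hcover s w (hm w h8 h9 h10)
    refine ⟨i, ?_, hi, h10⟩
    rcases Nat.eq_zero_or_pos i with h | h
    · subst h; exact absurd rfl h7
    · exact h
  have hX2 := htwo x y hx hy hxny (fun w h7 h8 h9 => (hKadj w).2 ⟨h7, h8, Or.inl h9⟩)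
  have hY2 := htwo y x hy hx hxny.symm (fun w h7 h8 h9 => (hKadj w).2 ⟨h8, h7, Or.inr h9⟩)
  rcases cyclic_cases k (fun i => G.Adj x (p i)) (fun i => G.Adj y (p i))
    (fun i => by simp only [hper]) (fun i => by simp only [hper]) hX2 hY2 with
    ⟨s, n, hn0, hnk, hX0, hXn, hlast, hY⟩ |
    ⟨s, a, b, c, ha, hab, hbc, hck, hY0, hXa, hYb, hXc⟩ |
    ⟨s, a, b, ha, hab, hbk, hX0, hY0, hXa, hYa, hXb, hYb⟩
  · have hsup : ∀ v, v ∉ W \ {x, y} → v ∉ (inn G (W \ {x, y})).support :=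
      fun v hv hs => hv (hon'.supp hs)
    have hres := fan_two hd (k := k) hk (p := fun i => p (s + i)) (hshift s)
      (by simp only [add_zero]; exact hper s) (o := o) (fun i _ => hedge (s + i)) hxny
      (hsup x (by simp)) (hsup y (by simp)) {w | G.Adj x w} {w | G.Adj y w} hn0 hnk hX0 hXn hlast
    refine hres.mono ?_
    intro u v huv
    -- all edges at `x` and at `y` are spokes
    have hsx : ∀ v, v ≠ y → G.Adj x v →
        v ∈ {w | ∃ i < k, w = p (s + i) ∧ p (s + i) ∈ {w | G.Adj x w}} := by
      intro v hvy hv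
      obtain ⟨i, hi, rfl⟩ := hcover s v ((hKadj v).2 ⟨hv.ne.symm, hvy, Or.inl hv⟩)
      exact ⟨i, hi, rfl, hv⟩
    have hsy : ∀ v, G.Adj y v → v ∈ insert x
        {w | ∃ i, n ≤ i ∧ i ≤ k ∧ w = p (s + i) ∧ p (s + i) ∈ {w | G.Adj y w}} := by
      intro v hv
      by_cases hvx : v = x
      · exact Or.inl hvx
      · obtain ⟨i, hi, rfl⟩ := hcover s v ((hKadj v).2 ⟨hvx, hv.ne.symm, Or.inr hv⟩)
        refine Or.inr ?_
        by_cases hi0 : i = 0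
        · subst hi0
          refine ⟨k, by omega, le_rfl, (hper s).symm, ?_⟩
          show G.Adj y (p (s + k))
          rw [hper]; exact hv
        · refine ⟨i, ?_, by omega, rfl, hv⟩
          by_contra hin
          exact hY i (by omega) (by omega) hv
    rw [SimpleGraph.sup_adj, SimpleGraph.sup_adj, spokes_adj, spokes_adj, inn_adj]
    have hne := huv.ne
    by_cases huy : u = y
    · subst huy; exact Or.inr ⟨hne, Or.inl ⟨rfl, hsy v huv⟩⟩
    by_cases hvy : v = y
    · subst hvy; exact Or.inr ⟨hne, Or.inr ⟨rfl, hsy u huv.symm⟩⟩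
    by_cases hux : u = x
    · subst hux; exact Or.inl (Or.inr ⟨hne, Or.inl ⟨rfl, hsx v hvy huv⟩⟩)
    by_cases hvx : v = x
    · subst hvx; exact Or.inl (Or.inr ⟨hne, Or.inr ⟨rfl, hsx u huy huv.symm⟩⟩)
    exact Or.inl (Or.inl ⟨huv, (hmemW' u).2 ⟨hon _ _ huv, hux, huy⟩,
      (hmemW' v).2 ⟨hon.right huv, hvx, hvy⟩⟩)
  · exact absurd (cross_minor (p := fun i => p (s + i)) (hshift s)
      (by simp only [add_zero]; exact hper s) (fun i => hpadj (s + i)) hxy (fun i => hxp _)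
      (fun i => hyp _) ha hab hbc hck hY0 hXa hYb hXc) hG.2
  · exact absurd (triple_minor (p := fun i => p (s + i)) (hshift s)
      (by simp only [add_zero]; exact hper s) (fun i => hpadj (s + i)) hxy (fun i => hxp _)
      (fun i => hyp _) ha hab hbk hX0 hY0 hXa hYa hXb hYb) hG.1

lemma not_conn {G : SimpleGraph V} {S : Finset V} (h : ¬ Conn G S) :
    ∃ A B : Finset V, A.Nonempty ∧ B.Nonempty ∧ Disjoint A B ∧ A ∪ B = S ∧
      ∀ a ∈ A, ∀ b ∈ B, ¬ G.Adj a b := by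
  rw [Conn] at h
  push Not at h
  obtain ⟨A, hA, hne, hcl, hneq⟩ := h
  refine ⟨A, S \ A, hne, ?_, Finset.disjoint_sdiff, Finset.union_sdiff_of_subset hA, ?_⟩
  · rw [Finset.sdiff_nonempty]
    exact fun h => hneq (Finset.Subset.antisymm hA h)
  · intro a ha b hb hab
    rw [Finset.mem_sdiff] at hb
    exact hb.2 (hcl a ha b hb.1 hab)

/-- Across a 2-cut `x, y` of a 2-connected planar graph, one side together with the edge `xy` is a
minor: the other side is contracted into `x`. -/
lemma IsPlanar.side {G : SimpleGraph V} {W A B : Finset V} (h2 : TwoConn G W) {x y : V}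
    (hx : x ∈ W) (hy : y ∈ W) (hxy : x ≠ y) (hAB : Disjoint A B) (hBne : B.Nonempty)
    (hun : A ∪ B = W \ {x, y}) (hno : ∀ a ∈ A, ∀ b ∈ B, ¬ G.Adj a b) (hG : IsPlanar G) :
    IsPlanar (PlanarAdd.inn G (A ∪ {x, y}) ⊔ SimpleGraph.edge x y) := by
  have hmem : ∀ w, (w ∈ A ∨ w ∈ B) ↔ w ∈ W ∧ w ≠ x ∧ w ≠ y := by
    intro w
    rw [← Finset.mem_union, hun]; simp
  rw [Finset.disjoint_left] at hAB
  have hxB : x ∉ B := fun h => ((hmem x).1 (Or.inr h)).2.1 rfl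
  have hyB : y ∉ B := fun h => ((hmem y).1 (Or.inr h)).2.2 rfl
  -- a nonempty set of vertices of `B` that is closed within `B` sees both `x` and `y`
  have hsee : ∀ t u : V, (t = x ∧ u = y ∨ t = y ∧ u = x) → ∀ C ⊆ B, C.Nonempty →
      (∀ c ∈ C, ∀ b ∈ B, G.Adj c b → b ∈ C) → ∃ c ∈ C, G.Adj c t := by
    intro t u htu C hC hne hcl
    by_contra hcon
    push Not at hcon
    have huW : u ∈ W := by rcases htu with h | h <;> rw [h.2] <;> assumption
    have htW : t ∈ W := by rcases htu with h | h <;> rw [h.1] <;> assumption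
    have htne : t ≠ u := by
      rcases htu with h | h <;> rw [h.1, h.2]
      · exact hxy
      · exact hxy.symm
    have h5 := h2.2 u huW C (by
      intro c hc
      rw [Finset.mem_erase]
      have := (hmem c).1 (Or.inr (hC hc))
      refine ⟨?_, this.1⟩
      rcases htu with h | h <;> rw [h.2]
      · exact this.2.2
      · exact this.2.1) hne (by
      intro c hc b hb hcb
      rw [Finset.mem_erase] at hb
      by_cases hbt : b = t
      · subst hbt; exact absurd hcb (hcon c hc)
      · have hb' := (hmem b).2 ⟨hb.2, by rcases htu with ⟨rfl, rfl⟩ | ⟨rfl, rfl⟩ <;> tauto,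
          by rcases htu with ⟨rfl, rfl⟩ | ⟨rfl, rfl⟩ <;> tauto⟩
        rcases hb' with h | h
        · exact absurd hcb.symm (hno b h c (hC hc))
        · exact hcl c hc b h hcb)
    have h6 : t ∈ C := by rw [h5, Finset.mem_erase]; exact ⟨htne, htW⟩
    have h7 := (hmem t).1 (Or.inr (hC h6))
    rcases htu with h | h
    · exact h7.2.1 h.1
    · exact h7.2.2 h.1
  have hcs : CS G (insert x (B : Set V)) := by
    refine ⟨⟨x, Or.inl rfl⟩, ?_⟩
    intro A' hA' hne hcl
    have hxA' : x ∈ A' := by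
      by_contra hxA'
      have hsub : ∀ a ∈ A', a ∈ B := by
        intro a ha
        rcases hA' ha with rfl | h
        · exact absurd ha hxA'
        · exact h
      obtain ⟨c, hc, hcx⟩ := hsee x y (Or.inl ⟨rfl, rfl⟩) (B.filter (· ∈ A'))
        (Finset.filter_subset _ _) (by
          obtain ⟨a, ha⟩ := hne
          exact ⟨a, Finset.mem_filter.2 ⟨hsub a ha, ha⟩⟩) (by
          intro c hc b hb hcb
          rw [Finset.mem_filter] at hc ⊢
          exact ⟨hb, hcl c hc.2 b (Or.inr hb) hcb⟩)
      exact hxA' (hcl c (Finset.mem_filter.1 hc).2 x (Or.inl rfl) hcx)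
    refine Set.Subset.antisymm hA' ?_
    rintro b (rfl | hb)
    · exact hxA'
    by_contra hbA'
    obtain ⟨c, hc, hcx⟩ := hsee x y (Or.inl ⟨rfl, rfl⟩) (B.filter (· ∉ A'))
      (Finset.filter_subset _ _) ⟨b, Finset.mem_filter.2 ⟨hb, hbA'⟩⟩ (by
        intro c hc d hd hcd
        rw [Finset.mem_filter] at hc ⊢
        exact ⟨hd, fun hdA => hc.2 (hcl d hdA c (Or.inr hc.1) hcd.symm)⟩)
    rw [Finset.mem_filter] at hc
    exact hc.2 (hcl x hxA' c (Or.inr hc.1) hcx.symm)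
  obtain ⟨c₀, hc₀, hc₀y⟩ := hsee y x (Or.inr ⟨rfl, rfl⟩) B (subset_refl _) hBne
    (fun _ _ b hb _ => hb)
  have hsupp : ∀ v ∈ (PlanarAdd.inn G (A ∪ {x, y}) ⊔ SimpleGraph.edge x y).support, v ∉ B := by
    intro v hv hvB
    have h5 := (On.sup (on_inn G (A ∪ {x, y})) on_edge (subset_refl _)
      (Finset.subset_union_right)).supp hv
    simp only [Finset.mem_union, Finset.mem_insert, Finset.mem_singleton] at h5
    rcases h5 with h5 | rfl | rfl
    · exact hAB h5 hvB
    · exact hxB hvB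
    · exact hyB hvB
  refine IsPlanar.of_model hG (fun v => if v = x then insert x (B : Set V) else {v}) ?_ ?_ ?_
  · intro v _
    split_ifs
    · exact hcs
    · exact cs_singleton _ _
  · intro u hu v hv w
    have h1 := hsupp u hu
    have h2 := hsupp v hv
    split_ifs with h3 h4 h4
    · intro _ _; rw [h3, h4]
    · rintro (h5 | h5) h6
      · exact absurd (Eq.symm h6 |>.trans h5) h4
      · exact absurd (Set.mem_singleton_iff.1 h6 ▸ h5) h2
    · rintro h6 (h5 | h5)
      · exact absurd (Eq.symm h6 |>.trans h5) h3
      · exact absurd (Set.mem_singleton_iff.1 h6 ▸ h5) h1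
    · rintro rfl h; exact h
  · intro u v huv
    have hself : ∀ t : V, t ∈ (if t = x then insert x (B : Set V) else {t} : Set V) := by
      intro t; split_ifs with h5
      · exact Or.inl h5
      · rfl
    have hcx : c₀ ∈ (if x = x then insert x (B : Set V) else {x} : Set V) := by
      rw [if_pos rfl]; exact Or.inr hc₀
    rcases huv with huv | huv
    · exact ⟨u, hself u, v, hself v, huv.1⟩
    · rw [edge_adj'] at huv
      rcases huv.1 with ⟨rfl, rfl⟩ | ⟨rfl, rfl⟩
      · exact ⟨c₀, hcx, v, hself v, hc₀y⟩
      · exact ⟨u, hself u, c₀, hcx, hc₀y.symm⟩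

lemma le_sides {G : SimpleGraph V} {W A B S : Finset V} (hon : On G W) (hun : A ∪ B = W \ S)
    (hno : ∀ a ∈ A, ∀ b ∈ B, ¬ G.Adj a b) : G ≤ inn G (A ∪ S) ⊔ inn G (B ∪ S) := by
  intro u v huv
  have hmem : ∀ w ∈ W, w ∈ S ∨ w ∈ A ∨ w ∈ B := by
    intro w hw
    by_cases hwS : w ∈ S
    · exact Or.inl hwS
    · right; rw [← Finset.mem_union, hun]; exact Finset.mem_sdiff.2 ⟨hw, hwS⟩
  have hu := hmem u (hon _ _ huv)
  have hv := hmem v (hon.right huv)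
  simp only [SimpleGraph.sup_adj, inn_adj, Finset.mem_union]
  have hc1 : ¬ (u ∈ A ∧ v ∈ B) := fun h => hno u h.1 v h.2 huv
  have hc2 : ¬ (v ∈ A ∧ u ∈ B) := fun h => hno v h.1 u h.2 huv.symm
  tauto

set_option maxHeartbeats 600000 in
/-- Wagner's theorem, with planarity of the drawing replaced by the existence of a dual. -/
theorem hasDual_of_isPlanar (hV : 4 ≤ Fintype.card V) {G : SimpleGraph V} (hG : IsPlanar G) :
    HasDual G := by
  suffices key : ∀ (n : ℕ) (W : Finset V) (G : SimpleGraph V), W.card = n → On G W →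
      IsPlanar G → HasDual G from
    key _ Finset.univ G rfl (fun u _ _ => Finset.mem_univ u) hG
  clear hG G
  intro n
  induction n using Nat.strong_induction_on with
  | _ n ih =>
  intro W G hWn hon hG
  by_cases hsmall : W.card ≤ 4
  · obtain ⟨W', hWW', hW'⟩ := Finset.exists_superset_card_eq hsmall hV
    exact hasDual_K4 hW' fun u v huv => hWW' (hon u v huv)
  by_cases h1 : Conn G W
  swap
  · obtain ⟨A, B, hA, hB, hdis, hun, hno⟩ := not_conn h1
    have hc := Finset.card_union_of_disjoint hdis
    rw [hun] at hc
    have hA' := Finset.card_pos.2 hA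
    have hB' := Finset.card_pos.2 hB
    obtain ⟨x, hx⟩ := hA
    have hdA := ih A.card (by omega) A _ rfl (on_inn G A) (IsPlanar.mono' hG (inn_le _ _))
    have hdB := ih B.card (by omega) B _ rfl (on_inn G B) (IsPlanar.mono' hG (inn_le _ _))
    rw [Finset.disjoint_left] at hdis
    refine (HasDual.sum1 (x := x) (fun u hu hu' =>
      absurd ((on_inn G B).supp hu') (hdis ((on_inn G A).supp hu))) hdA hdB).mono ?_
    intro u v huv
    have hu := hon _ _ huv
    have hv := hon.right huv
    rw [← hun, Finset.mem_union] at hu hv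
    have hn := hno u
    have hn' := hno v
    rcases hu with hu | hu <;> rcases hv with hv | hv
    · exact Or.inl ⟨huv, hu, hv⟩
    · exact absurd huv (hno u hu v hv)
    · exact absurd huv.symm (hno v hv u hu)
    · exact Or.inr ⟨huv, hu, hv⟩
  by_cases h2 : TwoConn G W
  swap
  · have h2' : ∃ x ∈ W, ¬ Conn G (W.erase x) := by
      by_contra hcon
      push Not at hcon
      exact h2 ⟨h1, hcon⟩
    obtain ⟨x, hx, hxc⟩ := h2'
    obtain ⟨A, B, hA, hB, hdis, hun, hno⟩ := not_conn hxc
    have hc := Finset.card_union_of_disjoint hdis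
    rw [hun, Finset.card_erase_of_mem hx] at hc
    have hA' := Finset.card_pos.2 hA
    have hB' := Finset.card_pos.2 hB
    have hcA := Finset.card_insert_le x A
    have hcB := Finset.card_insert_le x B
    have hdA := ih (insert x A).card (by omega) _ _ rfl (on_inn G (insert x A))
      (IsPlanar.mono' hG (inn_le _ _))
    have hdB := ih (insert x B).card (by omega) _ _ rfl (on_inn G (insert x B))
      (IsPlanar.mono' hG (inn_le _ _))
    rw [Finset.disjoint_left] at hdis
    refine (HasDual.sum1 (x := x) (fun u hu hu' => ?_) hdA hdB).mono ?_
    · have h3 := (on_inn _ _).supp hu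
      have h4 := (on_inn _ _).supp hu'
      rw [Finset.mem_insert] at h3 h4
      rcases h3 with h3 | h3
      · exact h3
      · rcases h4 with h4 | h4
        · exact h4
        · exact absurd h4 (hdis h3)
    · have h5 := le_sides (S := {x}) hon (by rw [hun, Finset.sdiff_singleton_eq_erase]) hno
      rwa [Finset.union_comm A, Finset.union_comm B, ← Finset.insert_eq, ← Finset.insert_eq] at h5
  by_cases h3 : ∀ a ∈ W, ∀ b ∈ W, Conn G (W \ {a, b})
  swap
  · push Not at h3
    obtain ⟨x, hx, y, hy, hc⟩ := h3
    have hxy : x ≠ y := by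
      rintro rfl
      apply hc
      have : W \ {x, x} = W.erase x := by
        rw [Finset.pair_eq_singleton, Finset.sdiff_singleton_eq_erase]
      rw [this]; exact h2.2 x hx
    obtain ⟨A, B, hA, hB, hdis, hun, hno⟩ := not_conn hc
    have hcard := Finset.card_union_of_disjoint hdis
    have hxyc : ({x, y} : Finset V).card = 2 := Finset.card_pair hxy
    rw [hun, Finset.card_sdiff_of_subset (by
      intro w
      simp only [Finset.mem_insert, Finset.mem_singleton]
      rintro (rfl | rfl) <;> assumption),
      hxyc] at hcard
    have hA' := Finset.card_pos.2 hA
    have hB' := Finset.card_pos.2 hB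
    have hcA := Finset.card_union_le A {x, y}
    have hcB := Finset.card_union_le B {x, y}
    have onS : ∀ C : Finset V, On (inn G (C ∪ {x, y}) ⊔ SimpleGraph.edge x y) (C ∪ {x, y}) :=
      fun C => On.sup (on_inn G _) on_edge (subset_refl _) Finset.subset_union_right
    have hdA := ih (A ∪ {x, y}).card (by omega) _ _ rfl (onS A)
      (IsPlanar.side h2 hx hy hxy hdis hB hun hno hG)
    have hdB := ih (B ∪ {x, y}).card (by omega) _ _ rfl (onS B)
      (IsPlanar.side h2 hx hy hxy hdis.symm hA (by rw [Finset.union_comm]; exact hun)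
        (fun a ha b hb h => hno b hb a ha h.symm) hG)
    have hexy : (SimpleGraph.edge x y).Adj x y := by
      rw [edge_adj']; exact ⟨Or.inl ⟨rfl, rfl⟩, hxy⟩
    rw [Finset.disjoint_left] at hdis
    refine (HasDual.sum2 (x := x) (y := y) (fun u hu hu' => ?_) (Or.inr hexy) (Or.inr hexy)
      hdA hdB).mono ?_
    · have h4 := (onS A).supp hu
      have h5 := (onS B).supp hu'
      simp only [Finset.mem_union, Finset.mem_insert, Finset.mem_singleton] at h4 h5
      have := @hdis u
      tauto
    · exact (le_sides hon hun hno).trans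
        (sup_le_sup (le_sup_left (b := SimpleGraph.edge x y)) le_sup_left)
  obtain ⟨x, hx, y, hy, hxy, hxy2⟩ := exists_contractible (by omega) h1 h3
  refine wagner_step (by omega) hon hG hx hy hxy h3 hxy2 ?_
  have hc := Finset.card_erase_of_mem hy
  refine ih (W.erase y).card (by omega) _ _ rfl ?_ (IsPlanar.merge hG hxy)
  rintro u v ⟨-, h4, -, h5 | ⟨rfl, -⟩ | ⟨-, h5⟩⟩
  · exact Finset.mem_erase.2 ⟨h4, hon _ _ h5⟩
  · exact Finset.mem_erase.2 ⟨h4, hx⟩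
  · exact Finset.mem_erase.2 ⟨h4, hon.right h5⟩

end Wagner

end PlanarAdd

namespace PlanarAdd

open scoped Classical
open Finset

/-! ### Counting addable pairs from below -/

section Lower

variable {V : Type} [Fintype V]

/-- The graph of pairs that are edges of `G` or can be added to `G`. -/
def addGraph (G : SimpleGraph V) : SimpleGraph V where
  Adj u v := u ≠ v ∧ HasDual (G ⊔ SimpleGraph.edge u v)
  symm.symm u v h := ⟨h.1.symm, by rw [SimpleGraph.edge_comm]; exact h.2⟩
  loopless.irrefl _ h := h.1 rfl

lemma hasDual_edge (u v : V) : HasDual (SimpleGraph.edge u v) := by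
  by_cases huv : u = v
  · subst huv
    have h0 : IsDual (⊥ : SimpleGraph V) (fun _ => ()) (fun _ => ()) := isDual_bot _ _
    rw [SimpleGraph.edge_self_eq_bot]
    exact h0.hasDual
  · have h0 : IsDual (⊥ : SimpleGraph V) (fun _ => ()) (fun _ => ()) := isDual_bot _ _
    obtain ⟨L₁, R₁, h₁, _⟩ := h0.pendant () huv (by simp [SimpleGraph.mem_support])
    rw [bot_sup_eq] at h₁
    exact h₁.hasDual

/-- If no edge of `G` leaves `W`, an edge between `W` and its complement can be added. -/
lemma hasDual_bridge {G : SimpleGraph V} {W : Finset V} {u v : V}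
    (hW : ∀ a ∈ W, ∀ b, G.Adj a b → b ∈ W) (hu : u ∈ W) (hv : v ∉ W) {e : SimpleGraph V}
    (he : e = SimpleGraph.edge u v) (h1 : HasDual (inn G W)) (h2 : HasDual (inn G Wᶜ)) :
    HasDual (G ⊔ e) := by
  subst he
  have h3 : HasDual (inn G W ⊔ SimpleGraph.edge u v) := by
    refine HasDual.sum1 (x := u) (fun w hw hw' => ?_) h1 (hasDual_edge u v)
    have h5 := (on_inn G W).supp hw
    have h6 := on_edge.supp hw'
    simp only [Finset.mem_insert, Finset.mem_singleton] at h6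
    rcases h6 with h6 | h6
    · exact h6
    · exact absurd (h6 ▸ h5) hv
  refine (HasDual.sum1 (x := v) (fun w hw hw' => ?_) h3 h2).mono ?_
  · have h5 : w ∈ insert v W := (On.sup (on_inn G W) (on_edge (a := u) (b := v))
      (Finset.subset_insert v W) (by
        intro z; simp only [Finset.mem_insert, Finset.mem_singleton]
        rintro (rfl | rfl)
        · exact Or.inr hu
        · exact Or.inl rfl)).supp hw
    have h6 := (on_inn G Wᶜ).supp hw'
    rw [Finset.mem_insert] at h5
    rw [Finset.mem_compl] at h6
    exact h5.resolve_right h6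
  · rintro a b (hab | hab)
    · by_cases ha : a ∈ W
      · exact Or.inl (Or.inl ⟨hab, ha, hW a ha b hab⟩)
      · exact Or.inr ⟨hab, Finset.mem_compl.2 ha,
          Finset.mem_compl.2 fun hb => ha (hW b hb a hab.symm)⟩
    · exact Or.inl (Or.inr hab)

/-- A pair inside a component `W` that can be added to `G` restricted to `W` can be added
to `G`. -/
lemma hasDual_inside {G : SimpleGraph V} {W : Finset V} {u v : V}
    (hW : ∀ a ∈ W, ∀ b, G.Adj a b → b ∈ W) (hu : u ∈ W) (hv : v ∈ W)
    (h1 : HasDual (inn G W ⊔ SimpleGraph.edge u v)) (h2 : HasDual (inn G Wᶜ)) :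
    HasDual (G ⊔ SimpleGraph.edge u v) := by
  refine (HasDual.sum1 (x := v) (fun w hw hw' => ?_) h1 h2).mono ?_
  · have h5 : w ∈ W := (On.sup (on_inn G W) (on_edge (a := u) (b := v))
      (subset_refl _) (by
        intro z; simp only [Finset.mem_insert, Finset.mem_singleton]
        rintro (rfl | rfl) <;> assumption)).supp hw
    have h6 := (on_inn G Wᶜ).supp hw'
    exact absurd h5 (Finset.mem_compl.1 h6)
  · rintro a b (hab | hab)
    · by_cases ha : a ∈ W
      · exact Or.inl (Or.inl ⟨hab, ha, hW a ha b hab⟩)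
      · exact Or.inr ⟨hab, Finset.mem_compl.2 ha,
          Finset.mem_compl.2 fun hb => ha (hW b hb a hab.symm)⟩
    · exact Or.inl (Or.inr hab)

/-- The vertex set of the component of `v`. -/
noncomputable def compOf (G : SimpleGraph V) (v : V) : Finset V :=
  Finset.univ.filter fun w => G.Reachable v w

lemma mem_compOf {G : SimpleGraph V} {v w : V} : w ∈ compOf G v ↔ G.Reachable v w := by
  simp [compOf]

lemma compOf_closed {G : SimpleGraph V} {v : V} :
    ∀ a ∈ compOf G v, ∀ b, G.Adj a b → b ∈ compOf G v := by
  intro a ha b hab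
  rw [mem_compOf] at ha ⊢
  exact ha.trans hab.reachable

lemma conn_compOf (G : SimpleGraph V) (v : V) : Conn G (compOf G v) := by
  intro A hA hne hcl
  obtain ⟨x, hx⟩ := hne
  refine Finset.Subset.antisymm hA fun y hy => ?_
  have hxy : G.Reachable x y := (mem_compOf.1 (hA hx)).symm.trans (mem_compOf.1 hy)
  obtain ⟨p⟩ := hxy
  clear hy
  induction p with
  | nil => exact hx
  | cons h p ih => exact ih (hcl _ hx _ (compOf_closed _ (hA hx) _ h) h)

lemma addGraph_of_not_mem {G : SimpleGraph V} (hG : HasDual G) {v w : V} (h : w ∉ compOf G v) :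
    (addGraph G).Adj v w := by
  have hv : v ∈ compOf G v := mem_compOf.2 (Reachable.refl _)
  exact ⟨fun hvw => h (hvw ▸ hv), hasDual_bridge compOf_closed hv h rfl (hG.mono (inn_le _ _))
    (hG.mono (inn_le _ _))⟩

/-- Turán's theorem in the form needed here: a graph without independent sets larger than `a`
has many edges. -/
lemma turan_indep {α : Type} [Fintype α] (Q : SimpleGraph α) (a : ℕ) (ha : 0 < a)
    (h : ∀ I : Finset α, (∀ u ∈ I, ∀ v ∈ I, u ≠ v → ¬ Q.Adj u v) → I.card ≤ a) :
    (Fintype.card α) ^ 2 ≤ 2 * a * Q.edgeFinset.card + a * Fintype.card α := by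
  have hcf : (Qᶜ).CliqueFree (a + 1) := by
    intro I hI
    have h1 := h I (fun u hu v hv huv => by
      have := hI.1 hu hv huv
      exact ((SimpleGraph.compl_adj _ _ _).1 this).2)
    have := hI.2
    omega
  have hT : (SimpleGraph.turanGraph (Fintype.card α) a).edgeFinset.card ≥
      (Qᶜ).edgeFinset.card := by
    have := (SimpleGraph.isTuranMaximal_turanGraph (n := Fintype.card α) ha)
    have h2 := SimpleGraph.CliqueFree.card_edgeFinset_le (G := Qᶜ) hcf
    rw [SimpleGraph.card_edgeFinset_turanGraph]
    exact h2
  have h3 := SimpleGraph.mul_card_edgeFinset_turanGraph_le (n := Fintype.card α) (r := a)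
  have h4 : Q.edgeFinset.card + (Qᶜ).edgeFinset.card = (Fintype.card α).choose 2 := by
    rw [← SimpleGraph.card_edgeFinset_top_eq_card_choose_two, ← Finset.card_union_of_disjoint]
    · refine congrArg _ ?_
      ext e
      rw [← SimpleGraph.edgeFinset_sup, SimpleGraph.mem_edgeFinset, SimpleGraph.mem_edgeFinset,
        sup_compl_eq_top]
    · rw [SimpleGraph.disjoint_edgeFinset]
      exact disjoint_compl_right
  have h5 : 2 * (Fintype.card α).choose 2 + Fintype.card α = (Fintype.card α) ^ 2 := by
    generalize Fintype.card α = k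
    induction k with
    | zero => rfl
    | succ k ih =>
      rw [Nat.choose_succ_succ' k 1, Nat.choose_one_right]
      nlinarith
  obtain ⟨b, rfl⟩ : ∃ b, a = b + 1 := ⟨a - 1, by omega⟩
  simp only [Nat.add_sub_cancel] at h3
  generalize (Fintype.card α) = k at *
  nlinarith

/-- With `h` the order of a largest component and `r` the number of other vertices, the two
inequalities count addable pairs between different components, and inside or leaving a largest
component. -/
lemma lower_count [Nonempty V] {G : SimpleGraph V} (hG : HasDual G) :
    ∃ r h a : ℕ, r + h = Fintype.card V ∧ 1 ≤ a ∧ 2 * a + h ≤ G.edgeSet.ncard + 3 ∧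
      Fintype.card V * r ≤ 2 * (addGraph G).edgeFinset.card ∧
      h ^ 2 + 2 * a * (r * h) ≤ 2 * a * (addGraph G).edgeFinset.card + a * h := by
  obtain ⟨w, -, hw⟩ := Finset.exists_max_image (Finset.univ : Finset V)
    (fun v => (compOf G v).card) Finset.univ_nonempty
  set W := compOf G w with hWdef
  have hwW : w ∈ W := mem_compOf.2 (Reachable.refl _)
  have hcW : Wᶜ.card + W.card = Fintype.card V := Finset.card_compl_add_card W
  have hsub : (inn G W).edgeSet.ncard ≤ G.edgeSet.ncard :=
    Set.ncard_le_ncard (SimpleGraph.edgeSet_mono (inn_le G W)) (Set.toFinite _)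
  have hconn : Conn (inn G W) W := Conn.inn (conn_compOf G w) (subset_refl _)
  have hdW : HasDual (inn G W) := hG.mono (inn_le _ _)
  have hb : ∀ I ⊆ W, NonAdd (inn G W) I → 2 * I.card + W.card ≤ G.edgeSet.ncard + 3 :=
    fun I hI hna => (nonAdd_bound _ W (inn G W) I rfl ⟨w, hwW⟩ hconn (on_inn G W) hdW hI
      hna).trans (by omega)
  have h1 := hb {w} (by simpa using hwW) (by
    intro u hu v hv huv
    simp only [Finset.mem_singleton] at hu hv
    exact absurd (hu.trans hv.symm) huv)
  rw [Finset.card_singleton] at h1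
  refine ⟨Wᶜ.card, W.card, (G.edgeSet.ncard + 3 - W.card) / 2, hcW, by omega, by omega, ?_, ?_⟩
  · rw [← SimpleGraph.sum_degrees_eq_twice_card_edges, ← smul_eq_mul, ← Finset.card_univ]
    refine Finset.card_nsmul_le_sum _ _ _ fun v _ => ?_
    have h2 : (compOf G v)ᶜ ⊆ (addGraph G).neighborFinset v := by
      intro u hu
      rw [SimpleGraph.mem_neighborFinset]
      exact addGraph_of_not_mem hG (Finset.mem_compl.1 hu)
    have h3 := Finset.card_le_card h2
    rw [SimpleGraph.card_neighborFinset_eq_degree] at h3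
    have h4 := hw v (Finset.mem_univ _)
    have h5 : (compOf G v)ᶜ.card + (compOf G v).card = Fintype.card V :=
      Finset.card_compl_add_card _
    omega
  · set a := (G.edgeSet.ncard + 3 - W.card) / 2 with ha
    have h2 := turan_indep ((addGraph G).induce (W : Set V)) a (by omega) (by
      intro I hI
      have h3 := hb (I.map (Function.Embedding.subtype _)) (by
        intro x hx
        obtain ⟨y, _, rfl⟩ := Finset.mem_map.1 hx
        exact y.2) (by
        intro u hu v hv huv hd
        obtain ⟨u, hu', rfl⟩ := Finset.mem_map.1 hu
        obtain ⟨v, hv', rfl⟩ := Finset.mem_map.1 hv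
        refine hI u hu' v hv' (fun h => huv (by rw [h])) ?_
        exact ⟨huv, hasDual_inside compOf_closed u.2 v.2 hd (hG.mono (inn_le _ _))⟩)
      rw [Finset.card_map] at h3
      omega)
    have hcard : Fintype.card (W : Set V) = W.card := by simp
    have h3 : ((addGraph G).induce (W : Set V)).edgeFinset.card + Wᶜ.card * W.card ≤
        (addGraph G).edgeFinset.card := by
      let M := ((addGraph G).induce (W : Set V)).map (Function.Embedding.subtype _)
      have hM : M.edgeFinset.card = ((addGraph G).induce (W : Set V)).edgeFinset.card := by
        rw [← SimpleGraph.card_edgeFinset_map (Function.Embedding.subtype _)]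
      have hMle : M ≤ addGraph G := SimpleGraph.map_comap_le _ _
      have hMW : ∀ u v, M.Adj u v → u ∈ W ∧ v ∈ W := by
        rintro u v ⟨-, a, b, -, rfl, rfl⟩
        exact ⟨a.2, b.2⟩
      let P : Finset (Sym2 V) := (Wᶜ ×ˢ W).image fun p => s(p.1, p.2)
      have hP : P.card = Wᶜ.card * W.card := by
        rw [← Finset.card_product]
        refine Finset.card_image_of_injOn ?_
        rintro ⟨a, b⟩ hab ⟨c, d⟩ hcd h
        simp only [Finset.coe_product, Set.mem_prod, Finset.mem_coe, Finset.mem_compl] at hab hcd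
        rcases Sym2.eq_iff.1 h with ⟨h1, h2⟩ | ⟨h1, h2⟩
        · exact Prod.ext h1 h2
        · simp only at h1 h2
          exact absurd (h1 ▸ hcd.2) hab.1
      rw [← hM, ← hP, ← Finset.card_union_of_disjoint]
      · refine Finset.card_le_card (Finset.union_subset ?_ ?_)
        · exact SimpleGraph.edgeFinset_mono hMle
        · intro e he
          obtain ⟨⟨u, v⟩, huv, rfl⟩ := Finset.mem_image.1 he
          rw [Finset.mem_product, Finset.mem_compl] at huv
          rw [SimpleGraph.mem_edgeFinset, SimpleGraph.mem_edgeSet]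
          refine addGraph_of_not_mem hG fun h => huv.1 ?_
          rw [mem_compOf] at h
          exact mem_compOf.2 ((mem_compOf.1 huv.2).trans h.symm)
      · rw [Finset.disjoint_left]
        intro e he heP
        obtain ⟨⟨u, v⟩, huv, rfl⟩ := Finset.mem_image.1 heP
        rw [Finset.mem_product, Finset.mem_compl] at huv
        rw [SimpleGraph.mem_edgeFinset, SimpleGraph.mem_edgeSet] at he
        exact huv.1 (hMW _ _ he).1
    rw [hcard] at h2
    have h2' : W.card ^ 2 ≤ 2 * a * ((addGraph G).induce (W : Set V)).edgeFinset.card +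
        a * W.card := by convert h2
    have h4 := Nat.mul_le_mul_left (2 * a) h3
    rw [Nat.mul_add] at h4
    omega

/-- Every edge of `addGraph G` is an edge of `G` or addable to `G`. -/
lemma addGraph_card_le (G : SimpleGraph V) :
    (addGraph G).edgeFinset.card ≤ (addableSet G).ncard + G.edgeSet.ncard := by
  rw [← Set.ncard_coe_finset, SimpleGraph.coe_edgeFinset]
  refine (Set.ncard_le_ncard ?_ (Set.toFinite _)).trans (Set.ncard_union_le _ _)
  intro e
  induction e using Sym2.ind with
  | _ u v =>
  rintro ⟨h1, h2⟩
  by_cases h3 : G.Adj u v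
  · exact Or.inr h3
  · exact Or.inl ⟨by simpa using h1, h3, h2.isPlanar⟩

end Lower

section LowerReal

/-- The lower bound for the number of addable edges, with a free parameter `t`: the term
`h ^ 2 / (2 * a)` from Turán's theorem is bounded below by a tangent line. The first alternative covers the case of many vertices outside a largest
component. -/
lemma addable_lower {n m : ℕ} (hn : 4 ≤ n) {G : SimpleGraph (Fin n)} (hG : G ∈ planarSet n m)
    {t C : ℝ} (ht0 : 0 ≤ t) (ht : t ≤ 1) (hC : 0 ≤ C) :
    C / 2 * (n * √n) ≤ (addableSet G).ncard + m ∨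
    2 * t * (n * √n) - t ^ 2 * n * (m - n) - (C ^ 2 + 2 * t * C + 3 * t ^ 2 + 1) * n ≤
      (addableSet G).ncard + m := by
  have hd : HasDual G := hasDual_of_isPlanar (by simpa using hn) hG.1
  haveI : Nonempty (Fin n) := ⟨⟨0, by omega⟩⟩
  obtain ⟨r, h, a, h1, h2, h3, h4, h5⟩ := lower_count hd
  have h6 := addGraph_card_le G
  have hGm : G.edgeSet.ncard = m := hG.2
  rw [hGm] at h3 h6
  rw [Fintype.card_fin] at h1 h4
  set X : ℝ := (addableSet G).ncard + m with hX
  have h6' : ((addGraph G).edgeFinset.card : ℝ) ≤ X := by rw [hX]; exact_mod_cast h6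
  have h1' : (r : ℝ) + h = n := by exact_mod_cast h1
  have h2' : (1 : ℝ) ≤ a := by exact_mod_cast h2
  have h3' : (2 : ℝ) * a + h ≤ m + 3 := by exact_mod_cast h3
  have h4' : (n : ℝ) * r ≤ 2 * (addGraph G).edgeFinset.card := by exact_mod_cast h4
  have h5' : (h : ℝ) ^ 2 + 2 * a * (r * h) ≤ 2 * a * (addGraph G).edgeFinset.card + a * h := by
    exact_mod_cast h5
  have hs : √(n : ℝ) * √n = n := Real.mul_self_sqrt (by positivity)
  have hs0 : 0 ≤ √(n : ℝ) := Real.sqrt_nonneg _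
  have hr0 : (0 : ℝ) ≤ r := by positivity
  have hh0 : (0 : ℝ) ≤ h := by positivity
  have hn0 : (0 : ℝ) ≤ n := by positivity
  generalize ((addGraph G).edgeFinset.card : ℝ) = E at *
  generalize √(n : ℝ) = q at *
  rcases le_total (C * q) r with hc | hc
  · left
    nlinarith [mul_le_mul_of_nonneg_left hc hn0]
  · right
    -- the tangent line bound `h² / (2a) ≥ 2 t q h - t² q² (2a)`
    have h7 : 2 * (t * q) * h - (t * q) ^ 2 * (2 * a) + r * h ≤ E + h / 2 := by
      have h8 : 2 * a * (2 * (t * q) * h - (t * q) ^ 2 * (2 * a) + r * h) ≤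
          2 * a * (E + h / 2) := by
        nlinarith [sq_nonneg (h - (t * q) * (2 * a))]
      exact le_of_mul_le_mul_left h8 (by linarith)
    have h9 : t ^ 2 * n * (2 * a) ≤ t ^ 2 * n * (m - n + r + 3) :=
      mul_le_mul_of_nonneg_left (by linarith) (by positivity)
    have h10 : (t * q) ^ 2 * (2 * a) = t ^ 2 * n * (2 * a) := by rw [← hs]; ring
    have h11 : (r : ℝ) * r ≤ C ^ 2 * n := by
      have := mul_le_mul hc hc hr0 (by positivity)
      calc (r : ℝ) * r ≤ C * q * (C * q) := this
        _ = C ^ 2 * n := by rw [← hs]; ring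
    have h12 : 2 * (t * q) * r ≤ 2 * t * C * n := by
      have := mul_le_mul_of_nonneg_left hc (by positivity : 0 ≤ 2 * (t * q))
      calc 2 * (t * q) * r ≤ 2 * (t * q) * (C * q) := this
        _ = 2 * t * C * n := by rw [← hs]; ring
    have h13 : t ^ 2 * (n * r) ≤ n * r := by
      have : t ^ 2 ≤ 1 := by nlinarith
      nlinarith [mul_nonneg hn0 hr0]
    have h14 : (h : ℝ) = n - r := by linarith
    rw [h10] at h7
    rw [h14] at h7
    nlinarith

end LowerReal

end PlanarAdd

namespace PlanarAdd

open scoped Classical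
open Finset

/-! ### Wheels with subdivided spokes -/

section IndexedDual

variable {V : Type} [Fintype V]

/-- The mod 2 sum of the values of `y` on the edges of the list `φ` that contain `u`. -/
noncomputable def inc {X : Type} [Fintype X] (φ : X → Sym2 V) (y : X → ZMod 2) (u : V) : ZMod 2 :=
  ∑ x, if u ∈ φ x then y x else 0

lemma sum_ite_or {α : Type} [Fintype α] (y : α → ZMod 2) {a b : α}
    [DecidablePred fun x => x = a ∨ x = b] (hab : a ≠ b) :
    (∑ x, if x = a ∨ x = b then y x else 0) = y a + y b := by
  rw [← Finset.sum_filter]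
  have : (Finset.univ.filter fun x => x = a ∨ x = b) = {a, b} := by ext x; simp
  rw [this, Finset.sum_pair hab]

/-- A criterion for duality when the edges are listed by `φ`; the boundary condition may be
omitted at one vertex. -/
lemma hasDual_of_index {X ι : Type} [Fintype X] [Nonempty ι] {G : SimpleGraph V}
    (φ : X → Sym2 V) (hφ : Function.Injective φ) (hG : G.edgeSet = Set.range φ) (fL fR : X → ι)
    (u₀ : V)
    (h1 : ∀ f : ι → ZMod 2, ∀ u, u ≠ u₀ →
      inc φ (fun x => f (fL x) + f (fR x)) u = 0)
    (h2 : ∀ y : X → ZMod 2, (∀ u, inc φ y u = 0) →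
      ∃ f : ι → ZMod 2, ∀ x, y x = f (fL x) + f (fR x)) : HasDual G := by
  have key : ∀ z : Sym2 V → ZMod 2, (∀ e, e ∉ G.edgeSet → z e = 0) → ∀ u,
      bd z u = inc φ (fun x => z (φ x)) u := by
    intro z hz u
    rw [bd_eq_sum_edges, inc]
    symm
    refine Finset.sum_of_injOn φ hφ.injOn (fun _ _ => Finset.mem_univ _) ?_ (fun _ _ => rfl)
    intro e _ he
    have : e ∉ G.edgeSet := by rw [hG]; simpa using he
    simp [hz e this]
  let o : ι := Classical.arbitrary ι
  refine ⟨ι, Function.extend φ fL fun _ => o, Function.extend φ fR fun _ => o, ?_, ?_⟩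
  · intro c
    refine mem_cyc.2 ⟨fun e he => by simp [delta, he], ?_⟩
    set z := delta G (Function.extend φ fL fun _ => o) (Function.extend φ fR fun _ => o) c with hz
    have hz0 : ∀ e, e ∉ G.edgeSet → z e = 0 := fun e he => by simp [hz, delta, he]
    have hzx : ∀ x, z (φ x) = c (fL x) + c (fR x) := by
      intro x
      rw [hz, delta_of_mem (by rw [hG]; exact ⟨x, rfl⟩), hφ.extend_apply, hφ.extend_apply]
    have h3 : ∀ u, u ≠ u₀ → bd z u = 0 := by
      intro u hu
      rw [key z hz0 u]
      simp only [hzx]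
      exact h1 c u hu
    ext u
    by_cases hu : u = u₀
    · have h4 := sum_bd_eq_zero z Set.univ (fun u => cyc_diag hz0 u) (by simp)
      rw [Finset.sum_eq_single u₀ (fun v _ hv => h3 v hv) (by simp)] at h4
      rw [hu]; exact h4
    · exact h3 u hu
  · rintro z ⟨hz0, hz⟩
    obtain ⟨f, hf⟩ := h2 (fun x => z (φ x)) (fun u => by
      rw [← key z hz0 u, hz]; rfl)
    refine ⟨f, fun e he => ?_⟩
    rw [hG] at he
    obtain ⟨x, rfl⟩ := he
    rw [hφ.extend_apply, hφ.extend_apply]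
    exact hf x

end IndexedDual

section Wheel

variable (ℓ : ℕ → ℕ) (K q : ℕ)

/-- The non-central vertices of the wheel: `⟨i, 0⟩` is the `i`-th rim vertex, and `⟨i, 1⟩`, …,
`⟨i, ℓ i⟩` are the subdividing vertices of the `i`-th spoke, ordered towards the hub. -/
abbrev Cell := Σ i : Fin K, Fin (ℓ i + 1)

/-- The vertices of the wheel (`none` is the hub) together with `q` isolated vertices. -/
abbrev WV := Option (Cell ℓ K) ⊕ Fin q

variable {ℓ K q}

lemma cell_ext {c c' : Cell ℓ K} (h1 : c.1.val = c'.1.val) (h2 : c.2.val = c'.2.val) :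
    c = c' := by
  obtain ⟨i, t⟩ := c
  obtain ⟨i', t'⟩ := c'
  obtain rfl : i = i' := Fin.ext h1
  obtain rfl : t = t' := Fin.ext h2
  rfl

lemma succ_mod {j : ℕ} (hj : j < K) : (j + 1) % K = if j + 1 < K then j + 1 else 0 := by
  split_ifs with h
  · exact Nat.mod_eq_of_lt h
  · rw [show j + 1 = K by omega, Nat.mod_self]

lemma pred_mod {j : ℕ} (hj : j < K) : (j + K - 1) % K = if j = 0 then K - 1 else j - 1 := by
  split_ifs with h
  · subst h; rw [Nat.mod_eq_of_lt (by omega)]; omega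
  · rw [show j + K - 1 = (j - 1) + K by omega, Nat.add_mod_right, Nat.mod_eq_of_lt (by omega)]

variable [NeZero K]

lemma K_pos : 0 < K := Nat.pos_of_ne_zero (NeZero.ne K)

/-- The vertex at position `t` of column `k` (indices modulo `K`); the hub is found beyond the
last position of every column. -/
def pos (k t : ℕ) : WV ℓ K q :=
  if h : t < ℓ (Fin.ofNat K k) + 1 then .inl (some ⟨Fin.ofNat K k, ⟨t, h⟩⟩) else .inl none

lemma pos_eq_cell {k t : ℕ} {c : Cell ℓ K} :
    (pos k t : WV ℓ K q) = .inl (some c) ↔ k % K = c.1.val ∧ t = c.2.val := by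
  unfold pos
  split_ifs with h
  · rw [Sum.inl.injEq, Option.some.injEq]
    constructor
    · rintro rfl; exact ⟨rfl, rfl⟩
    · rintro ⟨h1, h2⟩; exact cell_ext h1 h2
  · simp only [Sum.inl.injEq, reduceCtorEq, false_iff, not_and]
    intro h1 h2
    apply h
    rw [Fin.val_ofNat, h1, h2]
    exact c.2.2

lemma pos_cell (c : Cell ℓ K) : (pos c.1 c.2 : WV ℓ K q) = .inl (some c) :=
  pos_eq_cell.2 ⟨Nat.mod_eq_of_lt c.1.2, rfl⟩

lemma pos_mod (k t : ℕ) : (pos (k % K) t : WV ℓ K q) = pos k t := by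
  have : Fin.ofNat K (k % K) = Fin.ofNat K k := Fin.ext (Nat.mod_mod _ _)
  unfold pos
  rw [this]

lemma pos_hub {k t : ℕ} (h : ℓ (k % K) < t) : (pos k t : WV ℓ K q) = .inl none := by
  unfold pos
  rw [dif_neg]
  rw [Fin.val_ofNat]; omega

lemma exists_cell {k t : ℕ} (h : t ≤ ℓ (k % K)) : ∃ c : Cell ℓ K,
    (pos k t : WV ℓ K q) = .inl (some c) ∧ c.1.val = k % K ∧ c.2.val = t := by
  refine ⟨⟨Fin.ofNat K k, ⟨t, ?_⟩⟩, pos_eq_cell.2 ⟨rfl, rfl⟩, rfl, rfl⟩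
  rw [Fin.val_ofNat]; omega

/-- The edges of the wheel: the edge from each non-central vertex towards the hub, and the rim. -/
def wEdge : Cell ℓ K ⊕ Fin K → Sym2 (WV ℓ K q)
  | .inl c => s(.inl (some c), pos c.1 (c.2 + 1))
  | .inr i => s(pos i 0, pos (i + 1) 0)

lemma mem_wEdge_inl {c c' : Cell ℓ K} : (.inl (some c) : WV ℓ K q) ∈ wEdge (.inl c') ↔
    c' = c ∨ (c'.1.val = c.1.val ∧ c'.2.val + 1 = c.2.val) := by
  rw [wEdge, Sym2.mem_iff, eq_comm (b := pos _ _), pos_eq_cell, Nat.mod_eq_of_lt c'.1.2,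
    Sum.inl.injEq, Option.some.injEq, eq_comm]

lemma mem_wEdge_inr {c : Cell ℓ K} {i : Fin K} : (.inl (some c) : WV ℓ K q) ∈ wEdge (.inr i) ↔
    c.2.val = 0 ∧ (i = c.1 ∨ i = Fin.ofNat K (c.1 + K - 1)) := by
  rw [wEdge, Sym2.mem_iff, eq_comm (b := pos _ _), pos_eq_cell, eq_comm (b := pos _ _),
    pos_eq_cell, Nat.mod_eq_of_lt i.2, succ_mod i.2, Fin.ext_iff, Fin.ext_iff, Fin.val_ofNat,
    pred_mod c.1.2]
  have h1 := i.2
  have h2 := c.1.2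
  split_ifs <;> omega

lemma wEdge_not_isDiag (hK : 3 ≤ K) (x : Cell ℓ K ⊕ Fin K) :
    ¬ (wEdge x : Sym2 (WV ℓ K q)).IsDiag := by
  rcases x with c | i
  · rw [wEdge, Sym2.mk_isDiag_iff, eq_comm, pos_eq_cell]
    omega
  · rw [wEdge, Sym2.mk_isDiag_iff]
    intro h
    obtain ⟨c, h1, h2, h3⟩ := exists_cell (ℓ := ℓ) (q := q) (k := i) (K := K) (t := 0)
      (Nat.zero_le _)
    rw [h1, eq_comm, pos_eq_cell] at h
    have h4 := h.1
    rw [h2, succ_mod i.2, Nat.mod_eq_of_lt i.2] at h4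
    have := i.2
    split_ifs at h4 <;> omega

lemma wEdge_injective (hK : 3 ≤ K) :
    Function.Injective (wEdge : Cell ℓ K ⊕ Fin K → Sym2 (WV ℓ K q)) := by
  have hrim : ∀ i : Fin K, ∃ c : Cell ℓ K, c.1 = i ∧ c.2.val = 0 := fun i => ⟨⟨i, 0⟩, rfl, rfl⟩
  have hmix : ∀ (c : Cell ℓ K) (i : Fin K),
      (wEdge (.inl c) : Sym2 (WV ℓ K q)) ≠ wEdge (.inr i) := by
    intro c i h
    obtain ⟨c₁, h1, h2⟩ := hrim i
    obtain ⟨c₂, h3, h4⟩ := hrim (Fin.ofNat K (i + 1))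
    have h5 : (.inl (some c₁) : WV ℓ K q) ∈ wEdge (.inl c) := by
      rw [h, mem_wEdge_inr]; exact ⟨h2, Or.inl h1.symm⟩
    have h6 : (.inl (some c₂) : WV ℓ K q) ∈ wEdge (.inl c) := by
      rw [h, wEdge, Sym2.mem_iff]; right; symm
      exact pos_eq_cell.2 ⟨(congrArg Fin.val h3).symm, h4.symm⟩
    rw [mem_wEdge_inl] at h5 h6
    have h7 : c = c₁ := h5.resolve_right (by omega)
    have h8 : c = c₂ := h6.resolve_right (by omega)
    have h9 : i = Fin.ofNat K (i + 1) := by rw [← h3, ← h8, h7, h1]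
    have h10 := congrArg Fin.val h9
    rw [Fin.val_ofNat, succ_mod i.2] at h10
    have := i.2
    split_ifs at h10 <;> omega
  rintro (c | i) (c' | i') h
  · have h1 : (.inl (some c) : WV ℓ K q) ∈ wEdge (.inl c') := by rw [← h, mem_wEdge_inl]; simp
    have h2 : (.inl (some c') : WV ℓ K q) ∈ wEdge (.inl c) := by rw [h, mem_wEdge_inl]; simp
    rw [mem_wEdge_inl] at h1 h2
    rcases h1 with h1 | h1
    · rw [h1]
    · rcases h2 with h2 | h2
      · rw [h2]
      · omega
  · exact absurd h (hmix _ _)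
  · exact absurd h.symm (hmix _ _)
  · obtain ⟨c₁, h1, h2⟩ := hrim i
    obtain ⟨c₂, h3, h4⟩ := hrim i'
    have h5 : (.inl (some c₁) : WV ℓ K q) ∈ wEdge (.inr i') := by
      rw [← h, mem_wEdge_inr]; exact ⟨h2, Or.inl h1.symm⟩
    have h6 : (.inl (some c₂) : WV ℓ K q) ∈ wEdge (.inr i) := by
      rw [h, mem_wEdge_inr]; exact ⟨h4, Or.inl h3.symm⟩
    have h7 := (mem_wEdge_inr.1 h5).2
    have h8 := (mem_wEdge_inr.1 h6).2
    rw [h1] at h7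
    rw [h3] at h8
    rw [Fin.ext_iff, Fin.ext_iff, Fin.val_ofNat, pred_mod i.2] at h7
    rw [Fin.ext_iff, Fin.ext_iff, Fin.val_ofNat, pred_mod i'.2] at h8
    have := i.2
    have := i'.2
    rw [Sum.inr.injEq, Fin.ext_iff]
    split_ifs at h7 h8 <;> omega

variable (ℓ K q) in
/-- The wheel with `K` spokes, the `i`-th of them subdivided `ℓ i` times, and `q` isolated
vertices. -/
def wheel : SimpleGraph (WV ℓ K q) := SimpleGraph.fromEdgeSet (Set.range wEdge)

lemma wheel_edgeSet (hK : 3 ≤ K) : (wheel ℓ K q).edgeSet = Set.range wEdge := by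
  rw [wheel, SimpleGraph.edgeSet_fromEdgeSet]
  refine sdiff_eq_left.2 (Set.disjoint_left.2 ?_)
  rintro _ ⟨x, rfl⟩ h
  exact wEdge_not_isDiag hK x h

lemma wheel_edge_card (hK : 3 ≤ K) :
    (wheel ℓ K q).edgeSet.ncard = (∑ i : Fin K, (ℓ i + 1)) + K := by
  rw [wheel_edgeSet hK, ← Set.image_univ, Set.ncard_image_of_injective _ (wEdge_injective hK),
    Set.ncard_univ, Nat.card_eq_fintype_card]
  simp

lemma sum_wEdge_cell (y : Cell ℓ K ⊕ Fin K → ZMod 2) (hK : 3 ≤ K) (c : Cell ℓ K) :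
    (∀ c' : Cell ℓ K, c'.1.val = c.1.val → c'.2.val + 1 = c.2.val →
      inc wEdge y (.inl (some c) : WV ℓ K q) =
        y (.inl c) + y (.inl c')) ∧
    (c.2.val = 0 → inc wEdge y (.inl (some c) : WV ℓ K q) =
        y (.inl c) + (y (.inr c.1) + y (.inr (Fin.ofNat K (c.1 + K - 1))))) := by
  rw [inc, Fintype.sum_sum_type]
  simp only [mem_wEdge_inl, mem_wEdge_inr]
  constructor
  · intro c' h1 h2
    have hne : c ≠ c' := by rintro rfl; omega
    have h3 : ∀ d : Cell ℓ K, (d.1.val = c.1.val ∧ d.2.val + 1 = c.2.val) ↔ d = c' := by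
      intro d
      constructor
      · rintro ⟨h4, h5⟩; exact cell_ext (by omega) (by omega)
      · rintro rfl; exact ⟨h1, h2⟩
    have h4 : ¬ c.2.val = 0 := by omega
    simp only [h3, h4, false_and, if_false, Finset.sum_const_zero, add_zero]
    exact sum_ite_or (fun d => y (.inl d)) hne
  · intro h0
    have hne : c.1 ≠ Fin.ofNat K (c.1 + K - 1) := by
      rw [Ne, Fin.ext_iff, Fin.val_ofNat, pred_mod c.1.2]
      have := c.1.2
      split_ifs <;> omega
    have h3 : ∀ d : Cell ℓ K, ¬ (d.1.val = c.1.val ∧ d.2.val + 1 = c.2.val) := by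
      intro d; omega
    simp only [h3, or_false, Finset.sum_ite_eq', Finset.mem_univ, if_true]
    simp only [h0, true_and]
    rw [sum_ite_or (fun i => y (.inr i)) hne]

lemma wheel_hasDual (hK : 3 ≤ K) : HasDual (wheel ℓ K q) := by
  have hK0 : ∀ i : Fin K, Fin.ofNat K i = i := fun i => Fin.ext (Nat.mod_eq_of_lt i.2)
  -- face `some i` lies between the spokes `i` and `i + 1`, face `none` is the outer face
  refine hasDual_of_index (ι := Option ℕ) wEdge (wEdge_injective hK) (wheel_edgeSet hK)
    (Sum.elim (fun c => some c.1.val) (fun i => some i.val))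
    (Sum.elim (fun c => some ((c.1 + K - 1) % K)) (fun _ => none)) (.inl none) ?_ ?_
  · rintro f ((_ | c) | j) hu
    · exact absurd rfl hu
    · set y : Cell ℓ K ⊕ Fin K → ZMod 2 := fun x =>
        f (Sum.elim (fun c => some c.1.val) (fun i => some i.val) x) +
        f (Sum.elim (fun c => some ((c.1 + K - 1) % K)) (fun _ => none) x) with hy
      have h := sum_wEdge_cell (q := q) y hK c
      change inc wEdge y (.inl (some c) : WV ℓ K q) = 0
      by_cases h0 : c.2.val = 0
      · rw [h.2 h0]
        simp only [hy, Sum.elim_inl, Sum.elim_inr, Fin.val_ofNat]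
        have h1 := CharTwo.add_self_eq_zero (f (some c.1.val))
        have h2 := CharTwo.add_self_eq_zero (f (some ((c.1.val + K - 1) % K)))
        have h3 := CharTwo.add_self_eq_zero (f none)
        linear_combination h1 + h2 + h3
      · rw [h.1 ⟨c.1, ⟨c.2 - 1, by omega⟩⟩ rfl (by simp only; omega)]
        exact CharTwo.add_self_eq_zero _
    · refine Finset.sum_eq_zero fun x _ => if_neg ?_
      have hp : ∀ k t, (.inr j : WV ℓ K q) ≠ pos k t := by
        intro k t; unfold pos; split_ifs <;> simp
      rcases x with c | i
      · rw [wEdge, Sym2.mem_iff, not_or]; exact ⟨by simp, hp _ _⟩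
      · rw [wEdge, Sym2.mem_iff, not_or]; exact ⟨hp _ _, hp _ _⟩
  · intro y hy
    refine ⟨fun o => o.elim 0 fun k => y (.inr (Fin.ofNat K k)), ?_⟩
    rintro (c | i)
    · simp only [Sum.elim_inl, Option.elim]
      obtain ⟨i, t, ht⟩ := c
      induction t with
      | zero =>
        have h := (sum_wEdge_cell (q := q) y hK ⟨i, ⟨0, ht⟩⟩).2 rfl
        rw [hy] at h
        have h4 : Fin.ofNat K ((i.val + K - 1) % K) = Fin.ofNat K (i + K - 1) :=
          Fin.ext (Nat.mod_mod _ _)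
        simp only [hK0, h4] at h ⊢
        have h1 := CharTwo.add_self_eq_zero (y (.inr i))
        have h2 := CharTwo.add_self_eq_zero (y (.inr (Fin.ofNat K (i + K - 1))))
        linear_combination -h1 - h2 - h
      | succ t ih =>
        have h := (sum_wEdge_cell (q := q) y hK ⟨i, ⟨t + 1, ht⟩⟩).1 ⟨i, ⟨t, by omega⟩⟩ rfl rfl
        rw [hy] at h
        rw [← ih (by omega)]
        exact zmod2_eq_of_add h.symm
    · simp [hK0]

end Wheel

end PlanarAdd

namespace PlanarAdd

open scoped Classical
open Finset

/-! ### Counting addable pairs of a wheel -/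

section WheelAdd

variable {ℓ : ℕ → ℕ} {K q : ℕ} [NeZero K]

lemma wheel_adj_down (hK : 3 ≤ K) {k t : ℕ} (ht : t ≤ ℓ (k % K)) :
    (wheel ℓ K q).Adj (pos k t) (pos k (t + 1)) := by
  rw [← SimpleGraph.mem_edgeSet, wheel_edgeSet hK]
  obtain ⟨c, h1, h2, h3⟩ := exists_cell (q := q) ht
  refine ⟨.inl c, ?_⟩
  rw [wEdge, h1, h3, h2, pos_mod]

lemma wheel_adj_rim (hK : 3 ≤ K) (k : ℕ) : (wheel ℓ K q).Adj (pos k 0) (pos (k + 1) 0) := by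
  rw [← SimpleGraph.mem_edgeSet, wheel_edgeSet hK]
  refine ⟨.inr (Fin.ofNat K k), ?_⟩
  rw [wEdge, Fin.val_ofNat, pos_mod, ← pos_mod (k % K + 1), Nat.mod_add_mod, pos_mod]

lemma mod_inj {j k k' : ℕ} (h1 : j ≤ k) (h2 : k < j + K) (h3 : j ≤ k') (h4 : k' < j + K)
    (h : k % K = k' % K) : k = k' := by
  wlog hle : k ≤ k' generalizing k k'
  · exact (this h3 h4 h1 h2 h.symm (by omega)).symm
  have h5 : (k' - k) % K = 0 := Nat.sub_mod_eq_zero_of_mod_eq h.symm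
  rw [Nat.mod_eq_of_lt (by omega)] at h5
  omega

lemma pos_ne_hub {k t : ℕ} (ht : t ≤ ℓ (k % K)) : (pos k t : WV ℓ K q) ≠ .inl none := by
  obtain ⟨c, h1, -⟩ := exists_cell (q := q) ht
  rw [h1]; simp

lemma pos_inj {j k k' t t' : ℕ} (h1 : j ≤ k) (h2 : k < j + K) (h3 : j ≤ k') (h4 : k' < j + K)
    (ht : t ≤ ℓ (k % K)) (h : (pos k t : WV ℓ K q) = pos k' t') : k = k' ∧ t = t' := by
  obtain ⟨c, h5, h6, h7⟩ := exists_cell (q := q) ht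
  rw [h5, eq_comm, pos_eq_cell] at h
  exact ⟨mod_inj h1 h2 h3 h4 (by omega), by omega⟩

/-- A subdividing vertex of spoke `j` and a vertex of a column `i` that is not next to column `j`
cannot be joined: together with the hub, the rim vertex of spoke `j` and the two arcs of the rim
they give a `K₃,₃` minor. -/
lemma wheel_not_addable (hK : 3 ≤ K) {j i s t : ℕ} (hjK : j < K) (hij : j + 1 < i)
    (hi : i + 1 < j + K) (hs : 1 ≤ s) (hsl : s ≤ ℓ j) (ht : t ≤ ℓ (i % K))
    (hl1 : ℓ ((j + 1) % K) = 0) (hl2 : ℓ ((j + K - 1) % K) = 0) :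
    ¬ IsPlanar (wheel ℓ K q ⊔ SimpleGraph.edge (pos j s) (pos i t)) := by
  intro hpl
  have hjm : j % K = j := Nat.mod_eq_of_lt hjK
  set H := wheel ℓ K q ⊔ SimpleGraph.edge (pos j s) (pos i t) with hH
  have hrim : ∀ k, H.Adj (pos k 0) (pos (k + 1) 0) := fun k => Or.inl (wheel_adj_rim hK k)
  have hdown : ∀ k t, t ≤ ℓ (k % K) → H.Adj (pos k t) (pos k (t + 1)) :=
    fun k t h => Or.inl (wheel_adj_down hK h)
  have hnew : H.Adj (pos i t) (pos j s) := by
    refine Or.inr ?_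
    rw [edge_adj']
    refine ⟨Or.inr ⟨rfl, rfl⟩, fun h => ?_⟩
    have := pos_inj (j := j) (by omega) (by omega) (by omega) (by omega) ht h
    omega
  let Z : Set (WV ℓ K q) := {.inl none}
  let P : Set (WV ℓ K q) := {pos j 0}
  let I : Set (WV ℓ K q) := pos i '' Set.Ico 0 (ℓ (i % K) + 1)
  let J : Set (WV ℓ K q) := pos j '' Set.Ico 1 (ℓ j + 1)
  let A : Set (WV ℓ K q) := (fun k => pos k 0) '' Set.Ico (j + 1) i
  let B : Set (WV ℓ K q) := (fun k => pos k 0) '' Set.Ico (i + 1) (j + K)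
  have hZ : CS H Z := cs_singleton _ _
  have hP : CS H P := cs_singleton _ _
  have hI : CS H I := cs_arc (by omega) fun r _ hr => hdown i r (by omega)
  have hJ : CS H J := cs_arc (by omega) fun r _ hr => hdown j r (by rw [hjm]; omega)
  have hA : CS H A := cs_arc (by omega) fun r _ hr => hrim r
  have hB : CS H B := cs_arc (by omega) fun r _ hr => hrim r
  have z0 : ∀ k, (pos k 0 : WV ℓ K q) ≠ .inl none := fun k => pos_ne_hub (Nat.zero_le _)
  have dZP : ∀ w, w ∈ Z → w ∉ P := by rintro w rfl h; exact z0 _ h.symm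
  have dZI : ∀ w, w ∈ Z → w ∉ I := by
    rintro w rfl ⟨r, hr, h⟩; exact pos_ne_hub (by have := hr.2; omega) h
  have dPI : ∀ w, w ∈ P → w ∉ I := by
    rintro w rfl ⟨r, hr, h⟩
    have := pos_inj (j := j) (by omega) (by omega) (by omega) (by omega)
      (by have := hr.2; omega) h
    omega
  have dJA : ∀ w, w ∈ J → w ∉ A := by
    rintro w ⟨r', hr', rfl⟩ ⟨r, hr, h⟩
    simp only [Set.mem_Ico] at hr hr'
    have := pos_inj (j := j) (by omega) (by omega) (by omega) (by omega) (Nat.zero_le _) h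
    omega
  have dJB : ∀ w, w ∈ J → w ∉ B := by
    rintro w ⟨r', hr', rfl⟩ ⟨r, hr, h⟩
    simp only [Set.mem_Ico] at hr hr'
    have := pos_inj (j := j) (by omega) (by omega) (by omega) (by omega) (Nat.zero_le _) h
    omega
  have dAB : ∀ w, w ∈ A → w ∉ B := by
    rintro w ⟨r', hr', rfl⟩ ⟨r, hr, h⟩
    simp only [Set.mem_Ico] at hr hr'
    have := pos_inj (j := j) (by omega) (by omega) (by omega) (by omega) (Nat.zero_le _) h
    omega
  have dZJ : ∀ w, w ∈ Z → w ∉ J := by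
    rintro w rfl ⟨r, hr, h⟩; exact pos_ne_hub (by have := hr.2; rw [hjm]; omega) h
  have dZA : ∀ w, w ∈ Z → w ∉ A := by rintro w rfl ⟨r, hr, h⟩; exact z0 _ h
  have dZB : ∀ w, w ∈ Z → w ∉ B := by rintro w rfl ⟨r, hr, h⟩; exact z0 _ h
  have dPJ : ∀ w, w ∈ P → w ∉ J := by
    rintro w rfl ⟨r, hr, h⟩
    simp only [Set.mem_Ico] at hr
    have := pos_inj (j := j) (by omega) (by omega) (by omega) (by omega) (Nat.zero_le _) h.symm
    omega
  have dPA : ∀ w, w ∈ P → w ∉ A := by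
    rintro w rfl ⟨r, hr, h⟩
    simp only [Set.mem_Ico] at hr
    have := pos_inj (j := j) (by omega) (by omega) (by omega) (by omega) (Nat.zero_le _) h.symm
    omega
  have dPB : ∀ w, w ∈ P → w ∉ B := by
    rintro w rfl ⟨r, hr, h⟩
    simp only [Set.mem_Ico] at hr
    have := pos_inj (j := j) (by omega) (by omega) (by omega) (by omega) (Nat.zero_le _) h.symm
    omega
  have dIJ : ∀ w, w ∈ I → w ∉ J := by
    rintro w ⟨r', hr', rfl⟩ ⟨r, hr, h⟩
    simp only [Set.mem_Ico] at hr hr'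
    have := pos_inj (j := j) (by omega) (by omega) (by omega) (by omega) (by rw [hjm]; omega) h
    omega
  have dIA : ∀ w, w ∈ I → w ∉ A := by
    rintro w ⟨r', hr', rfl⟩ ⟨r, hr, h⟩
    simp only [Set.mem_Ico] at hr hr'
    have := pos_inj (j := j) (by omega) (by omega) (by omega) (by omega) (Nat.zero_le _) h
    omega
  have dIB : ∀ w, w ∈ I → w ∉ B := by
    rintro w ⟨r', hr', rfl⟩ ⟨r, hr, h⟩
    simp only [Set.mem_Ico] at hr hr'
    have := pos_inj (j := j) (by omega) (by omega) (by omega) (by omega) (Nat.zero_le _) h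
    omega
  have mA : ∀ k, j < k → k < i → (pos k 0 : WV ℓ K q) ∈ A := fun k h1 h2 => ⟨k, ⟨h1, h2⟩, rfl⟩
  have mB : ∀ k, i < k → k < j + K → (pos k 0 : WV ℓ K q) ∈ B :=
    fun k h1 h2 => ⟨k, ⟨h1, h2⟩, rfl⟩
  have mI : ∀ r, r ≤ ℓ (i % K) → (pos i r : WV ℓ K q) ∈ I :=
    fun r h => ⟨r, ⟨Nat.zero_le _, by omega⟩, rfl⟩
  have mJ : ∀ r, 1 ≤ r → r ≤ ℓ j → (pos j r : WV ℓ K q) ∈ J :=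
    fun r h h' => ⟨r, ⟨h, by omega⟩, rfl⟩
  have hub : ∀ k r, r = ℓ (k % K) → H.Adj (.inl none) (pos k r) := by
    intro k r hr
    have := hdown k r (by omega)
    rw [pos_hub (t := r + 1) (by omega)] at this
    exact this.symm
  have aZJ : ∃ u ∈ Z, ∃ v ∈ J, H.Adj u v :=
    ⟨_, rfl, pos j (ℓ j), mJ _ (by omega) le_rfl, hub _ _ (by rw [hjm])⟩
  have aZA : ∃ u ∈ Z, ∃ v ∈ A, H.Adj u v :=
    ⟨_, rfl, pos (j + 1) 0, mA _ (by omega) (by omega), hub _ _ (by omega)⟩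
  have aZB : ∃ u ∈ Z, ∃ v ∈ B, H.Adj u v :=
    ⟨_, rfl, pos (j + K - 1) 0, mB _ (by omega) (by omega), hub _ _ (by omega)⟩
  have aPJ : ∃ u ∈ P, ∃ v ∈ J, H.Adj u v :=
    ⟨_, rfl, pos j 1, mJ _ le_rfl (by omega), hdown j 0 (Nat.zero_le _)⟩
  have aPA : ∃ u ∈ P, ∃ v ∈ A, H.Adj u v :=
    ⟨_, rfl, pos (j + 1) 0, mA _ (by omega) (by omega), hrim j⟩
  have aPB : ∃ u ∈ P, ∃ v ∈ B, H.Adj u v := by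
    refine ⟨_, rfl, pos (j + K - 1) 0, mB _ (by omega) (by omega), ?_⟩
    have h1 := hrim (j + K - 1)
    rw [show j + K - 1 + 1 = j + K by omega, ← pos_mod (j + K), Nat.add_mod_right, pos_mod] at h1
    exact h1.symm
  have aIJ : ∃ u ∈ I, ∃ v ∈ J, H.Adj u v := ⟨_, mI t ht, _, mJ s hs hsl, hnew⟩
  have aIA : ∃ u ∈ I, ∃ v ∈ A, H.Adj u v := by
    refine ⟨_, mI 0 (Nat.zero_le _), pos (i - 1) 0, mA _ (by omega) (by omega), ?_⟩
    have h1 := hrim (i - 1)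
    rw [show i - 1 + 1 = i by omega] at h1
    exact h1.symm
  have aIB : ∃ u ∈ I, ∃ v ∈ B, H.Adj u v :=
    ⟨_, mI 0 (Nat.zero_le _), pos (i + 1) 0, mB _ (by omega) (by omega), hrim i⟩
  refine hpl.2 (isMinor_K33 ![Z, P, I] ![J, A, B] ?_ ?_ ?_ ?_ ?_ ?_)
  · intro a; fin_cases a <;> assumption
  · intro a; fin_cases a <;> assumption
  · intro a b hab
    fin_cases a <;> fin_cases b <;> first | exact absurd hab (by decide) | assumption
  · intro a b hab
    fin_cases a <;> fin_cases b <;> first | exact absurd hab (by decide) | assumption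
  · intro a b
    fin_cases a <;> fin_cases b <;> assumption
  · intro a b
    fin_cases a <;> fin_cases b <;> assumption

/-- Addable pairs of two vertices in different columns are pairs of rim vertices, or consist of
a subdividing vertex and the rim vertex of a neighbouring column. -/
lemma wheel_addable_cells (hK : 3 ≤ K)
    (hl : ∀ i < K, ℓ i ≠ 0 → ℓ ((i + 1) % K) = 0 ∧ ℓ ((i + K - 1) % K) = 0) {c c' : Cell ℓ K}
    (hcc : c.1 ≠ c'.1) (hc : c.2.val ≠ 0)
    (h : IsPlanar (wheel ℓ K q ⊔ SimpleGraph.edge (.inl (some c)) (.inl (some c')))) :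
    (.inl (some c') : WV ℓ K q) = pos (c.1 + 1) 0 ∨
      (.inl (some c') : WV ℓ K q) = pos (c.1 + K - 1) 0 := by
  have hi := c.1.2
  have hi' := c'.1.2
  have ht := c.2.2
  have ht' := c'.2.2
  have hl' := hl c.1 hi (by omega)
  have hne : c.1.val ≠ c'.1.val := fun h => hcc (Fin.ext h)
  by_cases h1 : (c.1.val + 1) % K = c'.1.val
  · left; symm
    rw [pos_eq_cell]
    refine ⟨h1, ?_⟩
    rw [h1] at hl'
    omega
  by_cases h2 : (c.1.val + K - 1) % K = c'.1.val
  · right; symm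
    rw [pos_eq_cell]
    refine ⟨h2, ?_⟩
    rw [h2] at hl'
    omega
  exfalso
  rw [succ_mod hi] at h1
  rw [pred_mod hi] at h2
  rw [← pos_cell c, ← pos_cell c'] at h
  have hmain : ∀ i, i % K = c'.1.val → c.1.val + 1 < i → i + 1 < c.1.val + K → False := by
    intro i him hi1 hi2
    have e : ∀ t, (pos c'.1.val t : WV ℓ K q) = pos i t := fun t => by rw [← him, pos_mod]
    rw [e] at h
    exact wheel_not_addable hK hi hi1 hi2 (by omega) (by omega) (by rw [him]; omega) hl'.1 hl'.2 h
  rcases Nat.lt_or_ge c.1.val c'.1.val with hlt | hge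
  · exact hmain c'.1.val (Nat.mod_eq_of_lt hi') (by split_ifs at h1 h2 <;> omega)
      (by split_ifs at h1 h2 <;> omega)
  · exact hmain (c'.1.val + K) (by rw [Nat.add_mod_right, Nat.mod_eq_of_lt hi'])
      (by split_ifs at h1 h2 <;> omega) (by split_ifs at h1 h2 <;> omega)

/-- The upper bound for the number of addable edges of a wheel. Only pairs inside a column and
pairs with an isolated vertex contribute to the main term. -/
lemma wheel_addable_card (hK : 3 ≤ K)
    (hl : ∀ i < K, ℓ i ≠ 0 → ℓ ((i + 1) % K) = 0 ∧ ℓ ((i + K - 1) % K) = 0) {D : ℕ}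
    (hD : ∀ i < K, ℓ i ≤ D) :
    2 * (addableSet (wheel ℓ K q)).ncard ≤ (∑ i : Fin K, (ℓ i + 1)) * (D + 2) +
      2 * (q * Fintype.card (WV ℓ K q) + Fintype.card (WV ℓ K q) + K * K +
        2 * ∑ i : Fin K, (ℓ i + 1)) := by
  let A₁ : Finset (Sym2 (WV ℓ K q)) := Finset.univ.biUnion fun i : Fin K =>
    (Finset.univ : Finset (Sym2 (Fin (ℓ i + 1)))).image
      (Sym2.map fun t => (.inl (some ⟨i, t⟩) : WV ℓ K q))
  let A₂ : Finset (Sym2 (WV ℓ K q)) :=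
    (Finset.univ : Finset (Fin q × WV ℓ K q)).image fun p => s(.inr p.1, p.2)
  let A₃ : Finset (Sym2 (WV ℓ K q)) :=
    (Finset.univ : Finset (WV ℓ K q)).image fun v => s(.inl none, v)
  let A₄ : Finset (Sym2 (WV ℓ K q)) :=
    (Finset.univ : Finset (Fin K × Fin K)).image fun p => s(pos p.1 0, pos p.2 0)
  let A₅ : Finset (Sym2 (WV ℓ K q)) :=
    (Finset.univ : Finset (Cell ℓ K × Bool)).image fun p =>
      s(.inl (some p.1), bif p.2 then pos (p.1.1 + 1) 0 else pos (p.1.1 + K - 1) 0)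
  have hsub : addableSet (wheel ℓ K q) ⊆ ((A₁ ∪ (A₂ ∪ (A₃ ∪ (A₄ ∪ A₅))) : Finset _) : Set _) := by
    have key : ∀ u v : WV ℓ K q, IsPlanar (wheel ℓ K q ⊔ SimpleGraph.edge u v) →
        s(u, v) ∈ A₁ ∪ (A₂ ∪ (A₃ ∪ (A₄ ∪ A₅))) := by
      have in2 : ∀ e, e ∈ A₂ → e ∈ A₁ ∪ (A₂ ∪ (A₃ ∪ (A₄ ∪ A₅))) := fun e h =>
        Finset.mem_union_right _ (Finset.mem_union_left _ h)
      have in3 : ∀ e, e ∈ A₃ → e ∈ A₁ ∪ (A₂ ∪ (A₃ ∪ (A₄ ∪ A₅))) := fun e h =>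
        Finset.mem_union_right _ (Finset.mem_union_right _ (Finset.mem_union_left _ h))
      have in4 : ∀ e, e ∈ A₄ → e ∈ A₁ ∪ (A₂ ∪ (A₃ ∪ (A₄ ∪ A₅))) := fun e h =>
        Finset.mem_union_right _ (Finset.mem_union_right _ (Finset.mem_union_right _
          (Finset.mem_union_left _ h)))
      have in5 : ∀ e, e ∈ A₅ → e ∈ A₁ ∪ (A₂ ∪ (A₃ ∪ (A₄ ∪ A₅))) := fun e h =>
        Finset.mem_union_right _ (Finset.mem_union_right _ (Finset.mem_union_right _
          (Finset.mem_union_right _ h)))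
      have off : ∀ c c' : Cell ℓ K, c.1 ≠ c'.1 → c.2.val ≠ 0 →
          IsPlanar (wheel ℓ K q ⊔ SimpleGraph.edge (.inl (some c)) (.inl (some c'))) →
          s((.inl (some c) : WV ℓ K q), .inl (some c')) ∈ A₅ := by
        intro c c' h1 h2 h3
        refine Finset.mem_image.2 ?_
        rcases wheel_addable_cells hK hl h1 h2 h3 with h | h
        · exact ⟨(c, true), Finset.mem_univ _, by rw [h]; rfl⟩
        · exact ⟨(c, false), Finset.mem_univ _, by rw [h]; rfl⟩
      intro u v h
      rcases u with (_ | c) | a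
      · exact in3 _ (Finset.mem_image.2 ⟨v, Finset.mem_univ _, rfl⟩)
      swap
      · exact in2 _ (Finset.mem_image.2 ⟨(a, v), Finset.mem_univ _, rfl⟩)
      rcases v with (_ | c') | a
      · exact in3 _ (Finset.mem_image.2 ⟨_, Finset.mem_univ _, Sym2.eq_swap⟩)
      swap
      · exact in2 _ (Finset.mem_image.2 ⟨(a, _), Finset.mem_univ _, Sym2.eq_swap⟩)
      by_cases h1 : c.1 = c'.1
      · refine Finset.mem_union_left _ (Finset.mem_biUnion.2 ⟨c.1, Finset.mem_univ _, ?_⟩)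
        obtain ⟨i, t⟩ := c
        obtain ⟨i', t'⟩ := c'
        obtain rfl : i = i' := h1
        exact Finset.mem_image.2 ⟨s(t, t'), Finset.mem_univ _, rfl⟩
      by_cases h2 : c.2.val = 0
      · by_cases h3 : c'.2.val = 0
        · refine in4 _ (Finset.mem_image.2 ⟨(c.1, c'.1), Finset.mem_univ _, ?_⟩)
          rw [← pos_cell c, ← pos_cell c', h2, h3]
        · rw [Sym2.eq_swap]
          refine in5 _ (off c' c (Ne.symm h1) h3 ?_)
          rwa [SimpleGraph.edge_comm]
      · exact in5 _ (off c c' h1 h2 h)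
    intro e
    induction e using Sym2.ind with
    | _ u v => exact fun h => Finset.mem_coe.2 (key u v h.2.2)
  have hN : Fintype.card (Cell ℓ K) = ∑ i : Fin K, (ℓ i + 1) := by simp
  have hA₁ : 2 * A₁.card ≤ (∑ i : Fin K, (ℓ i + 1)) * (D + 2) := by
    have h1 : A₁.card ≤ ∑ i : Fin K, (ℓ i + 2).choose 2 := by
      refine Finset.card_biUnion_le.trans (Finset.sum_le_sum fun i _ => ?_)
      refine Finset.card_image_le.trans ?_
      rw [Finset.card_univ, Sym2.card, Fintype.card_fin]
    refine (Nat.mul_le_mul_left 2 h1).trans ?_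
    rw [Finset.mul_sum, Finset.sum_mul]
    refine Finset.sum_le_sum fun i _ => ?_
    have h3 := hD i i.2
    have h4 : 2 * (ℓ i + 2).choose 2 = (ℓ i + 1) * (ℓ i + 2) := by
      rw [Nat.choose_two_right, mul_comm 2, Nat.div_mul_cancel]
      · simp only [Nat.add_succ_sub_one]; ring
      · exact (Nat.even_mul_pred_self _).two_dvd
    rw [h4]
    exact Nat.mul_le_mul_left _ (by omega)
  have hA₂ : A₂.card ≤ q * Fintype.card (WV ℓ K q) :=
    Finset.card_image_le.trans (by rw [Finset.card_univ, Fintype.card_prod, Fintype.card_fin])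
  have hA₃ : A₃.card ≤ Fintype.card (WV ℓ K q) :=
    Finset.card_image_le.trans (by rw [Finset.card_univ])
  have hA₄ : A₄.card ≤ K * K :=
    Finset.card_image_le.trans (by rw [Finset.card_univ, Fintype.card_prod, Fintype.card_fin])
  have hA₅ : A₅.card ≤ 2 * ∑ i : Fin K, (ℓ i + 1) :=
    Finset.card_image_le.trans (by
      rw [Finset.card_univ, Fintype.card_prod, hN, Fintype.card_bool, mul_comm])
  have h0 := Set.ncard_le_ncard hsub (Finset.finite_toSet _)
  rw [Set.ncard_coe_finset] at h0
  have u1 := Finset.card_union_le A₁ (A₂ ∪ (A₃ ∪ (A₄ ∪ A₅)))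
  have u2 := Finset.card_union_le A₂ (A₃ ∪ (A₄ ∪ A₅))
  have u3 := Finset.card_union_le A₃ (A₄ ∪ A₅)
  have u4 := Finset.card_union_le A₄ A₅
  omega

end WheelAdd

end PlanarAdd

namespace PlanarAdd

open scoped Classical
open Finset

/-! ### The wheel on the vertex set `Fin n` -/

section Upper

lemma IsMinor.comap_equiv {α V W : Type} {H : SimpleGraph α} {G : SimpleGraph V} (e : W ≃ V)
    (h : IsMinor H G) : IsMinor H (G.comap e) := by
  obtain ⟨f, h1, h2, h3⟩ := h
  refine ⟨fun a => e ⁻¹' f a, fun a => ?_, fun a b hab => (h2 a b hab).preimage _,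
    fun a b hab => ?_⟩
  · let i : (G.comap e).induce (e ⁻¹' f a) ≃g G.induce (f a) :=
      ⟨e.subtypeEquiv fun x => Iff.rfl, Iff.rfl⟩
    exact i.connected_iff.2 (h1 a)
  · obtain ⟨u, hu, v, hv, huv⟩ := h3 a b hab
    exact ⟨e.symm u, by simpa using hu, e.symm v, by simpa using hv, by simpa using huv⟩

lemma comap_equiv_comap_symm {V W : Type} (G : SimpleGraph V) (e : W ≃ V) :
    (G.comap e).comap e.symm = G := by ext u v; simp

lemma IsPlanar.comap_equiv {V W : Type} {G : SimpleGraph V} (e : W ≃ V) :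
    IsPlanar (G.comap e) ↔ IsPlanar G := by
  refine ⟨fun h => ⟨fun h' => h.1 (IsMinor.comap_equiv e h'),
    fun h' => h.2 (IsMinor.comap_equiv e h')⟩, fun h => ⟨fun h' => h.1 ?_, fun h' => h.2 ?_⟩⟩
  · simpa only [comap_equiv_comap_symm] using IsMinor.comap_equiv e.symm h'
  · simpa only [comap_equiv_comap_symm] using IsMinor.comap_equiv e.symm h'

lemma edgeSet_comap_equiv {V W : Type} (G : SimpleGraph V) (e : W ≃ V) :
    (G.comap e).edgeSet = Sym2.map e ⁻¹' G.edgeSet := by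
  ext x
  induction x using Sym2.ind with
  | _ u v => rfl

lemma sym2_map_bijective {V W : Type} (e : W ≃ V) : Function.Bijective (Sym2.map e) :=
  ⟨Sym2.map.injective e.injective, fun x => by
    induction x using Sym2.ind with
    | _ u v => exact ⟨s(e.symm u, e.symm v), by simp⟩⟩

lemma addableSet_comap_equiv {V W : Type} (G : SimpleGraph V) (e : W ≃ V) :
    addableSet (G.comap e) = Sym2.map e ⁻¹' addableSet G := by
  ext x
  induction x using Sym2.ind with
  | _ u v =>
    have h : G.comap e ⊔ SimpleGraph.fromEdgeSet {s(u, v)} =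
        (G ⊔ SimpleGraph.fromEdgeSet {s(e u, e v)}).comap e := by
      ext a b
      simp [SimpleGraph.comap_adj]
    change (_ ∧ _ ∧ _) ↔ (_ ∧ _ ∧ _)
    rw [h, IsPlanar.comap_equiv]
    simp

lemma ncard_preimage_bij {α β : Type} {f : α → β} (hf : Function.Bijective f) (s : Set β) :
    (f ⁻¹' s).ncard = s.ncard :=
  Set.ncard_preimage_of_injective_subset_range hf.1 fun x _ => hf.2 x

/-- Lengths of the spokes: the `M` subdividing vertices are distributed evenly among the `a`
spokes of even index. -/
def spoke (a M i : ℕ) : ℕ := if i % 2 = 0 then M / a + (if i / 2 < M % a then 1 else 0) else 0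

lemma sum_spoke {a : ℕ} (ha : 0 < a) (M : ℕ) :
    ∑ i : Fin (2 * a), (spoke a M i + 1) = M + 2 * a := by
  have h0 : ∀ b, ∑ i ∈ Finset.range (2 * b), (spoke a M i + 1) =
      b * (M / a) + min b (M % a) + 2 * b := by
    intro b
    induction b with
    | zero => simp
    | succ b ih =>
      rw [show 2 * (b + 1) = 2 * b + 1 + 1 by ring, Finset.sum_range_succ, Finset.sum_range_succ,
        ih]
      have e1 : spoke a M (2 * b) = M / a + (if b < M % a then 1 else 0) := by
        simp [spoke]
      have e2 : spoke a M (2 * b + 1) = 0 := by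
        simp [spoke, Nat.add_mod]
      rw [e1, e2, add_mul, one_mul]
      split_ifs <;> omega
  have h1 := h0 a
  rw [Finset.sum_range] at h1
  rw [h1, min_eq_right (Nat.mod_lt _ ha).le]
  have := Nat.div_add_mod M a
  omega

/-- The upper bound for the minimum number of addable edges, from a wheel with `2 * a` spokes and
`n + 2 * a - m - 1` isolated vertices, which has `n` vertices and `m` edges. -/
lemma addMin_upper {n m a : ℕ} (ha : 2 ≤ a) (h1 : m + 1 ≤ n + 2 * a) (h2 : 4 * a ≤ m) :
    2 * addMin n m ≤ (m - 2 * a) * ((m - 4 * a) / a + 3) +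
      2 * ((n + 2 * a - m - 1) * n + n + 4 * a * a + 2 * (m - 2 * a)) := by
  haveI : NeZero (2 * a) := ⟨by omega⟩
  set M := m - 4 * a with hM
  set q := n + 2 * a - m - 1 with hq
  have hs : ∑ i : Fin (2 * a), (spoke a M i + 1) = m - 2 * a := by
    rw [sum_spoke (by omega)]; omega
  have hcard : Fintype.card (WV (spoke a M) (2 * a) q) = n := by
    have : Fintype.card (WV (spoke a M) (2 * a) q) =
        (∑ i : Fin (2 * a), (spoke a M i + 1)) + 1 + q := by simp
    rw [this, hs]; omega
  have hK : 3 ≤ 2 * a := by omega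
  let e : Fin n ≃ WV (spoke a M) (2 * a) q := (Fintype.equivFinOfCardEq hcard).symm
  have hodd : ∀ i, i % 2 ≠ 0 → spoke a M i = 0 := fun i hi => by rw [spoke, if_neg hi]
  have heven : ∀ i, spoke a M i ≠ 0 → i % 2 = 0 := fun i hi => by
    by_contra h; exact hi (hodd i h)
  have hub := wheel_addable_card (ℓ := spoke a M) (K := 2 * a) (q := q) hK
    (by
      intro i hi h
      have h' := heven i h
      constructor <;> refine hodd _ ?_ <;> rw [Nat.mod_mul_right_mod] <;> omega)
    (D := M / a + 1) (by
      intro i _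
      unfold spoke
      generalize M / a = x
      split_ifs <;> omega)
  have hmem : (wheel (spoke a M) (2 * a) q).comap e ∈ planarSet n m := by
    refine ⟨(IsPlanar.comap_equiv e).2 (wheel_hasDual hK).isPlanar, ?_⟩
    rw [edgeCount, edgeSet_comap_equiv, ncard_preimage_bij (sym2_map_bijective e),
      wheel_edge_card hK, hs]
    omega
  have hle : addMin n m ≤ (addableSet (wheel (spoke a M) (2 * a) q)).ncard := by
    refine (Nat.sInf_le (Set.mem_image_of_mem _ hmem)).trans ?_
    rw [addableSet_comap_equiv, ncard_preimage_bij (sym2_map_bijective e)]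
  rw [hs, hcard] at hub
  calc 2 * addMin n m ≤ _ := Nat.mul_le_mul_left 2 hle
    _ ≤ _ := hub
    _ ≤ (m - 2 * a) * (M / a + 3) + 2 * (q * n + n + 4 * a * a + 2 * (m - 2 * a)) := by
      refine le_of_eq ?_
      ring

end Upper

end PlanarAdd

namespace PlanarAdd

open scoped Classical
open Finset

/-! ### Asymptotics -/

section Limit

/-- Both cases of the theorem at once, with `mu = max lam 1`: the wheel with about `mu * √n` spokes
gives the limit in the form `hL1`, the lower bound with `t = 1 / mu` gives it in the form `hL2`. -/
lemma addMin_tendsto (lam : ℝ) (m : ℕ → ℕ)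
    (hm : (fun n : ℕ => (m n : ℝ) - n - lam * Real.sqrt n) =o[atTop]
      fun n : ℕ => Real.sqrt n)
    (hne : ∀ᶠ n : ℕ in atTop, (planarSet n (m n)).Nonempty) {mu L : ℝ} (hmu : mu = max lam 1)
    (hL1 : 1 / mu + mu - lam = L) (hL2 : 2 * (1 / mu) - (1 / mu) ^ 2 * lam = L) :
    Tendsto (fun n : ℕ => (addMin n (m n) : ℝ) / (n : ℝ) ^ ((3 : ℝ) / 2)) atTop (nhds L) := by
  have hmu1 : 1 ≤ mu := hmu ▸ le_max_right _ _
  -- The rescaled quantities `d = (m - n) / √n`, `z = 1 / √n`, `x = m / n`, `y = 2 a / √n`.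
  let d : ℕ → ℝ := fun n => ((m n : ℝ) - n) / Real.sqrt n
  let z : ℕ → ℝ := fun n => 1 / Real.sqrt n
  let x : ℕ → ℝ := fun n => (m n : ℝ) / n
  let a : ℕ → ℕ := fun n => ⌈max (d n) 1 * Real.sqrt n / 2⌉₊ + 2
  let y : ℕ → ℝ := fun n => 2 * (a n : ℝ) / Real.sqrt n
  have hspos : ∀ᶠ n : ℕ in atTop, 0 < Real.sqrt n := by
    filter_upwards [eventually_gt_atTop 0] with n hn
    exact Real.sqrt_pos.2 (by exact_mod_cast hn)
  have hs_top : Tendsto (fun n : ℕ => Real.sqrt n) atTop atTop :=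
    Real.tendsto_sqrt_atTop.comp tendsto_natCast_atTop_atTop
  have hz : Tendsto z atTop (nhds 0) := by
    simp only [z, one_div]
    exact hs_top.inv_tendsto_atTop
  have hd : Tendsto d atTop (nhds lam) := by
    have h1 := hm.tendsto_div_nhds_zero
    have h2 := h1.add_const lam
    rw [zero_add] at h2
    refine h2.congr' ?_
    filter_upwards [hspos] with n hn
    simp only [d]
    field_simp
    ring
  have hx : Tendsto x atTop (nhds 1) := by
    have h1 : Tendsto (fun n => 1 + d n * z n) atTop (nhds (1 + lam * 0)) :=
      (hd.mul hz).const_add 1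
    rw [mul_zero, add_zero] at h1
    refine h1.congr' ?_
    filter_upwards [hspos] with n hn
    have h2 : Real.sqrt n * Real.sqrt n = n := Real.mul_self_sqrt (Nat.cast_nonneg n)
    have h3 : (n : ℝ) ≠ 0 := by rw [← h2]; positivity
    simp only [d, z, x]
    rw [div_mul_div_comm, h2]
    field_simp
    ring
  have hdm : Tendsto (fun n => max (d n) 1) atTop (nhds mu) := by
    rw [hmu]; exact hd.max tendsto_const_nhds
  have hy : Tendsto y atTop (nhds mu) := by
    refine tendsto_of_tendsto_of_tendsto_of_le_of_le' (h := fun n => max (d n) 1 + 6 * z n) hdm ?_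
      ?_ ?_
    · simpa using hdm.add (hz.const_mul 6)
    · filter_upwards [hspos] with n hn
      have := Nat.le_ceil (max (d n) 1 * Real.sqrt n / 2)
      rw [le_div_iff₀ hn]
      simp only [a]; push_cast
      linarith
    · filter_upwards [hspos] with n hn
      have := Nat.ceil_lt_add_one (a := max (d n) 1 * Real.sqrt n / 2) (by positivity)
      have hzs : z n * Real.sqrt n = 1 := by simp only [z]; field_simp
      rw [div_le_iff₀ hn, add_mul, mul_assoc 6, hzs]
      simp only [a]; push_cast
      linarith
  have h32 : ∀ n : ℕ, (n : ℝ) ^ ((3 : ℝ) / 2) = n * Real.sqrt n := by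
    intro n
    rw [Real.sqrt_eq_rpow, show (3 : ℝ) / 2 = 1 + 1 / 2 by norm_num]
    rcases Nat.eq_zero_or_pos n with rfl | hn
    · norm_num
    · rw [Real.rpow_add (by exact_mod_cast hn), Real.rpow_one]
  simp only [h32]
  set t : ℝ := 1 / mu with ht
  have ht0 : 0 ≤ t := by positivity
  have ht1 : t ≤ 1 := by rw [ht, div_le_one (by linarith)]; exact hmu1
  set C : ℝ := 2 * |L| + 2 with hC
  set C' : ℝ := C ^ 2 + 2 * t * C + 3 * t ^ 2 + 1 with hC'
  refine tendsto_of_tendsto_of_tendsto_of_le_of_le'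
    (g := fun n => min (C / 2) (2 * t - t ^ 2 * d n - C' * z n) - x n * z n)
    (h := fun n => x n ^ 2 / y n + 3 / 2 * (x n * z n) + (y n - d n) + z n + y n ^ 2 * z n +
      2 * (x n * z n)) ?_ ?_ ?_ ?_
  · have h1 : Tendsto (fun n => min (C / 2) (2 * t - t ^ 2 * d n - C' * z n) - x n * z n) atTop
        (nhds (min (C / 2) (2 * t - t ^ 2 * lam - C' * 0) - 1 * 0)) :=
      (tendsto_const_nhds.min (((tendsto_const_nhds (x := 2 * t)).sub (hd.const_mul _)).sub
        (hz.const_mul _))).sub (hx.mul hz)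
    have h2 : min (C / 2) (2 * t - t ^ 2 * lam - C' * 0) - 1 * 0 = L := by
      rw [mul_zero, sub_zero, hL2, mul_zero, sub_zero, min_eq_right]
      have := le_abs_self L
      linarith
    rwa [h2] at h1
  · have h1 : Tendsto (fun n => x n ^ 2 / y n + 3 / 2 * (x n * z n) + (y n - d n) + z n +
        y n ^ 2 * z n + 2 * (x n * z n)) atTop
        (nhds (1 ^ 2 / mu + 3 / 2 * (1 * 0) + (mu - lam) + 0 + mu ^ 2 * 0 + 2 * (1 * 0))) :=
      ((((((hx.pow 2).div hy (by positivity)).add ((hx.mul hz).const_mul _)).add (hy.sub hd)).add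
        hz).add ((hy.pow 2).mul hz)).add ((hx.mul hz).const_mul _)
    have h2 : 1 ^ 2 / mu + 3 / 2 * (1 * 0) + (mu - lam) + 0 + mu ^ 2 * 0 + 2 * (1 * 0) = L := by
      rw [← hL1]; ring
    rwa [h2] at h1
  · filter_upwards [hspos, hne, eventually_ge_atTop 4] with n hn hn' hn4
    obtain ⟨G, hG, hGe⟩ := Nat.sInf_mem (hn'.image fun G => (addableSet G).ncard)
    have hGe' : (addableSet G).ncard = addMin n (m n) := hGe
    have hlow := addable_lower hn4 hG ht0 ht1 (show 0 ≤ C by positivity)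
    rw [hGe'] at hlow
    have h2 : Real.sqrt n * Real.sqrt n = n := Real.mul_self_sqrt (Nat.cast_nonneg n)
    have hnpos : (0 : ℝ) < n := by rw [← h2]; positivity
    have hns : 0 < (n : ℝ) * Real.sqrt n := by positivity
    have e1 : x n * z n * (n * Real.sqrt n) = m n := by
      simp only [x, z]; field_simp
    have e2 : d n * (n * Real.sqrt n) = n * (m n - n) := by
      simp only [d]; field_simp
    have e3 : z n * (n * Real.sqrt n) = n := by
      simp only [z]; field_simp
    rw [le_div_iff₀ hns, sub_mul, e1, sub_le_iff_le_add]
    rcases hlow with h | h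
    · exact (mul_le_mul_of_nonneg_right (min_le_left _ _) hns.le).trans h
    · refine (mul_le_mul_of_nonneg_right (min_le_right _ _) hns.le).trans (le_trans (le_of_eq ?_) h)
      rw [sub_mul, sub_mul, mul_assoc (t ^ 2), e2, mul_assoc C', e3, hC']
      ring
  · have hbig : ∀ᶠ n in atTop, 2 * (y n * z n) < x n := by
      have h1 := ((hy.mul hz).const_mul 2)
      rw [mul_zero, mul_zero] at h1
      exact h1.eventually_lt hx one_pos
    filter_upwards [hspos, hbig] with n hn hb
    have h2 : Real.sqrt n * Real.sqrt n = n := Real.mul_self_sqrt (Nat.cast_nonneg n)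
    have hnpos : (0 : ℝ) < n := by rw [← h2]; positivity
    have hns : 0 < (n : ℝ) * Real.sqrt n := by positivity
    have ha2 : 2 ≤ a n := Nat.le_add_left _ _
    have hapos : (0 : ℝ) < a n := by exact_mod_cast (by omega : 0 < a n)
    have e0 : y n * z n * n = 2 * a n := by
      simp only [y, z]
      rw [div_mul_div_comm, h2]
      field_simp
    have ex : x n * n = m n := by simp only [x]; field_simp
    have hA : 4 * a n ≤ m n := by
      have := mul_lt_mul_of_pos_right hb hnpos
      rw [mul_assoc, e0, ex] at this
      have : (4 * a n : ℝ) < m n := by linarith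
      exact_mod_cast this.le
    have hB : m n + 1 ≤ n + 2 * a n := by
      have h3 := Nat.le_ceil (max (d n) 1 * Real.sqrt n / 2)
      have h4 : d n * Real.sqrt n ≤ max (d n) 1 * Real.sqrt n :=
        mul_le_mul_of_nonneg_right (le_max_left _ _) hn.le
      have h5 : d n * Real.sqrt n = m n - n := by simp only [d]; field_simp
      have h6 : (m n : ℝ) + 1 ≤ n + 2 * (a n : ℝ) := by
        simp only [a]; push_cast; linarith
      exact_mod_cast h6
    have hup := addMin_upper ha2 hB hA
    have hup' : (2 * addMin n (m n) : ℝ) ≤ m n * (m n / a n + 3) +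
        2 * ((n + 2 * a n - m n) * n + n + 4 * a n * a n + 2 * m n) := by
      have h7 : ((m n - 4 * a n) / a n : ℕ) ≤ (m n : ℝ) / a n :=
        Nat.cast_div_le.trans (by gcongr; exact Nat.sub_le _ _)
      have h8 : ((m n - 2 * a n : ℕ) : ℝ) ≤ m n := by exact_mod_cast Nat.sub_le _ _
      have h9 : ((n + 2 * a n - m n - 1 : ℕ) : ℝ) ≤ n + 2 * a n - m n := by
        have : n + 2 * a n - m n - 1 + m n ≤ n + 2 * a n := by omega
        have : ((n + 2 * a n - m n - 1 : ℕ) : ℝ) + m n ≤ n + 2 * a n := by exact_mod_cast this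
        linarith
      calc (2 * addMin n (m n) : ℝ) ≤ ((m n - 2 * a n : ℕ) : ℝ) *
            (((m n - 4 * a n) / a n : ℕ) + 3) + 2 * (((n + 2 * a n - m n - 1 : ℕ) : ℝ) * n + n +
            4 * a n * a n + 2 * ((m n - 2 * a n : ℕ) : ℝ)) := by exact_mod_cast hup
        _ ≤ _ := by gcongr
    have e1 : x n ^ 2 / y n * (n * Real.sqrt n) = m n * (m n / a n) / 2 := by
      simp only [x, y]
      field_simp
      rw [sq (Real.sqrt n), h2]
    have e2 : x n * z n * (n * Real.sqrt n) = m n := by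
      simp only [x, z]; field_simp
    have e3 : (y n - d n) * (n * Real.sqrt n) = (n + 2 * a n - m n) * n := by
      simp only [y, d]; field_simp; ring
    have e4 : z n * (n * Real.sqrt n) = n := by
      simp only [z]; field_simp
    have e5 : y n ^ 2 * z n * (n * Real.sqrt n) = 4 * a n * a n := by
      simp only [y, z]
      field_simp
      rw [sq (Real.sqrt n), h2]
      ring
    rw [div_le_iff₀ hns]
    simp only [add_mul, mul_assoc (3 / 2 : ℝ), mul_assoc (2 : ℝ) (x n * z n)]
    rw [e1, e2, e3, e4, e5]
    linarith

end Limit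

end PlanarAdd

theorem addMin_asymptotics_near_n (lam : ℝ) (m : ℕ → ℕ)
    (hm : (fun n : ℕ => (m n : ℝ) - n - lam * Real.sqrt n) =o[atTop]
      fun n : ℕ => Real.sqrt n)
    (hne : ∀ᶠ n : ℕ in atTop, (planarSet n (m n)).Nonempty) :
    (lam ≤ 1 →
      Tendsto (fun n : ℕ => (addMin n (m n) : ℝ) / (n : ℝ) ^ ((3 : ℝ) / 2)) atTop
        (nhds (2 - lam))) ∧
    (1 ≤ lam →
      Tendsto (fun n : ℕ => (addMin n (m n) : ℝ) / (n : ℝ) ^ ((3 : ℝ) / 2)) atTop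
        (nhds (1 / lam))) := by
  constructor
  · intro h
    exact PlanarAdd.addMin_tendsto lam m hm hne (max_eq_right h).symm (by ring) (by ring)
  · intro h
    have h0 : lam ≠ 0 := by positivity
    refine PlanarAdd.addMin_tendsto lam m hm hne (max_eq_left h).symm (by ring) ?_
    field_simp
    ring
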